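/- arXiv:1903.07529 — 3 statements merged into one kernel-verified Lean document; each statement's English description precedes it below -/
import Mathlib

section
/- Let α and β be countable ordinals with 2 ≤ α < β, and let n and m be any positive integers. Then there exists a unimodal, locally eventually onto map g : [0,1] → [0,1] with critical point c such that ω(c) ≃ ω^{α+1}·n + 1 and 𝓘 ≃ ω^{β+1}·m + 1. -/
/-!
The map `g` is a tent map whose critical orbit is steered by symbolic dynamics.

**Symbolic part.** Fix closed sets `C`, `D` of `0`-`1` sequences whose Cantor–Bendixson
derivatives of orders `α` and `β` are the single zero sequence (`exists_closed_cb_eq`). A sequence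
`z` is written into a two-sided `k`-periodic background by erasing the symbol at a site `0` and at
sparse sites to its right that code the nonzero prefixes of `z`. Together with their limits (the
background with one symbol erased, and the background itself) the shifts of these words form a
closed subshift. With `z ∈ C`, the derivative of order `α + 1` of this subshift is exactly the
periodic orbit, which has `k` points. The system `sysX m n D C` consists of the subshift of period
`n` written with `C`, the mirror image of the one of period `m` written with `D`, and two orbits
connecting the two periodic orbits in both directions. As `α < β`, the mirrored part decides the
top derivative, of order `β + 1`, which has `m` points (`ncard_cb_sysX`). On right half-lines,
however, a mirrored word is seen only through finitely many of its marks, so the mirrored part has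
small rank there and the derivative of order `α + 1` of the set of right halves has `n` points
(`ncard_cb_pull_sysX`); this is where `2 ≤ α` enters. The Mazurkiewicz–Sierpiński classification
(`homeoOrd_of_cb`) turns both counts into homeomorphisms with ordinals.

**Realization.** The system is chain transitive, hence its right halves are exactly the limits of
the shifts of one sequence `K` (`exists_kneading`), and runs of `false` in `K` are bounded.
By the intermediate value theorem there is a slope `s ∈ [1.9, 2]` for which the second image of the
critical point has itinerary `Lᴺ K` with `N` large (`exists_slope`). Since `Lᴺ` is a longer run
than any in the shifts of `K`, the map sending an itinerary to a point is injective on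
sequences with short runs and conjugates the shift with `g` (`exists_model`). Therefore `ω(c)` is a
copy of the right halves of the system (`omegaLimitSet_eq`), and an inverse orbit inside `ω(c)` is
the same thing as a two-sided element of the system, so the set of inhomogeneities is a copy of the
system itself (`homeoOrd_inhom`).
-/

open Set Filter

noncomputable section

/-- The unit interval `[0,1]` as a subtype of `ℝ`. -/
abbrev unitI : Type := Set.Icc (0 : ℝ) 1

/-- `f : [0,1] → [0,1]` is unimodal with critical point `c`: continuous, `c ∈ (0,1)`,
strictly increasing on `[0,c]` and strictly decreasing on `[c,1]`. -/
def Unimodal (f : unitI → unitI) (c : unitI) : Prop :=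
  Continuous f ∧ 0 < (c : ℝ) ∧ (c : ℝ) < 1 ∧
    StrictMonoOn f {x : unitI | x ≤ c} ∧ StrictAntiOn f {x : unitI | c ≤ x}

/-- `f` is locally eventually onto: for every `ε > 0` and every `x`, some iterate of `f`
maps the `ε`-ball about `x` (in `[0,1]`) onto all of `[0,1]`. -/
def LEO (f : unitI → unitI) : Prop :=
  ∀ ε : ℝ, 0 < ε → ∀ x : unitI, ∃ N : ℕ, f^[N] '' Metric.ball x ε = Set.univ

/-- The omega-limit set of `c` under `f`: `⋂ₙ closure {fᵐ(c) : m ≥ n}`. -/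
def omegaLimitSet (f : unitI → unitI) (c : unitI) : Set unitI :=
  ⋂ n : ℕ, closure {y : unitI | ∃ m : ℕ, n ≤ m ∧ f^[m] c = y}

/-- The inverse limit of `f`, as a subset of the product `ℕ → [0,1]`
(the subspace topology coincides with the topology induced by the usual metric). -/
def InvLim (f : unitI → unitI) : Set (ℕ → unitI) :=
  {x | ∀ i : ℕ, f (x (i + 1)) = x i}

/-- The set of inhomogeneities: points of the inverse limit all of whose
coordinates lie in the postcritical omega-limit set. -/
def Inhom (f : unitI → unitI) (c : unitI) : Set (InvLim f) :=
  {x | ∀ n : ℕ, (x : ℕ → unitI) n ∈ omegaLimitSet f c}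

/-- The ordinal space `{ξ : ξ ≤ o}` with its order topology. -/
def OrdSpace (o : Ordinal) : Type _ := Set.Iic o

instance (o : Ordinal) : LinearOrder (OrdSpace o) :=
  inferInstanceAs (LinearOrder (Set.Iic o))

instance (o : Ordinal) : TopologicalSpace (OrdSpace o) := Preorder.topology (OrdSpace o)

instance (o : Ordinal) : OrderTopology (OrdSpace o) := ⟨rfl⟩

/-- `X ≃ ω^γ·k + 1` in the sense of the paper: `X` is homeomorphic to the
ordinal space `{ξ : ξ ≤ o}` with its order topology. -/
def HomeoOrd (X : Type*) [TopologicalSpace X] (o : Ordinal) : Prop :=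
  Nonempty (X ≃ₜ OrdSpace o)

/-! ### Iterated Cantor–Bendixson derivatives -/

section CantorBendixson

open Topology

universe u

/-- The `δ`-th Cantor–Bendixson derivative of a set `A` (with derivatives taken in the ambient
space, which for closed `A` is the usual notion). All stages are treated at once: a point of `A`
survives to stage `δ` iff it is an accumulation point of every earlier stage. -/
def cb {E : Type*} [TopologicalSpace E] (A : Set E) (δ : Ordinal.{u}) : Set E :=
  A ∩ ⋂ ε : Set.Iio δ, derivedSet (cb A ε.1)
termination_by δ
decreasing_by exact ε.2

variable {E F : Type*} [TopologicalSpace E] [TopologicalSpace F]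

lemma mem_cb {A : Set E} {δ : Ordinal.{u}} {x : E} :
    x ∈ cb A δ ↔ x ∈ A ∧ ∀ ε < δ, x ∈ derivedSet (cb A ε) := by
  rw [cb]
  simp [mem_iInter]

lemma cb_subset (A : Set E) (δ : Ordinal.{u}) : cb A δ ⊆ A := fun _ hx => (mem_cb.1 hx).1

lemma cb_zero (A : Set E) : cb A (0 : Ordinal.{u}) = A := by
  ext x
  simp [mem_cb]

lemma cb_anti (A : Set E) {δ δ' : Ordinal.{u}} (h : δ ≤ δ') : cb A δ' ⊆ cb A δ := by
  intro x hx
  rw [mem_cb] at hx ⊢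
  exact ⟨hx.1, fun ε hε => hx.2 ε (hε.trans_le h)⟩

lemma cb_mono {A B : Set E} (h : A ⊆ B) (δ : Ordinal.{u}) : cb A δ ⊆ cb B δ := by
  induction δ using WellFoundedLT.induction with
  | _ δ ih =>
    intro x hx
    rw [mem_cb] at hx ⊢
    exact ⟨h hx.1, fun ε hε => derivedSet_mono _ _ (ih ε hε) (hx.2 ε hε)⟩

lemma cb_add_one_subset (A : Set E) (δ : Ordinal.{u}) : cb A (δ + 1) ⊆ derivedSet (cb A δ) :=
  fun _ hx => (mem_cb.1 hx).2 δ (Order.lt_add_one_iff.2 le_rfl)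

lemma mem_cb_add_one {A : Set E} {δ : Ordinal.{u}} {x : E} (hA : x ∈ A)
    (hx : x ∈ derivedSet (cb A δ)) : x ∈ cb A (δ + 1) := by
  rw [mem_cb]
  exact ⟨hA, fun ε hε => derivedSet_mono _ _ (cb_anti A (Order.lt_add_one_iff.1 hε)) hx⟩

lemma isClosed_cb [T1Space E] {A : Set E} (hA : IsClosed A) (δ : Ordinal.{u}) :
    IsClosed (cb A δ) := by
  rw [cb]
  exact hA.inter (isClosed_iInter fun _ => isClosed_derivedSet _)

lemma derivedSet_inter_open {A B V : Set E} (hV : IsOpen V) (h : A ∩ V ⊆ B) :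
    derivedSet A ∩ V ⊆ derivedSet B := by
  rintro x ⟨hx, hxV⟩
  rw [mem_derivedSet, accPt_iff_nhds] at hx ⊢
  intro U hU
  obtain ⟨y, ⟨⟨hyU, hyV⟩, hyA⟩, hne⟩ := hx (U ∩ V) (inter_mem hU (hV.mem_nhds hxV))
  exact ⟨y, ⟨hyU, h ⟨hyA, hyV⟩⟩, hne⟩

/-- Cantor–Bendixson derivatives are local: inside an open set `V` they only depend on the part
of the set lying in `V`. -/
lemma cb_inter_open {A B V : Set E} (hV : IsOpen V) (h : A ∩ V ⊆ B) (δ : Ordinal.{u}) :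
    cb A δ ∩ V ⊆ cb B δ := by
  induction δ using WellFoundedLT.induction with
  | _ δ ih =>
    rintro x ⟨hx, hxV⟩
    rw [mem_cb] at hx ⊢
    exact ⟨h ⟨hx.1, hxV⟩, fun ε hε =>
      derivedSet_inter_open hV (ih ε hε) ⟨hx.2 ε hε, hxV⟩⟩

lemma cb_union_subset {A B : Set E} (hA : IsClosed A) (hB : IsClosed B) (δ : Ordinal.{u}) :
    cb (A ∪ B) δ ⊆ cb A δ ∪ cb B δ := by
  induction δ using WellFoundedLT.induction with
  | _ δ ih =>
    intro x hx
    by_cases hxA : x ∈ A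
    · by_cases hxB : x ∈ B
      · by_contra hcon
        simp only [mem_union, not_or, mem_cb, not_and, not_forall] at hcon
        obtain ⟨ε₁, h₁, h₁'⟩ := hcon.1 hxA
        obtain ⟨ε₂, h₂, h₂'⟩ := hcon.2 hxB
        have hlt : max ε₁ ε₂ < δ := max_lt h₁ h₂
        have := derivedSet_mono _ _ (ih _ hlt) ((mem_cb.1 hx).2 _ hlt)
        rw [derivedSet_union] at this
        rcases this with h | h
        · exact h₁' (derivedSet_mono _ _ (cb_anti A (le_max_left _ _)) h)
        · exact h₂' (derivedSet_mono _ _ (cb_anti B (le_max_right _ _)) h)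
      · exact Or.inl (cb_inter_open hB.isOpen_compl
          (fun y hy => hy.1.resolve_right hy.2) δ ⟨hx, hxB⟩)
    · exact Or.inr (cb_inter_open hA.isOpen_compl
          (fun y hy => hy.1.resolve_left hy.2) δ ⟨hx, hxA⟩)

lemma cb_empty (δ : Ordinal.{u}) : cb (∅ : Set E) δ = ∅ :=
  subset_empty_iff.1 (cb_subset _ _)

lemma cb_biUnion_subset {ι : Type*} {s : Set ι} (hs : s.Finite) {A : ι → Set E}
    (hA : ∀ i, IsClosed (A i)) (δ : Ordinal.{u}) :
    cb (⋃ i ∈ s, A i) δ ⊆ ⋃ i ∈ s, cb (A i) δ := by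
  induction s, hs using Set.Finite.induction_on with
  | empty => simp [cb_empty]
  | @insert a s _ hs ih =>
    rw [biUnion_insert, biUnion_insert]
    exact (cb_union_subset (hA a) (hs.isClosed_biUnion fun i _ => hA i) δ).trans
      (union_subset_union_right _ ih)

lemma derivedSet_image_subset [T2Space E] [T2Space F] {f : E → F} {A : Set E} (hA : IsCompact A)
    (hf : ContinuousOn f A) : derivedSet (f '' A) ⊆ f '' derivedSet A := by
  intro y hy
  have hcl : IsClosed (f '' A) := (hA.image_of_continuousOn hf).isClosed
  by_contra hcon
  -- otherwise only finitely many points of `A` lie over `y`, and removing them stays compact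
  have hiso : ∀ x ∈ A, f x = y → ∃ U, IsOpen U ∧ x ∈ U ∧ ∀ z ∈ U ∩ A, z = x := by
    intro x _ hxy
    have hx : ¬ AccPt x (𝓟 A) := fun h => hcon ⟨x, h, hxy⟩
    rw [accPt_iff_nhds] at hx
    push Not at hx
    obtain ⟨U, hU, hU'⟩ := hx
    obtain ⟨V, hVU, hV, hxV⟩ := mem_nhds_iff.1 hU
    exact ⟨V, hV, hxV, fun z hz => hU' z ⟨hVU hz.1, hz.2⟩⟩
  choose! U hUo hxU hU using hiso
  let B := A \ ⋃ x ∈ {x ∈ A | f x = y}, U x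
  have hB : IsCompact B := hA.diff (isOpen_biUnion fun x hx => hUo x hx.1 hx.2)
  have hBc : IsClosed (f '' B) := (hB.image_of_continuousOn (hf.mono sdiff_subset)).isClosed
  have hyB : y ∉ f '' B := by
    rintro ⟨x, hx, hxy⟩
    exact hx.2 (mem_biUnion (show x ∈ {x ∈ A | f x = y} from ⟨hx.1, hxy⟩) (hxU x hx.1 hxy))
  rw [mem_derivedSet, accPt_iff_nhds] at hy
  obtain ⟨z, ⟨hz, x, hxA, rfl⟩, hne⟩ := hy _ (hBc.isOpen_compl.mem_nhds hyB)
  apply hz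
  refine ⟨x, ⟨hxA, ?_⟩, rfl⟩
  simp only [mem_iUnion, not_exists]
  intro x' hx' hxU'
  have := hU x' hx'.1 hx'.2 x ⟨hxU', hxA⟩
  subst this
  exact hne hx'.2

lemma cb_image_subset [T2Space E] [T2Space F] {f : E → F} {A : Set E} (hA : IsCompact A)
    (hf : ContinuousOn f A) (hinj : InjOn f A) (δ : Ordinal.{u}) :
    cb (f '' A) δ ⊆ f '' cb A δ := by
  induction δ using WellFoundedLT.induction with
  | _ δ ih =>
    intro y hy
    rw [mem_cb] at hy
    obtain ⟨⟨x, hxA, rfl⟩, hy⟩ := hy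
    refine ⟨x, mem_cb.2 ⟨hxA, fun ε hε => ?_⟩, rfl⟩
    have hc : IsCompact (cb A ε) :=
      hA.of_isClosed_subset (isClosed_cb hA.isClosed ε) (cb_subset A ε)
    have h1 := derivedSet_image_subset hc (hf.mono (cb_subset A ε))
      (derivedSet_mono _ _ (ih ε hε) (hy ε hε))
    obtain ⟨x', hx', hxx⟩ := h1
    have hx'A : x' ∈ A := cb_subset A ε
      ((isClosed_iff_derivedSet_subset _).1 hc.isClosed hx')
    rwa [hinj hx'A hxA hxx] at hx'

lemma image_cb_subset {f : E → F} {A : Set E}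
    (hf : Continuous f) (hinj : InjOn f A) (δ : Ordinal.{u}) :
    f '' cb A δ ⊆ cb (f '' A) δ := by
  induction δ using WellFoundedLT.induction with
  | _ δ ih =>
    rintro _ ⟨x, hx, rfl⟩
    rw [mem_cb] at hx ⊢
    refine ⟨⟨x, hx.1, rfl⟩, fun ε hε => derivedSet_mono _ _ (ih ε hε) ?_⟩
    have h := hx.2 ε hε
    rw [mem_derivedSet, accPt_iff_nhds] at h ⊢
    intro U hU
    obtain ⟨y, ⟨hyU, hyA⟩, hne⟩ := h _ (hf.continuousAt.preimage_mem_nhds hU)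
    exact ⟨f y, ⟨hyU, y, hyA, rfl⟩, fun h => hne (hinj (cb_subset _ _ hyA) hx.1 h)⟩

lemma derivedSet_finite [T1Space E] {A : Set E} (hA : A.Finite) : derivedSet A = ∅ := by
  rw [eq_empty_iff_forall_notMem]
  intro x hx
  rw [mem_derivedSet, accPt_iff_nhds] at hx
  obtain ⟨y, hy, hne⟩ := hx _ ((hA.subset (sdiff_subset (t := {x}))).isClosed.isOpen_compl.mem_nhds
    (show x ∈ (A \ {x})ᶜ by simp))
  exact hy.1 ⟨hy.2, hne⟩

lemma finite_of_derivedSet_eq_empty {A : Set E} (hA : IsCompact A) (h : derivedSet A = ∅) :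
    A.Finite := by
  by_contra hinf
  obtain ⟨x, _, hx⟩ := (show A.Infinite from hinf).exists_accPt_of_subset_isCompact hA subset_rfl
  have : x ∈ derivedSet A := hx
  simp [h] at this

/-- A family of closed sets `A j` that is locally finite away from a closed set `B`: the union is
closed, and off `B` its derivatives are those of the members. -/
lemma isClosed_union_iUnion {ι : Type*} {A : ι → Set E} {B : Set E} (hB : IsClosed B)
    (hA : ∀ j, IsClosed (A j))
    (h : ∀ x ∉ B, ∃ V, IsOpen V ∧ x ∈ V ∧ {j | (A j ∩ V).Nonempty}.Finite) :
    IsClosed (B ∪ ⋃ j, A j) := by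
  rw [← isOpen_compl_iff, isOpen_iff_mem_nhds]
  intro x hx
  simp only [compl_union, mem_inter_iff, mem_compl_iff, mem_iUnion, not_exists] at hx
  obtain ⟨V, hV, hxV, hfin⟩ := h x hx.1
  have h1 : IsClosed (⋃ j ∈ {j | (A j ∩ V).Nonempty}, A j) :=
    hfin.isClosed_biUnion fun j _ => hA j
  filter_upwards [hB.isOpen_compl.mem_nhds hx.1, hV.mem_nhds hxV,
    h1.isOpen_compl.mem_nhds (show x ∈ _ by simpa using fun i _ => hx.2 i)] with y h2 h3 h4
  simp only [compl_union, mem_inter_iff, mem_compl_iff, mem_iUnion, not_exists] at h2 h4 ⊢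
  exact ⟨h2, fun j hj => h4 j ⟨y, hj, h3⟩ hj⟩

lemma cb_union_iUnion_subset {ι : Type*} {A : ι → Set E} {B : Set E} (hB : IsClosed B)
    (hA : ∀ j, IsClosed (A j))
    (h : ∀ x ∉ B, ∃ V, IsOpen V ∧ x ∈ V ∧ {j | (A j ∩ V).Nonempty}.Finite) (δ : Ordinal.{u}) :
    cb (B ∪ ⋃ j, A j) δ ⊆ B ∪ ⋃ j, cb (A j) δ := by
  intro x hx
  by_cases hxB : x ∈ B
  · exact Or.inl hxB
  obtain ⟨V, hV, hxV, hfin⟩ := h x hxB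
  have h1 : x ∈ cb (⋃ j ∈ {j | (A j ∩ V).Nonempty}, A j) δ := by
    refine cb_inter_open (hV.inter hB.isOpen_compl) ?_ δ ⟨hx, hxV, hxB⟩
    rintro y ⟨hy, hyV, hyB⟩
    rcases hy with hy | hy
    · exact absurd hy hyB
    · obtain ⟨j, hj⟩ := mem_iUnion.1 hy
      exact mem_biUnion (show j ∈ {j | (A j ∩ V).Nonempty} from ⟨y, hj, hyV⟩) hj
  have h2 := cb_biUnion_subset hfin hA δ h1
  simp only [mem_iUnion] at h2
  obtain ⟨j, _, hj⟩ := h2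
  exact Or.inr (mem_iUnion.2 ⟨j, hj⟩)

lemma derivedSet_union_iUnion_subset [T1Space E] {ι : Type*} {A : ι → Set E} {B : Set E}
    (hB : IsClosed B) (hA : ∀ j, (A j).Finite)
    (h : ∀ x ∉ B, ∃ V, IsOpen V ∧ x ∈ V ∧ {j | (A j ∩ V).Nonempty}.Finite) :
    derivedSet (B ∪ ⋃ j, A j) ⊆ B := by
  intro x hx
  have hcl := isClosed_union_iUnion hB (fun j => (hA j).isClosed) h
  have hx1 : x ∈ cb (B ∪ ⋃ j, A j) ((0 : Ordinal.{0}) + 1) :=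
    mem_cb_add_one ((isClosed_iff_derivedSet_subset _).1 hcl hx) (by rwa [cb_zero])
  rcases cb_union_iUnion_subset hB (fun j => (hA j).isClosed) h _ hx1 with h1 | h1
  · exact h1
  · obtain ⟨j, hj⟩ := mem_iUnion.1 h1
    have := cb_add_one_subset _ _ hj
    rw [cb_zero, derivedSet_finite (hA j)] at this
    exact absurd this (notMem_empty x)

end CantorBendixson

/-! ### The Mazurkiewicz–Sierpiński classification -/

section Classification

open Topology Ordinal

universe u

variable {E : Type*} [TopologicalSpace E]

/-- `OrdRep A θ`: some continuous function maps `A` bijectively onto the ordinals below `θ`.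
For compact `A` this makes `A` homeomorphic to `θ` with its order topology. -/
def OrdRep (A : Set E) (θ : Ordinal.{u}) : Prop :=
  ∃ f : E → Ordinal.{u}, ContinuousOn f A ∧ InjOn f A ∧ f '' A = Iio θ

lemma ordRep_empty : OrdRep (∅ : Set E) (0 : Ordinal.{u}) :=
  ⟨fun _ => 0, continuousOn_empty _, injOn_empty _, by simp⟩

lemma ordRep_singleton (p : E) : OrdRep ({p} : Set E) (1 : Ordinal.{u}) :=
  ⟨fun _ => 0, continuousOn_singleton _ _, injOn_singleton _ _, by
    ext x
    simp⟩

lemma continuous_ordinal_add (a : Ordinal.{u}) : Continuous fun x : Ordinal.{u} => a + x :=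
  (isNormal_add_right a).continuous

lemma ordRep_union {A B : Set E} (hA : IsClosed A) (hB : IsClosed B) (hAB : Disjoint A B)
    {θ₁ θ₂ : Ordinal.{u}} (h₁ : OrdRep A θ₁) (h₂ : OrdRep B θ₂) : OrdRep (A ∪ B) (θ₁ + θ₂) := by
  classical
  obtain ⟨f, hf, hfi, hfr⟩ := h₁
  obtain ⟨g, hg, hgi, hgr⟩ := h₂
  set F : E → Ordinal.{u} := fun x => if x ∈ A then f x else θ₁ + g x with hF
  have hFA : EqOn F f A := fun x hx => by simp [hF, hx]
  have hFB : EqOn F (fun x => θ₁ + g x) B := fun x hx => by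
    exact if_neg fun h => disjoint_left.1 hAB h hx
  have hfA : ∀ x ∈ A, f x < θ₁ := fun x hx => hfr.subset ⟨x, hx, rfl⟩
  refine ⟨F, ?_, ?_, ?_⟩
  · exact (hf.congr hFA).union_of_isClosed
      (((continuous_ordinal_add θ₁).comp_continuousOn hg).congr hFB) hA hB
  · rintro x (hx | hx) y (hy | hy) hxy
    · rw [hFA hx, hFA hy] at hxy
      exact hfi hx hy hxy
    · rw [hFA hx, hFB hy] at hxy
      exact absurd (hxy ▸ hfA x hx) (not_lt.2 le_self_add)
    · rw [hFB hx, hFA hy] at hxy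
      exact absurd (hxy ▸ hfA y hy) (not_lt.2 le_self_add)
    · rw [hFB hx, hFB hy] at hxy
      exact hgi hx hy (add_left_cancel hxy)
  · rw [image_union, hFA.image_eq, hFB.image_eq, hfr]
    have : (fun x => θ₁ + g x) '' B = (fun x => θ₁ + x) '' (g '' B) := by rw [image_image]
    rw [this, hgr]
    ext x
    simp only [mem_union, mem_Iio, mem_image]
    constructor
    · rintro (h | ⟨y, hy, rfl⟩)
      · exact h.trans_le le_self_add
      · exact add_lt_add_right hy _
    · intro h
      by_cases hx : x < θ₁
      · exact Or.inl hx
      · have hxs := Ordinal.add_sub_cancel_of_le (not_lt.1 hx)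
        exact Or.inr ⟨x - θ₁, by rw [← hxs] at h; exact lt_of_add_lt_add_left h, hxs⟩

/-- If clopen pieces `A ∩ (U n \ U (n + 1))` shrink to a point `p` and represent the ordinals
`θ n`, then `A` represents the successor of the limit `Θ` of the partial sums. -/
lemma ordRep_glue [T1Space E] {A : Set E} {p : E} (hp : p ∈ A) {U : ℕ → Set E}
    (hU : ∀ n, IsClopen (U n)) (hanti : Antitone U) (hU0 : U 0 = Set.univ) (hpU : ∀ n, p ∈ U n)
    (hbasis : ∀ V ∈ 𝓝 p, ∃ n, U n ⊆ V) {θ : ℕ → Ordinal.{u}}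
    (hθ : ∀ n, OrdRep (A ∩ (U n \ U (n + 1))) (θ n)) {S : ℕ → Ordinal.{u}} (hS0 : S 0 = 0)
    (hS : ∀ n, S (n + 1) = S n + θ n) {Θ : Ordinal.{u}} (hlt : ∀ n, S n < Θ)
    (hcof : ∀ b < Θ, ∃ n, b < S n) : OrdRep A (Θ + 1) := by
  classical
  choose f hfc hfi hfr using hθ
  have hSm : Monotone S := monotone_nat_of_le_succ fun n => by rw [hS]; exact le_self_add
  have hex : ∀ x ≠ p, ∃ n, x ∉ U (n + 1) := by
    intro x hx
    obtain ⟨n, hn⟩ := hbasis _ (isOpen_compl_singleton.mem_nhds (show p ∈ ({x} : Set E)ᶜ from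
      fun h => hx h.symm))
    exact ⟨n, fun h => hn (hanti (Nat.le_succ n) h) rfl⟩
  have hidx : ∀ x ≠ p, ∃ n, x ∈ U n \ U (n + 1) := by
    intro x hx
    refine ⟨Nat.find (hex x hx), ?_, Nat.find_spec (hex x hx)⟩
    rcases h : Nat.find (hex x hx) with _ | k
    · rw [hU0]; trivial
    · by_contra hcon
      have := Nat.find_min (hex x hx) (m := k) (by omega)
      exact this hcon
  have huniq : ∀ {x n m}, x ∈ U n \ U (n + 1) → x ∈ U m \ U (m + 1) → n = m := by
    intro x n m hn hm
    by_contra hne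
    rcases lt_or_gt_of_ne hne with h | h
    · exact hn.2 (hanti (by omega) hm.1)
    · exact hm.2 (hanti (by omega) hn.1)
  choose! idx hidx using hidx
  set F : E → Ordinal.{u} := fun x => if x = p then Θ else S (idx x) + f (idx x) x with hF
  have hFp : F p = Θ := by simp [hF]
  have hne : ∀ {x n}, x ∈ U n \ U (n + 1) → x ≠ p := by
    rintro x n hx rfl
    exact hx.2 (hpU _)
  have hFn : ∀ n, EqOn F (fun x => S n + f n x) (U n \ U (n + 1)) := by
    intro n x hx
    have h1 := huniq (hidx x (hne hx)) hx
    simp [hF, hne hx, h1]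
  have hfl : ∀ {x n}, x ∈ A → x ∈ U n \ U (n + 1) → f n x < θ n :=
    fun {x n} hx hn => (hfr n).subset ⟨x, ⟨hx, hn⟩, rfl⟩
  have hFub : ∀ {x n}, x ∈ A → x ∈ U n \ U (n + 1) → F x < S (n + 1) := by
    intro x n hx hn
    rw [hFn n hn, hS]
    exact add_lt_add_right (hfl hx hn) _
  have hFlb : ∀ {x n}, x ∈ U n \ U (n + 1) → S n ≤ F x := by
    intro x n hn
    rw [hFn n hn]
    exact le_self_add
  refine ⟨F, ?_, ?_, ?_⟩
  · intro x hx
    by_cases hxp : x = p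
    · subst hxp
      rw [ContinuousWithinAt, hFp]
      refine tendsto_order.2 ⟨fun b hb => ?_, fun b hb => ?_⟩
      · obtain ⟨n, hn⟩ := hcof b hb
        filter_upwards [mem_nhdsWithin_of_mem_nhds ((hU n).isOpen.mem_nhds (hpU n))] with y hy
        by_cases hyp : y = x
        · rw [hyp, hFp]; exact hb
        · have h1 := hidx y hyp
          refine hn.trans_le ((hSm ?_).trans (hFlb h1))
          by_contra hlt'
          exact h1.2 (hanti (by omega) hy)
      · filter_upwards [self_mem_nhdsWithin] with y hy
        by_cases hyp : y = x
        · rw [hyp, hFp]; exact hb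
        · exact ((hFub hy (hidx y hyp)).trans (hlt _)).trans hb
    · have h1 := hidx x hxp
      have hopen : IsOpen (U (idx x) \ U (idx x + 1)) :=
        (hU _).isOpen.sdiff (hU _).isClosed
      have h2 : ContinuousWithinAt (fun y => S (idx x) + f (idx x) y)
          (A ∩ (U (idx x) \ U (idx x + 1))) x :=
        ((continuous_ordinal_add _).comp_continuousOn (hfc (idx x))) x ⟨hx, h1⟩
      have h3 := h2.congr (fun y hy => hFn _ hy.2) (hFn _ h1)
      exact (continuousWithinAt_inter (hopen.mem_nhds h1)).1 h3
  · intro x hx y hy hxy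
    by_cases hxp : x = p <;> by_cases hyp : y = p
    · rw [hxp, hyp]
    · have := (hFub hy (hidx y hyp)).trans (hlt _)
      rw [← hxy, hxp, hFp] at this
      exact absurd this (lt_irrefl _)
    · have := (hFub hx (hidx x hxp)).trans (hlt _)
      rw [hxy, hyp, hFp] at this
      exact absurd this (lt_irrefl _)
    · have hx1 := hidx x hxp
      have hy1 := hidx y hyp
      have hidxeq : idx x = idx y := by
        by_contra hne'
        rcases lt_or_gt_of_ne hne' with h | h
        · have := (hFub hx hx1).trans_le ((hSm (by omega : idx x + 1 ≤ idx y)).trans (hFlb hy1))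
          exact this.ne hxy
        · have := (hFub hy hy1).trans_le ((hSm (by omega : idx y + 1 ≤ idx x)).trans (hFlb hx1))
          exact this.ne hxy.symm
      rw [hFn _ hx1, hFn _ hy1, ← hidxeq] at hxy
      exact hfi (idx x) ⟨hx, hx1⟩ ⟨hy, hidxeq ▸ hy1⟩ (add_left_cancel hxy)
  · ext b
    simp only [mem_image, mem_Iio, Order.lt_add_one_iff]
    constructor
    · rintro ⟨x, hx, rfl⟩
      by_cases hxp : x = p
      · rw [hxp, hFp]
      · exact ((hFub hx (hidx x hxp)).trans (hlt _)).le
    · intro hb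
      rcases hb.eq_or_lt with rfl | hb
      · exact ⟨p, hp, hFp⟩
      · have hn := hcof b hb
        obtain ⟨k, hk⟩ : ∃ k, Nat.find hn = k + 1 := by
          refine Nat.exists_eq_succ_of_ne_zero fun h0 => ?_
          have := Nat.find_spec hn
          rw [h0, hS0] at this
          exact absurd this (not_lt.2 zero_le)
        have h1 : b < S (k + 1) := hk ▸ Nat.find_spec hn
        have h2 : S k ≤ b := not_lt.1 (Nat.find_min hn (by omega))
        have h3 := Ordinal.add_sub_cancel_of_le h2
        have h4 : b - S k < θ k := by
          rw [hS, ← h3] at h1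
          exact lt_of_add_lt_add_left h1
        obtain ⟨x, hx, hxe⟩ := (hfr k).superset h4
        exact ⟨x, hx.1, by rw [hFn k hx.2]; simp only [hxe, h3]⟩

/-- The ordinal type of a compact countable set of Cantor–Bendixson rank `δ` with `k` points of
maximal rank. -/
def msType (δ : Ordinal.{u}) (k : ℕ) : Ordinal.{u} := if δ = 0 then k else ω ^ δ * k + 1

lemma msType_lt {δ γ : Ordinal.{u}} (h : δ < γ) (k : ℕ) : msType δ k < ω ^ γ := by
  have hγ : γ ≠ 0 := (zero_le.trans_lt h).ne'
  have hω : ω ≤ ω ^ γ := by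
    conv_lhs => rw [← opow_one ω]
    exact opow_le_opow_right omega0_pos (Order.one_le_iff_ne_zero.2 hγ)
  unfold msType
  split_ifs
  · exact (natCast_lt_omega0 k).trans_le hω
  · exact isPrincipal_add_omega0_opow γ (opow_mul_lt_opow (natCast_lt_omega0 k) h)
      (one_lt_omega0.trans_le hω)

lemma le_msType (δ : Ordinal.{u}) {k : ℕ} (hk : 0 < k) : ω ^ δ ≤ msType δ k := by
  have h1 : (1 : Ordinal.{u}) ≤ k := by exact_mod_cast hk
  unfold msType
  split_ifs with h
  · simpa [h] using h1
  · calc ω ^ δ = ω ^ δ * 1 := (mul_one _).symm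
      _ ≤ ω ^ δ * k := by gcongr
      _ ≤ _ := le_self_add

lemma msType_add (δ : Ordinal.{u}) (k : ℕ) :
    msType δ k + msType δ 1 = msType δ (k + 1) := by
  unfold msType
  split_ifs with h
  · simp
  · have h1 : (1 : Ordinal.{u}) + ω ^ δ = ω ^ δ :=
      add_omega0_opow (by simpa using h)
    rw [Nat.cast_one, mul_one, ← add_assoc, add_assoc (ω ^ δ * k), h1, Nat.cast_add, Nat.cast_one,
      mul_add, mul_one]

lemma cb_inter_clopen {A U : Set E} (hU : IsClopen U) (δ : Ordinal.{u}) :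
    cb (A ∩ U) δ = cb A δ ∩ U := by
  apply subset_antisymm
  · exact subset_inter (cb_mono inter_subset_left δ) ((cb_subset _ _).trans inter_subset_right)
  · exact cb_inter_open hU.isOpen subset_rfl δ

/-- A nonempty closed set whose derivatives die out at some stage has a last nonempty
derivative, and that derivative is finite. -/
lemma exists_last_cb [T2Space E] [CompactSpace E] {B : Set E} (hB : IsClosed B) (hne : B.Nonempty) {γ : Ordinal.{u}}
    (hγ : cb B γ = ∅) :
    ∃ δ < γ, (cb B δ).Finite ∧ (cb B δ).Nonempty ∧ cb B (δ + 1) = ∅ := by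
  set γ' := sInf {γ : Ordinal.{u} | cb B γ = ∅} with hγ'
  have hmem : cb B γ' = ∅ := csInf_mem (s := {γ : Ordinal.{u} | cb B γ = ∅}) ⟨γ, hγ⟩
  have hle : γ' ≤ γ := csInf_le' hγ
  have hmin : ∀ ε < γ', (cb B ε).Nonempty := fun ε hε => by
    rw [nonempty_iff_ne_empty]
    exact fun h => notMem_of_lt_csInf' hε h
  have h0 : γ' ≠ 0 := by
    intro h
    rw [h, cb_zero] at hmem
    exact hne.ne_empty hmem
  by_cases hlim : ∃ δ, γ' = δ + 1
  · obtain ⟨δ, hδ⟩ := hlim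
    have hlt : δ < γ' := by rw [hδ]; exact Order.lt_add_one_iff.2 le_rfl
    refine ⟨δ, hlt.trans_le hle, ?_, hmin δ hlt, hδ ▸ hmem⟩
    have hcl := isClosed_cb hB δ
    apply finite_of_derivedSet_eq_empty hcl.isCompact
    rw [eq_empty_iff_forall_notMem]
    intro x hx
    have : x ∈ cb B (δ + 1) :=
      mem_cb_add_one (cb_subset B δ ((isClosed_iff_derivedSet_subset _).1 hcl hx)) hx
    rw [← hδ, hmem] at this
    exact this
  · exfalso
    push Not at hlim
    have hsucc : ∀ ε < γ', ε + 1 < γ' := fun ε hε =>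
      lt_of_le_of_ne (Order.add_one_le_iff.2 hε) (hlim ε).symm
    have : Nonempty (Iio γ') := ⟨⟨0, pos_iff_ne_zero.2 h0⟩⟩
    obtain ⟨x, hx⟩ := IsCompact.nonempty_iInter_of_directed_nonempty_isCompact_isClosed
      (fun ε : Iio γ' => cb B ε.1)
      (fun a b => ⟨max a b, cb_anti B (le_max_left a b), cb_anti B (le_max_right a b)⟩)
      (fun ε => hmin _ ε.2) (fun ε => (isClosed_cb hB _).isCompact) (fun ε => isClosed_cb hB _)
    rw [mem_iInter] at hx
    have : x ∈ cb B γ' := mem_cb.2 ⟨cb_subset _ _ (hx (Classical.arbitrary _)), fun ε hε =>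
      cb_add_one_subset _ _ (hx ⟨ε + 1, hsucc ε hε⟩)⟩
    rw [hmem] at this
    exact this

lemma exists_clopen_basis [T2Space E] [CompactSpace E] [TotallyDisconnectedSpace E]
    [FirstCountableTopology E] (p : E) :
    ∃ U : ℕ → Set E, (∀ n, IsClopen (U n)) ∧ Antitone U ∧ U 0 = Set.univ ∧ (∀ n, p ∈ U n) ∧
      ∀ V ∈ 𝓝 p, ∃ n, U n ⊆ V := by
  obtain ⟨B, hB⟩ := (𝓝 p).exists_antitone_basis
  have h1 : ∀ n, ∃ V : Set E, IsClopen V ∧ p ∈ V ∧ V ⊆ B n := by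
    intro n
    obtain ⟨W, hW, hWo, hpW⟩ := mem_nhds_iff.1 (hB.1.mem_of_mem (i := n) trivial)
    obtain ⟨V, hV, hpV, hVW⟩ := compact_exists_isClopen_in_isOpen hWo hpW
    exact ⟨V, hV, hpV, hVW.trans hW⟩
  choose V hV hpV hVB using h1
  refine ⟨fun n => ⋂ i ∈ Finset.range n, V i, fun n => ?_, ?_, by simp, ?_, ?_⟩
  · exact isClopen_biInter_finset fun i _ => hV i
  · intro a b hab
    exact biInter_subset_biInter_left fun i hi =>
      Finset.mem_range.2 ((Finset.mem_range.1 hi).trans_le hab)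
  · intro n
    simp [hpV]
  · intro W hW
    obtain ⟨n, -, hn⟩ := hB.1.mem_iff.1 hW
    refine ⟨n + 1, fun x hx => hn (hVB n ?_)⟩
    simp only [mem_iInter] at hx
    exact hx n (by simp)

lemma ordRep_of_cb_eq_empty [T2Space E] [CompactSpace E] {γ : Ordinal.{u}}
    (ih : ∀ δ < γ, ∀ B : Set E, IsClosed B → (cb B δ).Finite → (cb B δ).Nonempty →
      OrdRep B (msType δ (cb B δ).ncard)) {B : Set E} (hB : IsClosed B) (hγ : cb B γ = ∅) :
    ∃ θ < ω ^ γ, OrdRep B θ ∧ ∀ ε, (cb B ε).Nonempty → ω ^ ε ≤ θ := by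
  rcases B.eq_empty_or_nonempty with rfl | hne
  · exact ⟨0, opow_pos γ omega0_pos, ordRep_empty, fun ε h => by simp [cb_empty] at h⟩
  · obtain ⟨δ, hδ, hfin, hne', hemp⟩ := exists_last_cb hB hne hγ
    refine ⟨_, msType_lt hδ _, ih δ hδ B hB hfin hne', fun ε hε => ?_⟩
    refine le_trans (opow_le_opow_right omega0_pos ?_)
      (le_msType δ ((ncard_pos hfin).2 hne'))
    by_contra hcon
    have := cb_anti B (Order.add_one_le_iff.2 (not_le.1 hcon))
    rw [hemp] at this
    exact hε.ne_empty (subset_empty_iff.1 this)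

lemma ordRep_of_cb_eq_singleton [T2Space E] [CompactSpace E] [TotallyDisconnectedSpace E]
    [FirstCountableTopology E] {γ : Ordinal.{u}}
    (ih : ∀ δ < γ, ∀ B : Set E, IsClosed B → (cb B δ).Finite → (cb B δ).Nonempty →
      OrdRep B (msType δ (cb B δ).ncard)) {A : Set E} (hA : IsClosed A) {p : E}
    (hp : cb A γ = {p}) : OrdRep A (msType γ 1) := by
  by_cases h0 : γ = 0
  · subst h0
    rw [cb_zero] at hp
    simpa [msType, hp] using ordRep_singleton p
  have hpA : p ∈ cb A γ := by rw [hp]; rfl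
  obtain ⟨U, hU, hanti, hU0, hpU, hbasis⟩ := exists_clopen_basis p
  have hD : ∀ n, IsClopen (U n \ U (n + 1)) := fun n => (hU n).diff (hU (n + 1))
  have hpiece : ∀ n, ∃ θ < ω ^ γ, OrdRep (A ∩ (U n \ U (n + 1))) θ ∧
      ∀ ε, (cb (A ∩ (U n \ U (n + 1))) ε).Nonempty → ω ^ ε ≤ θ := by
    intro n
    refine ordRep_of_cb_eq_empty ih (hA.inter (hD n).isClosed) ?_
    rw [cb_inter_clopen (hD n), hp, eq_empty_iff_forall_notMem]
    rintro x ⟨rfl, -, h⟩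
    exact h (hpU _)
  choose θ hθlt hθ hθε using hpiece
  let S : ℕ → Ordinal.{u} := fun n => Nat.rec 0 (fun n s => s + θ n) n
  have hS : ∀ n, S (n + 1) = S n + θ n := fun _ => rfl
  have hSm : Monotone S := monotone_nat_of_le_succ fun n => by rw [hS]; exact le_self_add
  have hlt : ∀ n, S n < ω ^ γ := by
    intro n
    induction n with
    | zero => exact opow_pos γ omega0_pos
    | succ n ihn => exact isPrincipal_add_omega0_opow γ ihn (hθlt n)
  have hcof : ∀ b < ω ^ γ, ∃ n, b < S n := by
    intro b hb
    obtain ⟨ε, hε, k, hk⟩ := (lt_omega0_opow h0).1 hb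
    suffices h : ∀ k : ℕ, ∃ n, ω ^ ε * k ≤ S n by
      obtain ⟨n, hn⟩ := h k
      exact ⟨n, hk.trans_le hn⟩
    intro k
    induction k with
    | zero => exact ⟨0, by simp⟩
    | succ k ihk =>
      obtain ⟨n, hn⟩ := ihk
      -- `p` is a limit of points of rank at least `ε`, so some later piece contains one
      have hacc : AccPt p (𝓟 (cb A ε)) := (mem_cb.1 hpA).2 ε hε
      rw [accPt_iff_nhds] at hacc
      obtain ⟨y, ⟨hyU, hyA⟩, hyp⟩ := hacc _ ((hU n).isOpen.mem_nhds (hpU n))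
      obtain ⟨j, hj⟩ := hbasis _ (isOpen_compl_singleton.mem_nhds (show p ∈ ({y} : Set E)ᶜ from
        fun h => hyp h.symm))
      have hex : ∃ j, y ∉ U j := ⟨j, fun h => hj h rfl⟩
      classical
      obtain ⟨i, hi⟩ : ∃ i, Nat.find hex = i + 1 := by
        refine Nat.exists_eq_succ_of_ne_zero fun h0 => ?_
        have := Nat.find_spec hex
        rw [h0, hU0] at this
        exact this trivial
      have hy1 : y ∉ U (i + 1) := hi ▸ Nat.find_spec hex
      have hy2 : y ∈ U i := not_not.1 (Nat.find_min hex (by omega))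
      have hni : n ≤ i := by
        by_contra hcon
        exact hy1 (hanti (by omega) hyU)
      refine ⟨i + 1, ?_⟩
      rw [hS, Nat.cast_add, Nat.cast_one, mul_add, mul_one]
      refine add_le_add (hn.trans (hSm hni)) (hθε i ε ⟨y, ?_⟩)
      rw [cb_inter_clopen (hD i)]
      exact ⟨hyA, hy2, hy1⟩
  have := ordRep_glue (cb_subset _ _ hpA) hU hanti hU0 hpU hbasis hθ (S := S) rfl hS hlt hcof
  simpa [msType, h0] using this

/-- The Mazurkiewicz–Sierpiński theorem for closed sets in a compact, totally disconnected,
first countable Hausdorff space. -/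
theorem ordRep_of_cb_finite [T2Space E] [CompactSpace E] [TotallyDisconnectedSpace E]
    [FirstCountableTopology E] (γ : Ordinal.{u}) : ∀ A : Set E, IsClosed A → (cb A γ).Finite →
    (cb A γ).Nonempty → OrdRep A (msType γ (cb A γ).ncard) := by
  induction γ using WellFoundedLT.induction with
  | _ γ ih =>
    suffices h : ∀ k : ℕ, ∀ A : Set E, IsClosed A → (cb A γ).Finite → (cb A γ).ncard = k + 1 →
        OrdRep A (msType γ (k + 1)) by
      intro A hA hfin hne
      obtain ⟨k, hk⟩ := Nat.exists_eq_succ_of_ne_zero ((ncard_pos hfin).2 hne).ne'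
      rw [hk]
      exact h k A hA hfin hk
    intro k
    induction k with
    | zero =>
      intro A hA _ hcard
      obtain ⟨p, hp⟩ := ncard_eq_one.1 hcard
      exact ordRep_of_cb_eq_singleton ih hA hp
    | succ k ihk =>
      intro A hA hfin hcard
      have hne : (cb A γ).Nonempty := (ncard_pos hfin).1 (by omega)
      obtain ⟨p, hp⟩ := hne
      have hcl : IsClosed (cb A γ \ {p}) := (hfin.subset sdiff_subset).isClosed
      obtain ⟨U, hU, hpU, hUs⟩ := compact_exists_isClopen_in_isOpen hcl.isOpen_compl
        (show p ∈ (cb A γ \ {p})ᶜ by simp)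
      have h1 : cb (A ∩ U) γ = {p} := by
        rw [cb_inter_clopen hU]
        ext x
        constructor
        · rintro ⟨hx, hxU⟩
          by_contra hxp
          exact hUs hxU ⟨hx, hxp⟩
        · rintro rfl
          exact ⟨hp, hpU⟩
      have h2 : cb (A ∩ Uᶜ) γ = cb A γ \ {p} := by
        rw [cb_inter_clopen hU.compl]
        ext x
        constructor
        · rintro ⟨hx, hxU⟩
          exact ⟨hx, fun h => hxU (h ▸ hpU)⟩
        · rintro ⟨hx, hxp⟩
          exact ⟨hx, fun h => hUs h ⟨hx, hxp⟩⟩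
      have h3 := ordRep_of_cb_eq_singleton ih (hA.inter hU.isClosed) h1
      have h4 := ihk (A ∩ Uᶜ) (hA.inter hU.compl.isClosed) (h2 ▸ hfin.subset sdiff_subset) (by
        rw [h2, ncard_sdiff_singleton_of_mem hp, hcard]; rfl)
      have h5 := ordRep_union (hA.inter hU.compl.isClosed) (hA.inter hU.isClosed)
        (disjoint_left.2 fun x hx hx' => hx.2 hx'.2) h4 h3
      rw [msType_add γ, union_comm, inter_union_compl] at h5
      exact h5

lemma homeoOrd_of_ordRep {A : Set E} (hA : IsCompact A) {o : Ordinal.{u}}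
    (h : OrdRep A (o + 1)) : HomeoOrd A o := by
  obtain ⟨f, hfc, hfi, hfr⟩ := h
  have hmem : ∀ x : A, f x ∈ Iic o := fun x => by
    have : f x ∈ Iio (o + 1) := hfr ▸ mem_image_of_mem f x.2
    exact Order.lt_add_one_iff.1 (show f x < o + 1 from this)
  let g : A → Iic o := fun x => ⟨f x, hmem x⟩
  have hg : Continuous g :=
    Continuous.subtype_mk (continuousOn_iff_continuous_domRestrict.1 hfc) hmem
  have hbij : Function.Bijective g := by
    constructor
    · intro x y hxy
      exact Subtype.ext (hfi x.2 y.2 (congrArg Subtype.val hxy))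
    · rintro ⟨b, hb⟩
      obtain ⟨x, hx, hxb⟩ := hfr.superset (show b < o + 1 from Order.lt_add_one_iff.2 hb)
      exact ⟨⟨x, hx⟩, Subtype.ext hxb⟩
  have : CompactSpace A := isCompact_iff_compactSpace.1 hA
  have e : Iic o ≃ₜ OrdSpace o :=
    OrderIso.toHomeomorph (show Iic o ≃o OrdSpace o from OrderIso.refl (Iic o))
  exact ⟨(Continuous.homeoOfEquivCompactToT2 (f := Equiv.ofBijective g hbij) hg).trans e⟩

/-- A closed set whose derivative of order `γ + 1` has exactly `k > 0` points is homeomorphic to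
`ω ^ (γ + 1) * k + 1`. -/
theorem homeoOrd_of_cb [T2Space E] [CompactSpace E] [TotallyDisconnectedSpace E]
    [FirstCountableTopology E] {A : Set E} (hA : IsClosed A) {γ : Ordinal.{u}} {k : ℕ} (hk : 0 < k)
    (hcard : (cb A (γ + 1)).ncard = k) : HomeoOrd A (ω ^ (γ + 1) * k) := by
  have hfin : (cb A (γ + 1)).Finite := finite_of_ncard_pos (by omega)
  have h := ordRep_of_cb_finite (γ + 1) A hA hfin ((ncard_pos hfin).1 (by omega))
  rw [hcard, msType, if_neg (by simp)] at h
  exact homeoOrd_of_ordRep hA.isCompact h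

end Classification

/-! ### Closed sets of prescribed rank in the Cantor set -/

section CantorSets

open Topology

universe u

lemma exists_cylinder_subset {I : Type*} {U : Set (I → Bool)} (hU : IsOpen U) {x : I → Bool}
    (hx : x ∈ U) : ∃ s : Finset I, ∀ y, (∀ i ∈ s, y i = x i) → y ∈ U := by
  obtain ⟨s, u, hu, hsub⟩ := isOpen_pi_iff.1 hU x hx
  refine ⟨s, fun y hy => hsub fun i hi => ?_⟩
  rw [hy i hi]
  exact (hu i hi).2

lemma isOpen_cylinder {I : Type*} (s : Finset I) (x : I → Bool) :
    IsOpen {y : I → Bool | ∀ i ∈ s, y i = x i} := by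
  have : {y : I → Bool | ∀ i ∈ s, y i = x i} = ⋂ i ∈ s, {y | y i = x i} := by
    ext y
    simp
  rw [this]
  exact isOpen_biInter_finset fun i _ =>
    (isOpen_discrete ({x i} : Set Bool)).preimage (continuous_apply (A := fun _ : I => Bool) i)

/-- The sets `A j` accumulate only on `B`: on every finite window, all but finitely many of them
consist of configurations which look like elements of `B`. -/
def ConvTo {I ι : Type*} (A : ι → Set (I → Bool)) (B : Set (I → Bool)) : Prop :=
  ∀ s : Finset I, {j | ¬ ∀ a ∈ A j, ∃ b ∈ B, ∀ i ∈ s, a i = b i}.Finite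

lemma ConvTo.locallyFinite {I ι : Type*} {A : ι → Set (I → Bool)} {B : Set (I → Bool)}
    (h : ConvTo A B) (hB : IsClosed B) :
    ∀ x ∉ B, ∃ V, IsOpen V ∧ x ∈ V ∧ {j | (A j ∩ V).Nonempty}.Finite := by
  intro x hx
  obtain ⟨s, hs⟩ := exists_cylinder_subset hB.isOpen_compl hx
  refine ⟨{y | ∀ i ∈ s, y i = x i}, isOpen_cylinder s x, fun _ _ => rfl,
    (h s).subset ?_⟩
  rintro j ⟨a, haA, haV⟩ hj
  obtain ⟨b, hb, hab⟩ := hj a haA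
  exact hs b (fun i hi => (hab i hi).symm.trans (haV i hi)) hb

/-- The sequence `0ⁱ 1 z`. -/
def prepend (i : ℕ) (z : ℕ → Bool) : ℕ → Bool :=
  fun k => if k < i then false else if k = i then true else z (k - i - 1)

lemma continuous_prepend (i : ℕ) : Continuous (prepend i) := by
  refine continuous_pi fun k => ?_
  unfold prepend
  split_ifs
  · exact continuous_const
  · exact continuous_const
  · exact continuous_apply _

lemma prepend_injective (i : ℕ) : Function.Injective (prepend i) := by
  intro z z' h
  funext k
  have := congrFun h (k + i + 1)
  have h1 : k + i + 1 - i - 1 = k := by omega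
  have h2 : ¬ k + i + 1 < i := by omega
  have h3 : ¬ k + i + 1 = i := by omega
  simpa only [prepend, h1, if_neg h2, if_neg h3] using this

/-- Every countable ordinal is the exact Cantor–Bendixson rank of a closed subset of the Cantor
set whose only point of maximal rank is the zero sequence. -/
theorem exists_closed_cb_eq (γ : Ordinal.{u}) : γ.card ≤ Cardinal.aleph0 →
    ∃ C : Set (ℕ → Bool), IsClosed C ∧ cb C γ = {fun _ => false} := by
  induction γ using WellFoundedLT.induction with
  | _ γ ih =>
    intro hγ
    by_cases h0 : γ = 0
    · subst h0
      exact ⟨_, isClosed_singleton, cb_zero _⟩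
    have hne : Nonempty (Iio γ) := ⟨⟨0, pos_iff_ne_zero.2 h0⟩⟩
    have hcount : Countable (Iio γ) := by
      rw [← Cardinal.mk_le_aleph0_iff, Cardinal.mk_Iio_ordinal]
      exact Cardinal.lift_le_aleph0.2 hγ
    obtain ⟨e, he⟩ := exists_surjective_nat (Iio γ)
    let g : ℕ → Ordinal.{u} := fun i => (e i.unpair.1).1
    have hg : ∀ i, g i < γ := fun i => (e i.unpair.1).2
    have hginf : ∀ ε < γ, ∀ N, ∃ i, N ≤ i ∧ g i = ε := by
      intro ε hε N
      obtain ⟨a, ha⟩ := he ⟨ε, hε⟩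
      exact ⟨Nat.pair a N, Nat.right_le_pair a N, by simp [g, ha]⟩
    choose C hC hcb using fun i => ih (g i) (hg i) ((Ordinal.card_le_card (hg i).le).trans hγ)
    let z : ℕ → Bool := fun _ => false
    let A : ℕ → Set (ℕ → Bool) := fun i => prepend i '' C i
    have hA : ∀ i, IsClosed (A i) := fun i =>
      ((hC i).isCompact.image (continuous_prepend i)).isClosed
    have hconv : ConvTo A {z} := by
      intro s
      refine (finite_Iic (s.sup id)).subset fun j hj => ?_
      by_contra hcon
      refine hj ?_
      rintro _ ⟨a, -, rfl⟩
      refine ⟨z, rfl, fun i hi => ?_⟩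
      have h1 : i ≤ s.sup id := Finset.le_sup (f := id) hi
      have h2 : i < j := h1.trans_lt (not_le.1 hcon)
      simp [prepend, h2, z]
    have hfin := hconv.locallyFinite isClosed_singleton
    refine ⟨{z} ∪ ⋃ i, A i, isClosed_union_iUnion isClosed_singleton hA hfin, ?_⟩
    apply subset_antisymm
    · refine (cb_union_iUnion_subset isClosed_singleton hA hfin γ).trans ?_
      refine union_subset subset_rfl (iUnion_subset fun i => ?_)
      refine (cb_image_subset (hC i).isCompact (continuous_prepend i).continuousOn
        (prepend_injective i).injOn γ).trans ?_
      have h1 : cb (C i) γ = ∅ := by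
        rw [← subset_empty_iff]
        refine (cb_anti _ (Order.add_one_le_iff.2 (hg i))).trans ?_
        refine (cb_add_one_subset _ _).trans ?_
        rw [hcb, derivedSet_finite (finite_singleton _)]
      simp [h1]
    · rintro _ rfl
      refine mem_cb.2 ⟨Or.inl rfl, fun ε hε => ?_⟩
      rw [mem_derivedSet, accPt_iff_nhds]
      intro U hU
      obtain ⟨V, hVU, hVo, hzV⟩ := mem_nhds_iff.1 hU
      obtain ⟨s, hs⟩ := exists_cylinder_subset hVo hzV
      obtain ⟨i, hi, hgi⟩ := hginf ε hε (s.sup id + 1)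
      refine ⟨prepend i z, ⟨hVU (hs _ fun k hk => ?_), ?_⟩, ?_⟩
      · have h1 : k ≤ s.sup id := Finset.le_sup (f := id) hk
        have h2 : k < i := by omega
        simp [prepend, h2]
      · refine cb_mono (subset_union_of_subset_right (subset_iUnion A i) {z}) ε ?_
        refine image_cb_subset (continuous_prepend i) (prepend_injective i).injOn ε ?_
        refine ⟨z, ?_, rfl⟩
        rw [← hgi, hcb]
        rfl
      · intro h
        have := congrFun h i
        simp [prepend] at this

end CantorSets

/-! ### Two-sided sequences and their markers -/

section Symbolic

open Topology

universe u

/-- The shift of a two-sided sequence by `j`. -/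
def sh (j : ℤ) (x : ℤ → Bool) : ℤ → Bool := fun i => x (i + j)

/-- Reading a two-sided sequence along an index map `τ`. -/
def pull {I : Type*} (τ : I → ℤ) (x : ℤ → Bool) : I → Bool := fun i => x (τ i)

lemma sh_sh (i j : ℤ) (x : ℤ → Bool) : sh i (sh j x) = sh (i + j) x := by
  funext p
  simp [sh, add_assoc]

lemma continuous_sh (j : ℤ) : Continuous (sh j) :=
  continuous_pi fun _ => continuous_apply _

lemma continuous_pull {I : Type*} (τ : I → ℤ) : Continuous (pull τ) :=
  continuous_pi fun _ => continuous_apply _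

lemma ConvTo.pull {I ι : Type*} {A : ι → Set (ℤ → Bool)} {B : Set (ℤ → Bool)} (h : ConvTo A B)
    (τ : I → ℤ) : ConvTo (fun j => pull τ '' A j) (pull τ '' B) := by
  classical
  intro s
  refine (h (s.image τ)).subset fun j hj hcon => hj ?_
  rintro _ ⟨a, ha, rfl⟩
  obtain ⟨b, hb, hab⟩ := hcon a ha
  exact ⟨_, ⟨b, hb, rfl⟩, fun i hi => hab _ (Finset.mem_image_of_mem τ hi)⟩

lemma exists_window (s : Finset ℤ) : ∃ M : ℤ, 0 ≤ M ∧ ∀ i ∈ s, -M ≤ i ∧ i ≤ M := by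
  refine ⟨(s.sup Int.natAbs : ℕ), by positivity, fun i hi => ?_⟩
  have : i.natAbs ≤ s.sup Int.natAbs := Finset.le_sup hi
  omega

/-- To prove convergence of a family indexed by `ℤ` it suffices to treat large indices, for
windows of the form `[-M, M]`. -/
lemma convTo_int {A : ℤ → Set (ℤ → Bool)} {B : Set (ℤ → Bool)}
    (h : ∀ M : ℤ, 0 ≤ M → ∃ N : ℤ, ∀ j, (j < -N ∨ N < j) → ∀ a ∈ A j, ∃ b ∈ B,
      ∀ i, -M ≤ i → i ≤ M → a i = b i) : ConvTo A B := by
  intro s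
  obtain ⟨M, hM0, hM⟩ := exists_window s
  obtain ⟨N, hN⟩ := h M hM0
  refine (finite_Icc (-N) N).subset fun j hj => ?_
  by_contra hcon
  refine hj fun a ha => ?_
  obtain ⟨b, hb, hab⟩ := hN j (by rw [mem_Icc] at hcon; omega) a ha
  exact ⟨b, hb, fun i hi => hab i (hM i hi).1 (hM i hi).2⟩

/-- The `k`-periodic background sequence. -/
def bg (k : ℕ) : ℤ → Bool := fun i => decide ((k : ℤ) ∣ i)

/-- The set of marked sites of `z`: the site `0`, and one site `2 ^ (a + 1)` for the code `a` of
every prefix of `z` which is not identically zero. -/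
def IsMark (z : ℕ → Bool) (q : ℤ) : Prop :=
  q = 0 ∨ ∃ y : List Bool, true ∈ y ∧ q = 2 ^ (Encodable.encode y + 1) ∧
    ∀ t (h : t < y.length), y[t] = z t

open Classical in
/-- The background sequence with the symbols at the marked sites of `z` erased. -/
def wd (k : ℕ) (z : ℕ → Bool) : ℤ → Bool := fun i => decide ((k : ℤ) ∣ i ∧ ¬ IsMark z (i / k))

/-- The zero sequence, whose only mark is at the site `0`. -/
def zz : ℕ → Bool := fun _ => false

/-- The periodic orbit of the background sequence. -/
def orbO (k : ℕ) : Set (ℤ → Bool) := range fun j => sh j (bg k)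

/-- The periodic orbit together with the orbit of the background with one erased symbol. -/
def orbS (k : ℕ) : Set (ℤ → Bool) := orbO k ∪ ⋃ j, {sh j (wd k zz)}

/-- The subshift generated by the marked sequences `wd k z`, `z ∈ C`. -/
def orbW (k : ℕ) (C : Set (ℕ → Bool)) : Set (ℤ → Bool) :=
  orbS k ∪ ⋃ j, (fun z => sh j (wd k z)) '' C

/-- A sequence passing from period `m` on the left to period `n` on the right. -/
def conn (m n : ℕ) : ℤ → Bool := fun i => if i < 0 then bg m i else bg n i

/-- The closed orbit of `conn m n`. -/
def orbU (m n : ℕ) : Set (ℤ → Bool) := (orbO m ∪ orbO n) ∪ ⋃ j, {sh j (conn m n)}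

lemma wd_eq_bg {k : ℕ} {z : ℕ → Bool} {i : ℤ} (h : ¬ IsMark z (i / k)) : wd k z i = bg k i := by
  simp [wd, bg, h]

lemma wd_mul {k : ℕ} (hk : 0 < k) (z : ℕ → Bool) (q : ℤ) :
    wd k z (k * q) = true ↔ ¬ IsMark z q := by
  have : (k : ℤ) ≠ 0 := by exact_mod_cast hk.ne'
  simp [wd, Int.mul_ediv_cancel_left _ this]

lemma isMark_zz {q : ℤ} : IsMark zz q ↔ q = 0 := by
  refine ⟨?_, Or.inl⟩
  rintro (h | ⟨y, hy, -, h⟩)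
  · exact h
  · obtain ⟨t, ht, hty⟩ := List.getElem_of_mem hy
    simp [h t ht, zz] at hty

lemma IsMark.nonneg {z : ℕ → Bool} {q : ℤ} (h : IsMark z q) : 0 ≤ q := by
  rcases h with rfl | ⟨y, -, rfl, -⟩
  · rfl
  · positivity

lemma IsMark.even {z : ℕ → Bool} {q : ℤ} (h : IsMark z q) : (2 : ℤ) ∣ q := by
  rcases h with rfl | ⟨y, -, rfl, -⟩
  · exact dvd_zero _
  · exact dvd_pow_self _ (Nat.succ_ne_zero _)

/-- Marks are sparse: each is at least twice the previous one. -/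
lemma IsMark.two_mul_le {z : ℕ → Bool} {q q' : ℤ} (h : IsMark z q) (h' : IsMark z q')
    (hlt : q < q') : 2 * q ≤ q' := by
  rcases h with rfl | ⟨y, -, rfl, -⟩
  · simpa using h'.nonneg
  rcases h' with rfl | ⟨y', -, rfl, -⟩
  · have : (0 : ℤ) < 2 ^ (Encodable.encode y + 1) := by positivity
    omega
  · have h1 := (pow_lt_pow_iff_right₀ (by norm_num : (1 : ℤ) < 2)).1 hlt
    calc (2 : ℤ) * 2 ^ (Encodable.encode y + 1) = 2 ^ (Encodable.encode y + 1 + 1) := by ring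
      _ ≤ _ := pow_le_pow_right₀ (by norm_num) h1

lemma encode_eq_of_pow_eq {y y' : List Bool}
    (h : (2 : ℤ) ^ (Encodable.encode y + 1) = 2 ^ (Encodable.encode y' + 1)) : y = y' := by
  have h1 := (pow_right_inj₀ (by norm_num : (0 : ℤ) < 2) (by norm_num)).1 h
  exact Encodable.encode_injective (by omega)

/-- Whether a site is marked depends on finitely many coordinates. -/
lemma exists_isMark_congr (q : ℤ) : ∃ L : ℕ, ∀ z z' : ℕ → Bool, (∀ t < L, z t = z' t) →
    IsMark z q → IsMark z' q := by
  by_cases h : ∃ y : List Bool, q = 2 ^ (Encodable.encode y + 1)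
  · obtain ⟨y, hy⟩ := h
    refine ⟨y.length, fun z z' hz => ?_⟩
    rintro (h0 | ⟨y', hy', hq, h⟩)
    · exact Or.inl h0
    · obtain rfl := encode_eq_of_pow_eq (hy.symm.trans hq)
      exact Or.inr ⟨y, hy', hq, fun t ht => (h t ht).trans (hz t ht)⟩
  · refine ⟨0, fun z z' _ => ?_⟩
    rintro (h0 | ⟨y', hy', hq, -⟩)
    · exact Or.inl h0
    · exact absurd ⟨y', hq⟩ h

lemma continuous_wd (k : ℕ) : Continuous (wd k) := by
  refine continuous_pi fun i => ?_
  obtain ⟨L, hL⟩ := exists_isMark_congr (i / k)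
  refine IsLocallyConstant.continuous ((IsLocallyConstant.iff_exists_open _).2 fun z =>
    ⟨_, isOpen_cylinder (Finset.range L) z, fun _ _ => rfl, fun z' hz' => ?_⟩)
  have h : ∀ t < L, z' t = z t := fun t ht => hz' t (Finset.mem_range.2 ht)
  have : IsMark z' (i / k) ↔ IsMark z (i / k) := ⟨hL _ _ h, hL _ _ fun t ht => (h t ht).symm⟩
  simp only [wd, decide_eq_decide, this]

lemma exists_isMark_ge {z : ℕ → Bool} {t : ℕ} (hz : z t = true) (N : ℕ) :
    ∃ y : List Bool, N ≤ Encodable.encode y ∧ true ∈ y ∧ t < y.length ∧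
      ∀ t (h : t < y.length), y[t] = z t := by
  let f : ℕ → List Bool := fun l => (List.range l).map z
  have hf : Function.Injective f := fun a b hab => by
    simpa [f] using congrArg List.length hab
  have hinf : (f '' Ioi t).Infinite := (Ioi_infinite t).image hf.injOn
  have hinf2 : (Encodable.encode '' (f '' Ioi t)).Infinite :=
    hinf.image Encodable.encode_injective.injOn
  obtain ⟨_, ⟨_, ⟨l, hl, rfl⟩, rfl⟩, hN⟩ := hinf2.exists_gt N
  refine ⟨f l, hN.le, ?_, by simpa [f] using hl, by simp [f]⟩
  exact List.mem_map.2 ⟨t, List.mem_range.2 hl, hz⟩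

/-- Distinct `z` produce sequences which differ arbitrarily far to the right. -/
lemma exists_wd_ne {k : ℕ} (hk : 0 < k) {z z' : ℕ → Bool} (h : z ≠ z') (j : ℤ) :
    ∃ i, j ≤ i ∧ wd k z i ≠ wd k z' i := by
  obtain ⟨t, ht⟩ := Function.ne_iff.1 h
  wlog hzt : z t = true generalizing z z'
  · obtain ⟨i, hi, hne⟩ := this h.symm ht.symm (by
      cases h1 : z t <;> cases h2 : z' t <;> simp_all)
    exact ⟨i, hi, hne.symm⟩
  obtain ⟨y, hN, hy, hty, hyz⟩ := exists_isMark_ge hzt j.toNat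
  refine ⟨k * 2 ^ (Encodable.encode y + 1), ?_, ?_⟩
  · have h1 : j.toNat < 2 ^ (Encodable.encode y + 1) :=
      (hN.trans (Nat.le_succ _)).trans_lt Nat.lt_two_pow_self
    have h2 : (j.toNat : ℤ) < 2 ^ (Encodable.encode y + 1) := by exact_mod_cast h1
    have h3 : (1 : ℤ) ≤ k := by exact_mod_cast hk
    have h4 := j.self_le_toNat
    nlinarith
  · have h1 : IsMark z (2 ^ (Encodable.encode y + 1)) := Or.inr ⟨y, hy, rfl, hyz⟩
    have h2 : ¬ IsMark z' (2 ^ (Encodable.encode y + 1)) := by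
      rintro (h0 | ⟨y', -, hq, h'⟩)
      · exact absurd h0 (by positivity)
      · obtain rfl := encode_eq_of_pow_eq hq
        exact ht ((hyz t hty).symm.trans (h' t hty))
    intro hcon
    have h3 := (wd_mul hk z' _).2 h2
    rw [← hcon, wd_mul hk] at h3
    exact h3 h1

/-! ### The subshifts and their derivatives -/

lemma finite_orbO {k : ℕ} (hk : 0 < k) : (orbO k).Finite := by
  refine ((finite_Ico (0 : ℤ) k).image fun j => sh j (bg k)).subset ?_
  have hk' : (0 : ℤ) < k := by exact_mod_cast hk
  rintro _ ⟨j, rfl⟩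
  refine ⟨j % k, ⟨Int.emod_nonneg _ hk'.ne', Int.emod_lt_of_pos _ hk'⟩, ?_⟩
  funext i
  simp only [sh, bg, decide_eq_decide]
  have h3 := Int.dvd_self_sub_emod (x := j) (m := k)
  rw [show i + j = (i + j % k) + (j - j % k) by ring]
  exact (dvd_add_left h3).symm

/-- The index map covers all natural numbers. -/
def Covers {I : Type*} (τ : I → ℤ) : Prop := ∀ i : ℤ, 0 ≤ i → ∃ p, τ p = i

lemma ncard_pull_orbO {k : ℕ} (hk : 0 < k) {I : Type*} {τ : I → ℤ} (hτ : Covers τ) :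
    (pull τ '' orbO k).ncard = k := by
  have hk' : (0 : ℤ) < k := by exact_mod_cast hk
  have h1 : pull τ '' orbO k = (fun j : ℕ => pull τ (sh j (bg k))) '' Iio k := by
    apply subset_antisymm
    · rintro _ ⟨_, ⟨j, rfl⟩, rfl⟩
      have h0 := Int.emod_nonneg j hk'.ne'
      have h2 := Int.emod_lt_of_pos j hk'
      refine ⟨(j % k).toNat, by rw [mem_Iio]; omega, ?_⟩
      funext i
      simp only [pull, sh, bg, decide_eq_decide, Int.toNat_of_nonneg h0]
      have h3 := Int.dvd_self_sub_emod (x := j) (m := k)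
      rw [show τ i + j = (τ i + j % k) + (j - j % k) by ring]
      exact (dvd_add_left h3).symm
    · rintro _ ⟨j, -, rfl⟩
      exact ⟨_, ⟨j, rfl⟩, rfl⟩
  rw [h1, InjOn.ncard_image]
  · simp [← Nat.card_coe_set_eq]
  · have key : ∀ a b : ℕ, a < k → b < k → pull τ (sh a (bg k)) = pull τ (sh b (bg k)) →
        a < b → False := by
      intro a b ha hb hab hlt
      obtain ⟨p, hp⟩ := hτ (k - a) (by omega)
      have := congrFun hab p
      simp only [pull, sh, bg, hp, decide_eq_decide] at this
      have h2 : (k : ℤ) ∣ k - a + b := this.1 (by simp)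
      have h3 : (k : ℤ) ∣ (b : ℤ) - a := by
        have := Int.dvd_sub h2 (dvd_refl (k : ℤ))
        convert this using 1
        ring
      have := Int.le_of_dvd (by omega) h3
      omega
    intro a ha b hb hab
    rcases lt_trichotomy a b with h | h | h
    · exact (key a b ha hb hab h).elim
    · exact h
    · exact (key b a hb ha hab.symm h).elim

lemma convTo_wd {k : ℕ} (hk : 0 < k) (C : Set (ℕ → Bool)) :
    ConvTo (fun j => (fun z => sh j (wd k z)) '' C) (orbS k) := by
  have hk' : (0 : ℤ) < k := by exact_mod_cast hk
  refine convTo_int fun M hM => ⟨3 * M, fun j hj => ?_⟩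
  rintro _ ⟨z, -, rfl⟩
  -- a window far from the origin sees at most one mark
  by_cases hex : ∃ i, -M ≤ i ∧ i ≤ M ∧ (k : ℤ) ∣ (i + j) ∧ IsMark z ((i + j) / k)
  · obtain ⟨i, hi1, hi2, ⟨q, hq⟩, hm⟩ := hex
    refine ⟨sh (-i) (wd k zz), Or.inr (mem_iUnion.2 ⟨-i, rfl⟩), fun p hp1 hp2 => ?_⟩
    have hq' : (i + j) / k = q := by rw [hq]; exact Int.mul_ediv_cancel_left _ hk'.ne'
    rw [hq'] at hm
    simp only [sh, wd, decide_eq_decide, isMark_zz]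
    have hdvd : (k : ℤ) ∣ p + j ↔ (k : ℤ) ∣ p + -i := by
      rw [show p + j = (p + -i) + (i + j) by ring]
      exact dvd_add_left ⟨q, hq⟩
    rw [hdvd]
    refine and_congr_right fun hd => not_congr ?_
    obtain ⟨r, hr⟩ := hdvd.2 hd
    obtain ⟨t, ht⟩ := hd
    have hr' : (p + j) / k = r := by rw [hr]; exact Int.mul_ediv_cancel_left _ hk'.ne'
    have ht' : (p + -i) / k = t := by rw [ht]; exact Int.mul_ediv_cancel_left _ hk'.ne'
    rw [hr', ht']
    have hrt : r = q + t := by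
      have : (k : ℤ) * r = k * (q + t) := by rw [mul_add, ← hq, ← ht, ← hr]; ring
      exact mul_left_cancel₀ hk'.ne' this
    constructor
    · intro hmr
      by_contra ht0
      have hnn := hm.nonneg
      have hnr := hmr.nonneg
      rcases lt_or_gt_of_ne ht0 with h | h
      · have := hmr.two_mul_le hm (by omega)
        have : (k : ℤ) * (2 * r) ≤ k * q := mul_le_mul_of_nonneg_left this hk'.le
        have h3 : (0 : ℤ) ≤ k * r := by positivity
        have h4 : (0 : ℤ) ≤ k * q := by positivity
        have h5 : (k : ℤ) * t < 0 := mul_neg_of_pos_of_neg hk' h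
        have h6 : (k : ℤ) * (2 * r) = 2 * (k * r) := by ring
        omega
      · have := hm.two_mul_le hmr (by omega)
        have : (k : ℤ) * (2 * q) ≤ k * r := mul_le_mul_of_nonneg_left this hk'.le
        have h3 : (0 : ℤ) ≤ k * r := by positivity
        have h4 : (0 : ℤ) ≤ k * q := by positivity
        have h5 : 0 < (k : ℤ) * t := mul_pos hk' h
        have h6 : (k : ℤ) * (2 * q) = 2 * (k * q) := by ring
        omega
    · rintro rfl
      rw [hrt, add_zero]
      exact hm
  · refine ⟨sh j (bg k), Or.inl ⟨j, rfl⟩, fun p hp1 hp2 => ?_⟩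
    simp only [sh, wd, bg, decide_eq_decide, and_iff_left_iff_imp]
    exact fun hd hm => hex ⟨p, hp1, hp2, hd, hm⟩

lemma wd_zz_eq {k : ℕ} (hk : 0 < k) {i : ℤ} (hi : i ≠ 0) : wd k zz i = bg k i := by
  have hk' : (0 : ℤ) < k := by exact_mod_cast hk
  simp only [wd, bg, decide_eq_decide, and_iff_left_iff_imp, isMark_zz]
  rintro ⟨q, rfl⟩ h
  rw [Int.mul_ediv_cancel_left _ hk'.ne'] at h
  simp [h] at hi

lemma wd_zero (k : ℕ) (z : ℕ → Bool) : wd k z 0 = false := by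
  simp [wd, IsMark]

lemma convTo_wd_zz {k : ℕ} (hk : 0 < k) :
    ConvTo (fun j => {sh j (wd k zz)}) (orbO k) := by
  refine convTo_int fun M hM => ⟨M, fun j hj => ?_⟩
  rintro _ rfl
  refine ⟨sh j (bg k), ⟨j, rfl⟩, fun p hp1 hp2 => wd_zz_eq hk (by omega)⟩

lemma convTo_conn (m n : ℕ) :
    ConvTo (fun j => {sh j (conn m n)}) (orbO m ∪ orbO n) := by
  refine convTo_int fun M hM => ⟨M, fun j hj => ?_⟩
  rintro _ rfl
  rcases hj with hj | hj
  · refine ⟨sh j (bg m), Or.inl ⟨j, rfl⟩, fun p hp1 hp2 => ?_⟩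
    simp [sh, conn, show p + j < 0 by omega]
  · refine ⟨sh j (bg n), Or.inr ⟨j, rfl⟩, fun p hp1 hp2 => ?_⟩
    simp [sh, conn, show ¬ p + j < 0 by omega]

lemma isClosed_orbS {k : ℕ} (hk : 0 < k) : IsClosed (orbS k) :=
  isClosed_union_iUnion (finite_orbO hk).isClosed (fun _ => isClosed_singleton)
    ((convTo_wd_zz hk).locallyFinite (finite_orbO hk).isClosed)

lemma isClosed_orbU {m n : ℕ} (hm : 0 < m) (hn : 0 < n) : IsClosed (orbU m n) :=
  isClosed_union_iUnion ((finite_orbO hm).union (finite_orbO hn)).isClosed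
    (fun _ => isClosed_singleton)
    ((convTo_conn m n).locallyFinite ((finite_orbO hm).union (finite_orbO hn)).isClosed)

lemma isCompact_image_wd (k : ℕ) {C : Set (ℕ → Bool)} (hC : IsClosed C) (j : ℤ) :
    IsCompact ((fun z => sh j (wd k z)) '' C) :=
  hC.isCompact.image ((continuous_sh j).comp (continuous_wd k))

lemma isClosed_orbW {k : ℕ} (hk : 0 < k) {C : Set (ℕ → Bool)} (hC : IsClosed C) :
    IsClosed (orbW k C) :=
  isClosed_union_iUnion (isClosed_orbS hk) (fun j => (isCompact_image_wd k hC j).isClosed)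
    ((convTo_wd hk C).locallyFinite (isClosed_orbS hk))

lemma isClosed_pull_image {I : Type*} (τ : I → ℤ) {A : Set (ℤ → Bool)} (hA : IsClosed A) :
    IsClosed (pull τ '' A) :=
  (hA.isCompact.image (continuous_pull τ)).isClosed

lemma derivedSet_pull_orbS {k : ℕ} (hk : 0 < k) {I : Type*} (τ : I → ℤ) :
    derivedSet (pull τ '' orbS k) ⊆ pull τ '' orbO k := by
  have hcl := isClosed_pull_image τ (finite_orbO hk).isClosed
  rw [orbS, image_union, image_iUnion]
  exact derivedSet_union_iUnion_subset hcl (fun j => (finite_singleton _).image _)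
    (((convTo_wd_zz hk).pull τ).locallyFinite hcl)

lemma cb_pull_orbU {m n : ℕ} (hm : 0 < m) (hn : 0 < n) {I : Type*} (τ : I → ℤ)
    {δ : Ordinal.{u}} (hδ : 2 ≤ δ) : cb (pull τ '' orbU m n) δ = ∅ := by
  have hfin := (finite_orbO hm).union (finite_orbO hn)
  have hcl := isClosed_pull_image τ hfin.isClosed
  have h1 : derivedSet (pull τ '' orbU m n) ⊆ pull τ '' (orbO m ∪ orbO n) := by
    rw [orbU, image_union, image_iUnion]
    exact derivedSet_union_iUnion_subset hcl (fun j => (finite_singleton _).image _)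
      (((convTo_conn m n).pull τ).locallyFinite hcl)
  rw [← subset_empty_iff]
  refine (cb_anti _ hδ).trans ?_
  rw [← one_add_one_eq_two]
  refine (cb_add_one_subset _ _).trans ?_
  rw [← derivedSet_finite (hfin.image (pull τ))]
  refine derivedSet_mono _ _ (subset_trans ?_ h1)
  have := cb_add_one_subset (pull τ '' orbU m n) (0 : Ordinal.{u})
  rwa [zero_add, cb_zero] at this

lemma pull_orbW_eq (k : ℕ) (C : Set (ℕ → Bool)) {I : Type*} (τ : I → ℤ) :
    pull τ '' orbW k C =
      pull τ '' orbS k ∪ ⋃ j, pull τ '' ((fun z => sh j (wd k z)) '' C) := by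
  rw [orbW, image_union, image_iUnion]

/-- The rank of the marked subshift read along an index map that sees the right half-line. -/
theorem cb_pull_orbW {k : ℕ} (hk : 0 < k) {C : Set (ℕ → Bool)} (hC : IsClosed C)
    {γ : Ordinal.{u}} (hcb : cb C γ = {zz}) {I : Type*} {τ : I → ℤ} (hτ : Covers τ) :
    cb (pull τ '' orbW k C) (γ + 1) = pull τ '' orbO k := by
  have hk' : (0 : ℤ) < k := by exact_mod_cast hk
  have hcl := isClosed_pull_image τ (isClosed_orbS hk)
  have hcont : ∀ j, Continuous fun z => pull τ (sh j (wd k z)) := fun j =>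
    (continuous_pull τ).comp ((continuous_sh j).comp (continuous_wd k))
  have hinj : ∀ j, Function.Injective fun z => pull τ (sh j (wd k z)) := by
    intro j z z' h
    by_contra hne
    obtain ⟨i, hi, hne'⟩ := exists_wd_ne hk hne j
    obtain ⟨p, hp⟩ := hτ (i - j) (by omega)
    have := congrFun h p
    simp only [pull, sh, hp, sub_add_cancel] at this
    exact hne' this
  apply subset_antisymm
  · refine (cb_add_one_subset _ _).trans (subset_trans (derivedSet_mono _ _ ?_)
      (derivedSet_pull_orbS hk τ))
    rw [pull_orbW_eq]
    refine (cb_union_iUnion_subset hcl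
      (fun j => isClosed_pull_image τ (isCompact_image_wd k hC j).isClosed)
      (((convTo_wd hk C).pull τ).locallyFinite hcl) γ).trans ?_
    refine union_subset subset_rfl (iUnion_subset fun j => ?_)
    rw [image_image]
    refine (cb_image_subset hC.isCompact (hcont j).continuousOn (hinj j).injOn γ).trans ?_
    rw [hcb, image_singleton, singleton_subset_iff]
    exact ⟨_, Or.inr (mem_iUnion.2 ⟨j, rfl⟩), rfl⟩
  · rintro _ ⟨_, ⟨i, rfl⟩, rfl⟩
    refine mem_cb_add_one ⟨_, Or.inl (Or.inl ⟨i, rfl⟩), rfl⟩ ?_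
    have hmem : ∀ j, pull τ (sh j (wd k zz)) ∈ cb (pull τ '' orbW k C) γ := by
      intro j
      have h1 : pull τ (sh j (wd k zz)) ∈ (fun z => pull τ (sh j (wd k z))) '' cb C γ :=
        ⟨zz, by rw [hcb]; rfl, rfl⟩
      refine cb_mono ?_ γ (image_cb_subset (hcont j) (hinj j).injOn γ h1)
      rw [pull_orbW_eq]
      refine subset_union_of_subset_right (subset_iUnion_of_subset j ?_) _
      rw [image_image]
    rw [mem_derivedSet, accPt_iff_nhds]
    intro U hU
    obtain ⟨V, hVU, hVo, hxV⟩ := mem_nhds_iff.1 hU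
    obtain ⟨s, hs⟩ := exists_cylinder_subset hVo hxV
    classical
    obtain ⟨M, hM0, hM⟩ := exists_window (s.image τ)
    -- move the erased symbol of `sh (i - k * l) (wd k zz)` out of the window
    obtain ⟨l, hl⟩ : ∃ l : ℤ, M + |i| < k * l := ⟨M + |i| + 1, by nlinarith [abs_nonneg i]⟩
    have hi1 := le_abs_self i
    refine ⟨pull τ (sh (i - k * l) (wd k zz)), ⟨hVU (hs _ fun p hp => ?_), hmem _⟩, ?_⟩
    · have := hM _ (Finset.mem_image_of_mem τ hp)
      simp only [pull, sh]
      rw [wd_zz_eq hk (by omega)]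
      simp only [bg, decide_eq_decide]
      rw [← add_sub_assoc]
      exact dvd_sub_left (dvd_mul_right _ _)
    · intro h
      obtain ⟨p, hp⟩ := hτ (k * l - i) (by omega)
      have := congrFun h p
      simp only [pull, sh, hp, sub_add_cancel] at this
      rw [show k * l - i + (i - k * l) = 0 by ring, wd_zero] at this
      simp [bg] at this

lemma finite_of_eq_off {I : Type*} (s : Finset I) (h : I → Bool) :
    {f : I → Bool | ∀ i ∉ s, f i = h i}.Finite := by
  refine Set.Finite.of_finite_image (f := fun f (i : s) => f i) (toFinite _) ?_
  intro f hf f' hf' hff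
  funext i
  by_cases hi : i ∈ s
  · exact congrFun hff ⟨i, hi⟩
  · rw [hf i hi, hf' i hi]

/-- Read along the left half-line the marks are invisible up to finitely many choices, and the
rank of the marked subshift drops to at most two. -/
theorem cb_pull_neg_orbW {k : ℕ} (hk : 0 < k) {C : Set (ℕ → Bool)}
    {δ : Ordinal.{u}} (hδ : 3 ≤ δ) :
    cb (pull (fun i : ℕ => -(i : ℤ)) '' orbW k C) δ = ∅ := by
  have hk' : (0 : ℤ) < k := by exact_mod_cast hk
  set τ := fun i : ℕ => -(i : ℤ)
  have hcl := isClosed_pull_image τ (isClosed_orbS hk)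
  have hfin : ∀ j, (pull τ '' ((fun z => sh j (wd k z)) '' C)).Finite := by
    intro j
    refine (finite_of_eq_off (Finset.range (j.toNat + 1)) fun i => bg k (-(i : ℤ) + j)).subset ?_
    rintro _ ⟨_, ⟨z, -, rfl⟩, rfl⟩ i hi
    refine wd_eq_bg fun hm => ?_
    have h1 := hm.nonneg
    rw [Finset.mem_range] at hi
    have h2 := Int.ediv_neg_of_neg_of_pos (a := -(i : ℤ) + j) (by omega) hk'
    exact absurd h1 (not_le.2 h2)
  have h1 : derivedSet (pull τ '' orbW k C) ⊆ pull τ '' orbS k := by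
    rw [pull_orbW_eq]
    exact derivedSet_union_iUnion_subset hcl hfin (((convTo_wd hk C).pull τ).locallyFinite hcl)
  have e1 : cb (pull τ '' orbW k C) (1 : Ordinal.{u}) ⊆ pull τ '' orbS k := by
    have := cb_add_one_subset (pull τ '' orbW k C) (0 : Ordinal.{u})
    rw [zero_add, cb_zero] at this
    exact this.trans h1
  have e2 : cb (pull τ '' orbW k C) (1 + 1 : Ordinal.{u}) ⊆ pull τ '' orbO k :=
    ((cb_add_one_subset _ _).trans (derivedSet_mono _ _ e1)).trans (derivedSet_pull_orbS hk τ)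
  rw [← subset_empty_iff]
  refine (cb_anti _ hδ).trans ?_
  rw [← two_add_one_eq_three, ← one_add_one_eq_two]
  refine (cb_add_one_subset _ _).trans ?_
  rw [← derivedSet_finite ((finite_orbO hk).image (pull τ))]
  exact derivedSet_mono _ _ e2

end Symbolic

/-! ### The two-sided system and its ranks -/

section System

open Topology

universe u

/-- The two-sided subshift: its left halves carry the rank of `D`, its right halves the rank
of `C`, and the connecting orbits make it chain transitive. -/
def sysX (m n : ℕ) (D C : Set (ℕ → Bool)) : Set (ℤ → Bool) :=
  (pull (fun i => -i) '' orbW m D ∪ orbW n C) ∪ (orbU m n ∪ orbU n m)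

lemma isClosed_sysX {m n : ℕ} (hm : 0 < m) (hn : 0 < n) {D C : Set (ℕ → Bool)}
    (hD : IsClosed D) (hC : IsClosed C) : IsClosed (sysX m n D C) :=
  ((isClosed_pull_image _ (isClosed_orbW hm hD)).union (isClosed_orbW hn hC)).union
    ((isClosed_orbU hm hn).union (isClosed_orbU hn hm))

lemma sh_mem_orbO {k : ℕ} {x : ℤ → Bool} (hx : x ∈ orbO k) (j : ℤ) : sh j x ∈ orbO k := by
  obtain ⟨i, rfl⟩ := hx
  exact ⟨j + i, (sh_sh _ _ _).symm⟩

lemma sh_mem_orbW {k : ℕ} {C : Set (ℕ → Bool)} {x : ℤ → Bool} (hx : x ∈ orbW k C) (j : ℤ) :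
    sh j x ∈ orbW k C := by
  rcases hx with (hx | hx) | hx
  · exact Or.inl (Or.inl (sh_mem_orbO hx j))
  · obtain ⟨i, rfl⟩ := mem_iUnion.1 hx
    exact Or.inl (Or.inr (mem_iUnion.2 ⟨j + i, sh_sh _ _ _⟩))
  · obtain ⟨i, z, hz, rfl⟩ := mem_iUnion.1 hx
    exact Or.inr (mem_iUnion.2 ⟨j + i, z, hz, (sh_sh _ _ _).symm⟩)

lemma sh_mem_orbU {m n : ℕ} {x : ℤ → Bool} (hx : x ∈ orbU m n) (j : ℤ) : sh j x ∈ orbU m n := by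
  rcases hx with (hx | hx) | hx
  · exact Or.inl (Or.inl (sh_mem_orbO hx j))
  · exact Or.inl (Or.inr (sh_mem_orbO hx j))
  · obtain ⟨i, rfl⟩ := mem_iUnion.1 hx
    exact Or.inr (mem_iUnion.2 ⟨j + i, sh_sh _ _ _⟩)

lemma sh_pull_neg (j : ℤ) (x : ℤ → Bool) :
    sh j (pull (fun i => -i) x) = pull (fun i => -i) (sh (-j) x) := by
  funext i
  simp only [sh, pull]
  congr 1
  ring

lemma sh_mem_sysX {m n : ℕ} {D C : Set (ℕ → Bool)} {x : ℤ → Bool} (hx : x ∈ sysX m n D C)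
    (j : ℤ) : sh j x ∈ sysX m n D C := by
  rcases hx with (⟨x, hx, rfl⟩ | hx) | (hx | hx)
  · exact Or.inl (Or.inl ⟨_, sh_mem_orbW hx (-j), (sh_pull_neg j x).symm⟩)
  · exact Or.inl (Or.inr (sh_mem_orbW hx j))
  · exact Or.inr (Or.inl (sh_mem_orbU hx j))
  · exact Or.inr (Or.inr (sh_mem_orbU hx j))

lemma cb_union_four {E : Type*} [TopologicalSpace E] {A B C D : Set E} (hA : IsClosed A)
    (hB : IsClosed B) (hC : IsClosed C) (hD : IsClosed D) (δ : Ordinal.{u}) :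
    cb ((A ∪ B) ∪ (C ∪ D)) δ ⊆ (cb A δ ∪ cb B δ) ∪ (cb C δ ∪ cb D δ) :=
  (cb_union_subset (hA.union hB) (hC.union hD) δ).trans
    (union_subset_union (cb_union_subset hA hB δ) (cb_union_subset hC hD δ))

lemma pull_id_image (A : Set (ℤ → Bool)) : pull (fun i => i) '' A = A := image_id A

/-- The two-sided system has rank `β + 1` with `m` points of maximal rank. -/
theorem ncard_cb_sysX {m n : ℕ} (hm : 0 < m) (hn : 0 < n) {D C : Set (ℕ → Bool)}
    (hD : IsClosed D) (hC : IsClosed C) {α β : Ordinal.{u}} (hα : 2 ≤ α) (hαβ : α < β)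
    (hcD : cb D β = {zz}) (hcC : cb C α = {zz}) :
    (cb (sysX m n D C) (β + 1)).ncard = m := by
  have hcov : Covers fun i : ℤ => -i := fun i _ => ⟨-i, neg_neg i⟩
  have hcov' : Covers fun i : ℤ => i := fun i _ => ⟨i, rfl⟩
  have h2 : (2 : Ordinal.{u}) ≤ β + 1 := (hα.trans hαβ.le).trans le_self_add
  suffices h : cb (sysX m n D C) (β + 1) = pull (fun i => -i) '' orbO m by
    rw [h, ncard_pull_orbO hm hcov]
  apply subset_antisymm
  · refine (cb_union_four (isClosed_pull_image _ (isClosed_orbW hm hD)) (isClosed_orbW hn hC)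
      (isClosed_orbU hm hn) (isClosed_orbU hn hm) _).trans ?_
    have e1 : cb (orbW n C) (β + 1) = ∅ := by
      rw [← subset_empty_iff]
      refine (cb_anti _ (δ := α + 1 + 1) (by gcongr; exact Order.add_one_le_iff.2 hαβ)).trans ?_
      refine (cb_add_one_subset _ _).trans ?_
      have := cb_pull_orbW hn hC hcC hcov'
      rw [pull_id_image, pull_id_image] at this
      rw [this, derivedSet_finite (finite_orbO hn)]
    have e2 := cb_pull_orbU hm hn (fun i => i) h2
    have e3 := cb_pull_orbU hn hm (fun i => i) h2
    rw [pull_id_image] at e2 e3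
    rw [e1, e2, e3, cb_pull_orbW hm hD hcD hcov]
    simp
  · rw [← cb_pull_orbW hm hD hcD hcov]
    exact cb_mono (fun x hx => Or.inl (Or.inl hx)) _

/-- The one-sided system has rank `α + 1` with `n` points of maximal rank. -/
theorem ncard_cb_pull_sysX {m n : ℕ} (hm : 0 < m) (hn : 0 < n) {D C : Set (ℕ → Bool)}
    (hD : IsClosed D) (hC : IsClosed C) {α : Ordinal.{u}} (hα : 2 ≤ α) (hcC : cb C α = {zz}) :
    (cb (pull (fun i : ℕ => (i : ℤ)) '' sysX m n D C) (α + 1)).ncard = n := by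
  set π : (ℤ → Bool) → ℕ → Bool := pull (fun i : ℕ => (i : ℤ)) with hπ
  have hcov : Covers fun i : ℕ => (i : ℤ) := fun i hi => ⟨i.toNat, Int.toNat_of_nonneg hi⟩
  have h2 : (2 : Ordinal.{u}) ≤ α + 1 := hα.trans le_self_add
  have h3 : (3 : Ordinal.{u}) ≤ α + 1 := by
    rw [← two_add_one_eq_three]
    gcongr
  have hcomp : π '' (pull (fun i => -i) '' orbW m D) =
      pull (fun i : ℕ => -(i : ℤ)) '' orbW m D := by
    rw [image_image]
    rfl
  suffices h : cb (π '' sysX m n D C) (α + 1) = π '' orbO n by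
    rw [h, ncard_pull_orbO hn hcov]
  apply subset_antisymm
  · rw [sysX, image_union, image_union, image_union]
    refine (cb_union_four (isClosed_pull_image _ (isClosed_pull_image _ (isClosed_orbW hm hD)))
      (isClosed_pull_image _ (isClosed_orbW hn hC)) (isClosed_pull_image _ (isClosed_orbU hm hn))
      (isClosed_pull_image _ (isClosed_orbU hn hm)) _).trans ?_
    rw [hcomp, cb_pull_neg_orbW hm h3, cb_pull_orbU hm hn _ h2, cb_pull_orbU hn hm _ h2,
      hπ, cb_pull_orbW hn hC hcC hcov]
    simp
  · rw [hπ, ← cb_pull_orbW hn hC hcC hcov]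
    exact cb_mono (image_mono fun x hx => Or.inl (Or.inr hx)) _

/-! ### Tails of points of the system -/

/-- Arbitrarily far to the right `x` looks like the `k`-periodic orbit. -/
def FwdTo (k : ℕ) (x : ℤ → Bool) : Prop :=
  ∀ M N : ℤ, ∃ l, N ≤ l ∧ ∃ b ∈ orbO k, ∀ i, -M ≤ i → i ≤ M → x (i + l) = b i

/-- Arbitrarily far to the left `x` looks like the `k`-periodic orbit. -/
def BwdTo (k : ℕ) (x : ℤ → Bool) : Prop :=
  ∀ M N : ℤ, ∃ l, N ≤ l ∧ ∃ b ∈ orbO k, ∀ i, -M ≤ i → i ≤ M → x (i - l) = b i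

lemma FwdTo.shift {k : ℕ} {x : ℤ → Bool} (h : FwdTo k x) (j : ℤ) : FwdTo k (sh j x) := by
  intro M N
  obtain ⟨l, hl, b, hb, hxb⟩ := h M (N + j)
  refine ⟨l - j, by omega, b, hb, fun i h1 h2 => ?_⟩
  rw [← hxb i h1 h2, sh]
  congr 1
  ring

lemma BwdTo.shift {k : ℕ} {x : ℤ → Bool} (h : BwdTo k x) (j : ℤ) : BwdTo k (sh j x) := by
  intro M N
  obtain ⟨l, hl, b, hb, hxb⟩ := h M (N - j)
  refine ⟨l + j, by omega, b, hb, fun i h1 h2 => ?_⟩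
  rw [← hxb i h1 h2, sh]
  congr 1
  ring

lemma pull_neg_mem_orbO {k : ℕ} {b : ℤ → Bool} (hb : b ∈ orbO k) :
    pull (fun i => -i) b ∈ orbO k := by
  obtain ⟨j, rfl⟩ := hb
  refine ⟨-j, ?_⟩
  funext i
  simp only [pull, sh, bg, decide_eq_decide]
  rw [← dvd_neg]
  ring_nf

lemma FwdTo.pull_neg {k : ℕ} {x : ℤ → Bool} (h : FwdTo k x) :
    BwdTo k (pull (fun i => -i) x) := by
  intro M N
  obtain ⟨l, hl, b, hb, hxb⟩ := h M N
  refine ⟨l, hl, _, pull_neg_mem_orbO hb, fun i h1 h2 => ?_⟩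
  simp only [pull]
  rw [← hxb (-i) (by omega) (by omega)]
  congr 1
  ring

lemma BwdTo.pull_neg {k : ℕ} {x : ℤ → Bool} (h : BwdTo k x) :
    FwdTo k (pull (fun i => -i) x) := by
  intro M N
  obtain ⟨l, hl, b, hb, hxb⟩ := h M N
  refine ⟨l, hl, _, pull_neg_mem_orbO hb, fun i h1 h2 => ?_⟩
  simp only [pull]
  rw [← hxb (-i) (by omega) (by omega)]
  congr 1
  ring

lemma fwdTo_bg (k : ℕ) : FwdTo k (bg k) := fun _ N =>
  ⟨N, le_rfl, _, ⟨N, rfl⟩, fun _ _ _ => rfl⟩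

lemma bwdTo_bg (k : ℕ) : BwdTo k (bg k) := fun _ N =>
  ⟨N, le_rfl, _, ⟨-N, rfl⟩, fun i _ _ => by simp [sh, sub_eq_add_neg]⟩

lemma bwdTo_wd {k : ℕ} (hk : 0 < k) (z : ℕ → Bool) : BwdTo k (wd k z) := by
  have hk' : (0 : ℤ) < k := by exact_mod_cast hk
  intro M N
  refine ⟨max N (M + 1), le_max_left _ _, _, ⟨-max N (M + 1), rfl⟩, fun i h1 h2 => ?_⟩
  have h3 := le_max_right N (M + 1)
  change _ = bg k (i + -max N (M + 1))
  rw [← sub_eq_add_neg]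
  refine wd_eq_bg fun hm => absurd hm.nonneg (not_le.2 ?_)
  exact Int.ediv_neg_of_neg_of_pos (by omega) hk'

lemma fwdTo_wd {k : ℕ} (hk : 0 < k) (z : ℕ → Bool) : FwdTo k (wd k z) := by
  have hk' : (0 : ℤ) < k := by exact_mod_cast hk
  intro M N
  -- centre the window between the possible marks `2 ^ (a + 1)` and `2 ^ (a + 2)`
  obtain ⟨a, ha⟩ : ∃ a : ℕ, max M N < 2 ^ a := by
    refine ⟨(max M N).toNat, (Int.self_le_toNat _).trans_lt ?_⟩
    exact_mod_cast Nat.lt_two_pow_self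
  have hM : M < 2 ^ a := (le_max_left _ _).trans_lt ha
  have hN : N < 2 ^ a := (le_max_right _ _).trans_lt ha
  have hpos : (0 : ℤ) < 2 ^ a := by positivity
  have hle : (2 : ℤ) ^ a ≤ k * 2 ^ a := by nlinarith
  refine ⟨k * (3 * 2 ^ a), by nlinarith, _, ⟨k * (3 * 2 ^ a), rfl⟩, fun i h1 h2 => ?_⟩
  simp only [sh, wd, bg, decide_eq_decide, and_iff_left_iff_imp]
  rintro ⟨q, hq⟩ hm
  rw [hq, Int.mul_ediv_cancel_left _ hk'.ne'] at hm
  have hlo : 2 * 2 ^ a < q := by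
    by_contra hcon
    have : (k : ℤ) * q ≤ k * (2 * 2 ^ a) := mul_le_mul_of_nonneg_left (not_lt.1 hcon) hk'.le
    linarith
  have hhi : q < 4 * 2 ^ a := by
    by_contra hcon
    have : (k : ℤ) * (4 * 2 ^ a) ≤ k * q := mul_le_mul_of_nonneg_left (not_lt.1 hcon) hk'.le
    linarith
  rcases hm with rfl | ⟨y, -, rfl, -⟩
  · linarith
  · have h1 : (2 : ℤ) ^ (a + 1) < 2 ^ (Encodable.encode y + 1) := by rw [pow_succ 2 a]; linarith
    have h2 : (2 : ℤ) ^ (Encodable.encode y + 1) < 2 ^ (a + 2) := by rw [pow_add 2 a 2]; linarith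
    have h3 := (pow_lt_pow_iff_right₀ (by norm_num : (1 : ℤ) < 2)).1 h1
    have h4 := (pow_lt_pow_iff_right₀ (by norm_num : (1 : ℤ) < 2)).1 h2
    omega

lemma bwdTo_conn (m n : ℕ) : BwdTo m (conn m n) := by
  intro M N
  refine ⟨max N (M + 1), le_max_left _ _, _, ⟨-max N (M + 1), rfl⟩, fun i h1 h2 => ?_⟩
  have h3 := le_max_right N (M + 1)
  change _ = bg m (i + -max N (M + 1))
  rw [← sub_eq_add_neg]
  exact if_pos (by omega)

lemma fwdTo_conn (m n : ℕ) : FwdTo n (conn m n) := by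
  intro M N
  refine ⟨max N (M + 1), le_max_left _ _, _, ⟨max N (M + 1), rfl⟩, fun i h1 h2 => ?_⟩
  have h3 := le_max_right N (M + 1)
  exact if_neg (by omega)

lemma tails_orbW {k : ℕ} (hk : 0 < k) {C : Set (ℕ → Bool)} {x : ℤ → Bool} (hx : x ∈ orbW k C) :
    FwdTo k x ∧ BwdTo k x := by
  rcases hx with (⟨j, rfl⟩ | hx) | hx
  · exact ⟨(fwdTo_bg k).shift j, (bwdTo_bg k).shift j⟩
  · obtain ⟨j, rfl⟩ := mem_iUnion.1 hx
    exact ⟨(fwdTo_wd hk _).shift j, (bwdTo_wd hk _).shift j⟩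
  · obtain ⟨j, z, -, rfl⟩ := mem_iUnion.1 hx
    exact ⟨(fwdTo_wd hk _).shift j, (bwdTo_wd hk _).shift j⟩

lemma tails_orbU {m n : ℕ} {x : ℤ → Bool} (hx : x ∈ orbU m n) :
    (FwdTo m x ∨ FwdTo n x) ∧ (BwdTo m x ∨ BwdTo n x) := by
  rcases hx with (⟨j, rfl⟩ | ⟨j, rfl⟩) | hx
  · exact ⟨Or.inl ((fwdTo_bg m).shift j), Or.inl ((bwdTo_bg m).shift j)⟩
  · exact ⟨Or.inr ((fwdTo_bg n).shift j), Or.inr ((bwdTo_bg n).shift j)⟩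
  · obtain ⟨j, rfl⟩ := mem_iUnion.1 hx
    exact ⟨Or.inr ((fwdTo_conn m n).shift j), Or.inl ((bwdTo_conn m n).shift j)⟩

lemma tails_sysX {m n : ℕ} (hm : 0 < m) (hn : 0 < n) {D C : Set (ℕ → Bool)} {x : ℤ → Bool}
    (hx : x ∈ sysX m n D C) : (FwdTo m x ∨ FwdTo n x) ∧ (BwdTo m x ∨ BwdTo n x) := by
  rcases hx with (⟨x, hx, rfl⟩ | hx) | (hx | hx)
  · have := tails_orbW hm hx
    exact ⟨Or.inl this.2.pull_neg, Or.inl this.1.pull_neg⟩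
  · have := tails_orbW hn hx
    exact ⟨Or.inr this.1, Or.inr this.2⟩
  · exact tails_orbU hx
  · have := tails_orbU hx
    exact ⟨this.1.symm, this.2.symm⟩

lemma FwdTo.exists_true {k : ℕ} (hk : 0 < k) {x : ℤ → Bool} (h : FwdTo k x) :
    ∃ i, 0 ≤ i ∧ x i = true := by
  have hk' : (0 : ℤ) < k := by exact_mod_cast hk
  obtain ⟨l, hl, b, ⟨j, rfl⟩, hxb⟩ := h k 0
  have h1 := Int.emod_nonneg (-j) hk'.ne'
  have h2 := Int.emod_lt_of_pos (-j) hk'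
  refine ⟨(-j) % k + l, by omega, ?_⟩
  rw [hxb _ (by omega) (by omega)]
  simp only [sh, bg, decide_eq_true_eq]
  have h3 := Int.dvd_self_sub_emod (x := -j) (m := k)
  generalize (-j) % (k : ℤ) = r at h3
  rw [← dvd_neg, show -(r + j) = -j - r by ring]
  exact h3

lemma exists_true_sysX {m n : ℕ} (hm : 0 < m) (hn : 0 < n) {D C : Set (ℕ → Bool)} {x : ℤ → Bool}
    (hx : x ∈ sysX m n D C) : ∃ i, 0 ≤ i ∧ x i = true := by
  rcases (tails_sysX hm hn hx).1 with h | h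
  · exact h.exists_true hm
  · exact h.exists_true hn

/-! ### Chain transitivity -/

/-- `b` lies in `X` and, on the window `[0, M]`, looks like the shift of `a`. -/
def ChainStep (X : Set (ℤ → Bool)) (M : ℤ) (a b : ℤ → Bool) : Prop :=
  b ∈ X ∧ ∀ i, 0 ≤ i → i ≤ M → a (i + 1) = b i

variable {X : Set (ℤ → Bool)}

lemma chain_sh (hX : ∀ x ∈ X, ∀ j, sh j x ∈ X) (M : ℤ) {x : ℤ → Bool} (hx : x ∈ X) (l : ℕ) :
    Relation.ReflTransGen (ChainStep X M) x (sh l x) := by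
  induction l with
  | zero =>
    have : sh ((0 : ℕ) : ℤ) x = x := by funext i; simp [sh]
    rw [this]
  | succ l ih =>
    refine ih.tail ⟨hX x hx _, fun i _ _ => ?_⟩
    simp only [sh]
    congr 1
    push_cast
    ring

lemma chain_sh' (hX : ∀ x ∈ X, ∀ j, sh j x ∈ X) (M : ℤ) {x : ℤ → Bool} (hx : x ∈ X) {i j : ℤ}
    (hij : i ≤ j) : Relation.ReflTransGen (ChainStep X M) (sh i x) (sh j x) := by
  have := chain_sh hX M (hX x hx i) (j - i).toNat
  rw [sh_sh, Int.toNat_of_nonneg (by omega)] at this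
  simpa using this

lemma sh_zero (x : ℤ → Bool) : sh 0 x = x := by
  funext i
  simp [sh]

lemma chain_orbO (hX : ∀ x ∈ X, ∀ j, sh j x ∈ X) (M : ℤ) {k : ℕ} (hk : 0 < k) (hO : orbO k ⊆ X)
    {b b' : ℤ → Bool} (hb : b ∈ orbO k) (hb' : b' ∈ orbO k) :
    Relation.ReflTransGen (ChainStep X M) b b' := by
  have hk' : (0 : ℤ) < k := by exact_mod_cast hk
  obtain ⟨j, rfl⟩ := hb
  obtain ⟨j', rfl⟩ := hb'
  have h : sh j' (bg k) = sh (j' + k * (|j| + |j'|)) (bg k) := by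
    funext i
    simp only [sh, bg, decide_eq_decide]
    rw [← add_assoc]
    exact (dvd_add_left (dvd_mul_right _ _)).symm
  simp only [h]
  refine chain_sh' hX M (hO ⟨0, sh_zero _⟩) ?_
  have h1 := le_abs_self j
  have h2 := neg_abs_le j'
  nlinarith [abs_nonneg j, abs_nonneg j']

lemma FwdTo.chain (hX : ∀ x ∈ X, ∀ j, sh j x ∈ X) (M : ℤ) {k : ℕ} (hk : 0 < k)
    (hO : orbO k ⊆ X) {x b : ℤ → Bool} (hx : x ∈ X) (h : FwdTo k x) (hb : b ∈ orbO k) :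
    Relation.ReflTransGen (ChainStep X M) x b := by
  obtain ⟨l, hl, b', hb', hxb⟩ := h (max M 0) 1
  have h1 := chain_sh' hX M hx (i := 0) (j := l - 1) (by omega)
  rw [sh_zero] at h1
  refine (h1.tail (c := b') ⟨hO hb', fun i h1 h2 => ?_⟩).trans (chain_orbO hX M hk hO hb' hb)
  rw [← hxb i (by have := le_max_right M 0; omega) (h2.trans (le_max_left _ _)), sh]
  congr 1
  ring

lemma BwdTo.chain (hX : ∀ x ∈ X, ∀ j, sh j x ∈ X) (M : ℤ) {k : ℕ} (hk : 0 < k)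
    (hO : orbO k ⊆ X) {x b : ℤ → Bool} (hx : x ∈ X) (h : BwdTo k x) (hb : b ∈ orbO k) :
    Relation.ReflTransGen (ChainStep X M) b x := by
  obtain ⟨l, hl, b', hb', hxb⟩ := h (max M 0) 1
  have h1 := chain_sh' hX M hx (i := -l) (j := 0) (by omega)
  rw [sh_zero] at h1
  refine ((chain_orbO hX M hk hO hb (sh_mem_orbO hb' (-1))).tail (c := sh (-l) x)
    ⟨hX x hx _, fun i h1 h2 => ?_⟩).trans h1
  have := hxb i (by have := le_max_right M 0; omega) (h2.trans (le_max_left _ _))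
  simpa [sh, ← sub_eq_add_neg] using this.symm

theorem chain_sysX {m n : ℕ} (hm : 0 < m) (hn : 0 < n) {D C : Set (ℕ → Bool)} (M : ℤ)
    {x y : ℤ → Bool} (hx : x ∈ sysX m n D C) (hy : y ∈ sysX m n D C) :
    Relation.ReflTransGen (ChainStep (sysX m n D C) M) x y := by
  have hX : ∀ x ∈ sysX m n D C, ∀ j, sh j x ∈ sysX m n D C := fun x hx j => sh_mem_sysX hx j
  have hOm : orbO m ⊆ sysX m n D C := fun x hx => Or.inr (Or.inl (Or.inl (Or.inl hx)))
  have hOn : orbO n ⊆ sysX m n D C := fun x hx => Or.inr (Or.inl (Or.inl (Or.inr hx)))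
  have hbm : bg m ∈ orbO m := ⟨0, sh_zero _⟩
  have hbn : bg n ∈ orbO n := ⟨0, sh_zero _⟩
  have hu : conn m n ∈ sysX m n D C :=
    Or.inr (Or.inl (Or.inr (mem_iUnion.2 ⟨0, (sh_zero _).symm⟩)))
  have hv : conn n m ∈ sysX m n D C :=
    Or.inr (Or.inr (Or.inr (mem_iUnion.2 ⟨0, (sh_zero _).symm⟩)))
  have h1 : Relation.ReflTransGen (ChainStep (sysX m n D C) M) (bg m) (bg n) :=
    ((bwdTo_conn m n).chain hX M hm hOm hu hbm).trans ((fwdTo_conn m n).chain hX M hn hOn hu hbn)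
  have h2 : Relation.ReflTransGen (ChainStep (sysX m n D C) M) (bg n) (bg m) :=
    ((bwdTo_conn n m).chain hX M hn hOn hv hbn).trans ((fwdTo_conn n m).chain hX M hm hOm hv hbm)
  have h3 : Relation.ReflTransGen (ChainStep (sysX m n D C) M) x (bg m) := by
    rcases (tails_sysX hm hn hx).1 with h | h
    · exact h.chain hX M hm hOm hx hbm
    · exact (h.chain hX M hn hOn hx hbn).trans h2
  rcases (tails_sysX hm hn hy).2 with h | h
  · exact h3.trans (h.chain hX M hm hOm hy hbm)
  · exact (h3.trans h1).trans (h.chain hX M hn hOn hy hbn)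

end System

/-! ### A one-sided sequence with prescribed limit set -/

section PseudoOrbit

open Topology

lemma exists_chain_of_transGen {T : Type*} {R : T → T → Prop} {a b : T}
    (h : Relation.TransGen R a b) :
    ∃ L, 0 < L ∧ ∃ c : ℕ → T, c 0 = a ∧ c L = b ∧ ∀ i < L, R (c i) (c (i + 1)) := by
  induction h with
  | @single b h =>
    refine ⟨1, one_pos, fun i => if i = 0 then a else b, by simp, by simp, fun i hi => ?_⟩
    obtain rfl : i = 0 := by omega
    simpa using h
  | @tail b b' _ hbb ih =>
    obtain ⟨L, hL, c, hc0, hcL, hc⟩ := ih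
    refine ⟨L + 1, by omega, fun i => if i ≤ L then c i else b', by simpa using hc0, by simp,
      fun i hi => ?_⟩
    rcases (Nat.lt_succ_iff.1 hi).lt_or_eq with h | rfl
    · have h1 : i + 1 ≤ L := h
      simpa [h.le, h1] using hc i h
    · simpa [hcL] using hbb

/-- Concatenating chains of increasing precision yields an asymptotic pseudo-orbit through the
points `d k`. -/
lemma exists_pseudo_orbit {T : Type*} (R : ℕ → T → T → Prop) (d : ℕ → T)
    (hc : ∀ k, Relation.TransGen (R k) (d k) (d (k + 1))) :
    ∃ ξ : ℕ → T, (∀ M, ∃ J, ∀ j, J ≤ j → ∃ k, M ≤ k ∧ R k (ξ j) (ξ (j + 1))) ∧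
      ∀ k, ∃ j, k ≤ j ∧ ξ j = d k := by
  choose L hL c hc0 hcL hc using fun k => exists_chain_of_transGen (hc k)
  -- the state `(k, i)` stands for the `i`-th point of the `k`-th chain
  let st : ℕ → ℕ × ℕ := fun j => Nat.rec (0, 0)
    (fun _ p => if p.2 + 1 < L p.1 then (p.1, p.2 + 1) else (p.1 + 1, 0)) j
  have hst : ∀ j, st (j + 1) =
      if (st j).2 + 1 < L (st j).1 then ((st j).1, (st j).2 + 1) else ((st j).1 + 1, 0) :=
    fun _ => rfl
  have hinv : ∀ j, (st j).2 < L (st j).1 := by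
    intro j
    induction j with
    | zero => exact hL 0
    | succ j ih =>
      rw [hst]
      split_ifs with h
      · exact h
      · exact hL _
  have hmono : Monotone fun j => (st j).1 := monotone_nat_of_le_succ fun j => by
    change (st j).1 ≤ (st (j + 1)).1
    rw [hst]
    split_ifs <;> simp
  have hle : ∀ j, (st j).1 ≤ j := by
    intro j
    induction j with
    | zero => exact le_rfl
    | succ j ih =>
      rw [hst]
      split_ifs
      · exact ih.trans (Nat.le_succ j)
      · exact Nat.succ_le_succ ih
  have hreach : ∀ k, ∃ j, st j = (k, 0) := by
    intro k
    induction k with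
    | zero => exact ⟨0, rfl⟩
    | succ k ih =>
      obtain ⟨j, hj⟩ := ih
      have h1 : ∀ i < L k, st (j + i) = (k, i) := by
        intro i
        induction i with
        | zero => intro _; exact hj
        | succ i ih =>
          intro hi
          rw [← add_assoc, hst, ih (by omega)]
          simp [hi]
      have h2 := hL k
      refine ⟨j + (L k - 1) + 1, ?_⟩
      rw [hst, h1 _ (by omega)]
      simp [show ¬ L k - 1 + 1 < L k by omega]
  have hnext : ∀ j, c (st (j + 1)).1 (st (j + 1)).2 = c (st j).1 ((st j).2 + 1) := by
    intro j
    rw [hst]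
    split_ifs with h
    · rfl
    · have := hinv j
      rw [show (st j).2 + 1 = L (st j).1 by omega, hcL]
      exact hc0 _
  refine ⟨fun j => c (st j).1 (st j).2, fun M => ?_, fun k => ?_⟩
  · obtain ⟨J, hJ⟩ := hreach M
    refine ⟨J, fun j hj => ⟨(st j).1, ?_, ?_⟩⟩
    · have := hmono hj
      simpa [hJ] using this
    · simp only [hnext]
      exact hc _ _ (hinv j)
  · obtain ⟨j, hj⟩ := hreach k
    have := hle j
    rw [hj] at this
    exact ⟨j, this, by simp [hj, hc0]⟩

/-- A closed chain transitive shift invariant set is, read to the right, the set of limits of the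
shifts of a single sequence `K`. -/
theorem exists_kneading {X : Set (ℤ → Bool)} (hcl : IsClosed X) (hne : X.Nonempty)
    (hX : ∀ x ∈ X, ∀ j, sh j x ∈ X)
    (hchain : ∀ M : ℤ, ∀ x ∈ X, ∀ y ∈ X, Relation.ReflTransGen (ChainStep X M) x y)
    (htrue : ∀ x ∈ X, ∃ i, 0 ≤ i ∧ x i = true) :
    ∃ K : ℕ → Bool, (∀ x ∈ X, ∀ M n : ℕ, ∃ j, n ≤ j ∧ ∀ i ≤ M, K (j + i) = x (i : ℤ)) ∧
      (∀ M : ℕ, ∃ J, ∀ j, J ≤ j → ∃ x ∈ X, ∀ i ≤ M, K (j + i) = x (i : ℤ)) ∧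
      ∃ N : ℕ, (∀ j, ∃ i < N, K (j + i) = true) ∧ ∀ x ∈ X, ∃ i < N, x ((i : ℕ) : ℤ) = true := by
  have : Nonempty X := hne.to_subtype
  let d : ℕ → ℤ → Bool := fun k => (TopologicalSpace.denseSeq X k.unpair.1 : X)
  have hdX : ∀ k, d k ∈ X := fun k => (TopologicalSpace.denseSeq X k.unpair.1).2
  have hd : ∀ x ∈ X, ∀ s : Finset ℤ, ∀ n, ∃ k, n ≤ k ∧ ∀ i ∈ s, d k i = x i := by
    intro x hx s n
    have hopen : IsOpen {y : X | (y : ℤ → Bool) ∈ {y : ℤ → Bool | ∀ i ∈ s, y i = x i}} :=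
      (isOpen_cylinder s x).preimage continuous_subtype_val
    obtain ⟨a, ha⟩ := (TopologicalSpace.denseRange_denseSeq X).exists_mem_open hopen
      ⟨⟨x, hx⟩, fun _ _ => rfl⟩
    refine ⟨Nat.pair a n, Nat.right_le_pair a n, fun i hi => ?_⟩
    simp only [d, Nat.unpair_pair]
    exact ha i hi
  obtain ⟨ξ, hξ, hξd⟩ := exists_pseudo_orbit (fun k : ℕ => ChainStep X k) d fun k => by
    have h1 : ChainStep X k (d k) (sh 1 (d k)) := ⟨hX _ (hdX k) 1, fun i _ _ => rfl⟩
    exact Relation.TransGen.head' h1 (hchain k _ (hX _ (hdX k) 1) _ (hdX _))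
  -- the precision of the pseudo-orbit eventually exceeds every window
  have hstep : ∀ M : ℕ, ∃ J, ∀ j, J ≤ j → ξ j ∈ X ∧ ∀ i ≤ M, ξ (j + i) 0 = ξ j i := by
    intro M
    obtain ⟨J, hJ⟩ := hξ M
    have key : ∀ i, i ≤ M → ∀ j, J ≤ j → ξ (j + i) 0 = ξ j i := by
      intro i
      induction i with
      | zero => intro _ j _; rfl
      | succ i ih =>
        intro hi j hj
        obtain ⟨k, hk, -, hkk⟩ := hJ j hj
        have h1 := hkk i (by positivity) (by exact_mod_cast (by omega : i ≤ k))
        rw [show j + (i + 1) = (j + 1) + i by ring, ih (by omega) (j + 1) (by omega), ← h1]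
        push_cast
        rfl
    refine ⟨J + 1, fun j hj => ⟨?_, fun i hi => key i hi j (by omega)⟩⟩
    obtain ⟨k, -, hk, -⟩ := hJ (j - 1) (by omega)
    rwa [show j - 1 + 1 = j by omega] at hk
  have hb : ∀ M : ℕ, ∃ J, ∀ j, J ≤ j → ∃ x ∈ X, ∀ i ≤ M, ξ (j + i) 0 = x (i : ℤ) := by
    intro M
    obtain ⟨J, hJ⟩ := hstep M
    exact ⟨J, fun j hj => ⟨ξ j, hJ j hj⟩⟩
  obtain ⟨N, hN⟩ : ∃ N : ℕ, ∀ x ∈ X, ∃ i < N, x ((i : ℕ) : ℤ) = true := by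
    obtain ⟨t, ht⟩ := hcl.isCompact.elim_finite_subcover
      (fun i : ℕ => {x : ℤ → Bool | x (i : ℤ) = true})
      (fun i => (isOpen_discrete ({true} : Set Bool)).preimage
        (continuous_apply (A := fun _ : ℤ => Bool) (i : ℤ)))
      (fun x hx => by
        obtain ⟨i, hi, hxi⟩ := htrue x hx
        refine mem_iUnion.2 ⟨i.toNat, ?_⟩
        simpa [Int.toNat_of_nonneg hi] using hxi)
    refine ⟨t.sup id + 1, fun x hx => ?_⟩
    obtain ⟨i, hi, hxi⟩ := mem_iUnion₂.1 (ht hx)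
    exact ⟨i, Nat.lt_succ_of_le (Finset.le_sup (f := id) hi), hxi⟩
  obtain ⟨J, hJ⟩ := hb N
  refine ⟨fun j => ξ j 0, fun x hx M n => ?_, hb, J + N, fun j => ?_, fun x hx => ?_⟩
  · obtain ⟨J', hJ'⟩ := hstep M
    obtain ⟨k, hk, hkx⟩ := hd x hx (Finset.Icc (0 : ℤ) M) (max n J')
    obtain ⟨j, hj, hjk⟩ := hξd k
    have h1 := le_max_left n J'
    have h2 := le_max_right n J'
    refine ⟨j, by omega, fun i hi => ?_⟩
    refine ((hJ' j (by omega)).2 i hi).trans ?_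
    rw [hjk]
    exact hkx i (Finset.mem_Icc.2 ⟨by positivity, by exact_mod_cast hi⟩)
  · obtain ⟨x, hx, hxK⟩ := hJ (j + J) (by omega)
    obtain ⟨i, hi, hxi⟩ := hN x hx
    refine ⟨J + i, by omega, ?_⟩
    rw [← add_assoc]
    exact (hxK i hi.le).trans hxi
  · obtain ⟨i, hi, hxi⟩ := hN x hx
    exact ⟨i, by omega, hxi⟩

end PseudoOrbit

/-! ### Itineraries of tent maps -/

section Tent

open Topology

/-- The sign of a symbol: `true` codes the decreasing branch, `false` the increasing one. -/
def sgn (b : Bool) : ℝ := if b then 1 else -1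

lemma sgn_mul_self (b : Bool) : sgn b * sgn b = 1 := by cases b <;> simp [sgn]

lemma abs_sgn (b : Bool) : |sgn b| = 1 := by cases b <;> simp [sgn]

/-- The signs in the series expansion of the point with itinerary `w`. -/
def coef (w : ℕ → Bool) : ℕ → ℝ
  | 0 => 1
  | k + 1 => -sgn (w k) * coef w k

/-- The one-sided shift. -/
def sg (w : ℕ → Bool) : ℕ → Bool := fun i => w (i + 1)

lemma abs_coef (w : ℕ → Bool) (k : ℕ) : |coef w k| = 1 := by
  induction k with
  | zero => simp [coef]
  | succ k ih => rw [coef, abs_mul, abs_neg, abs_sgn, ih, one_mul]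

lemma coef_succ (w : ℕ → Bool) (k : ℕ) : coef w (k + 1) = -sgn (w 0) * coef (sg w) k := by
  induction k with
  | zero => simp [coef]
  | succ k ih =>
    rw [coef, ih, coef, sg]
    ring

/-- The distance to `1` of the point with itinerary `w` under the tent map of slope `s`. -/
def ptY (s : ℝ) (w : ℕ → Bool) : ℝ := ∑' k, coef w k * s⁻¹ ^ (k + 1)

lemma hasSum_bound {s : ℝ} (hs : 1.9 ≤ s) : HasSum (fun k : ℕ => s⁻¹ ^ (k + 1)) (1 / (s - 1)) := by
  have h1 : s⁻¹ < 1 := inv_lt_one_of_one_lt₀ (by linarith)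
  have h2 := (hasSum_geometric_of_lt_one (by positivity) h1).mul_left s⁻¹
  have h3 : s⁻¹ * (1 - s⁻¹)⁻¹ = 1 / (s - 1) := by
    have : s ≠ 0 := by linarith
    have : s - 1 ≠ 0 := by linarith
    field_simp
  rw [h3] at h2
  refine h2.congr_fun fun k => ?_
  rw [pow_succ, mul_comm]

lemma norm_term {s : ℝ} (hs : 1.9 ≤ s) (w : ℕ → Bool) (k : ℕ) :
    ‖coef w k * s⁻¹ ^ (k + 1)‖ = s⁻¹ ^ (k + 1) := by
  rw [norm_mul, Real.norm_eq_abs, abs_coef, one_mul, Real.norm_of_nonneg (by positivity)]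

lemma summable_ptY {s : ℝ} (hs : 1.9 ≤ s) (w : ℕ → Bool) :
    Summable fun k => coef w k * s⁻¹ ^ (k + 1) :=
  Summable.of_norm_bounded (hasSum_bound hs).summable fun k => (norm_term hs w k).le

lemma abs_ptY_le {s : ℝ} (hs : 1.9 ≤ s) (w : ℕ → Bool) : |ptY s w| ≤ 1 / (s - 1) :=
  tsum_of_norm_bounded (hasSum_bound hs) fun k => (norm_term hs w k).le

lemma bound_le {s : ℝ} (hs : 1.9 ≤ s) : 1 / (s - 1) ≤ 10 / 9 := by
  rw [div_le_div_iff₀ (by linarith) (by norm_num)]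
  linarith

lemma mul_ptY {s : ℝ} (hs : 1.9 ≤ s) (w : ℕ → Bool) :
    s * ptY s w = 1 - sgn (w 0) * ptY s (sg w) := by
  have h0 : s ≠ 0 := by linarith
  rw [ptY, (summable_ptY hs w).tsum_eq_zero_add, ptY]
  have : ∀ k, coef w (k + 1) * s⁻¹ ^ (k + 1 + 1) =
      (-sgn (w 0) * s⁻¹) * (coef (sg w) k * s⁻¹ ^ (k + 1)) := by
    intro k
    rw [coef_succ]
    ring
  simp_rw [this]
  rw [tsum_mul_left]
  simp only [coef, zero_add, pow_one]
  generalize (∑' k, coef (sg w) k * s⁻¹ ^ (k + 1)) = t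
  linear_combination (1 - sgn (w 0) * t) * mul_inv_cancel₀ h0

lemma continuousOn_ptY (w : ℕ → Bool) : ContinuousOn (fun s => ptY s w) (Icc 1.9 2) := by
  refine continuousOn_tsum (u := fun k => (1.9 : ℝ)⁻¹ ^ (k + 1)) (fun k => ?_)
    (hasSum_bound le_rfl).summable fun k s hs => ?_
  · refine continuousOn_const.mul (ContinuousOn.pow (ContinuousOn.inv₀ continuousOn_id ?_) _)
    intro s hs
    have := hs.1
    simp only [id]
    linarith
  · rw [norm_term hs.1]
    have h1 : (0 : ℝ) < 1.9 := by norm_num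
    have h2 := hs.1
    gcongr

lemma abs_ptY_sub_le {s : ℝ} (hs : 1.9 ≤ s) (M : ℕ) : ∀ w w' : ℕ → Bool,
    (∀ i < M, w i = w' i) → |ptY s w - ptY s w'| ≤ 20 / 9 * (10 / 19) ^ M := by
  induction M with
  | zero =>
    intro w w' _
    have h1 := (abs_ptY_le hs w).trans (bound_le hs)
    have h2 := (abs_ptY_le hs w').trans (bound_le hs)
    rw [abs_le] at h1 h2 ⊢
    constructor <;> simp only [pow_zero] <;> linarith [h1.1, h1.2, h2.1, h2.2]
  | succ M ih =>
    intro w w' h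
    have h1 := ih (sg w) (sg w') fun i hi => h (i + 1) (by omega)
    have e1 := mul_ptY hs w
    have e2 := mul_ptY hs w'
    rw [← h 0 (by omega)] at e2
    have e3 : s * (ptY s w - ptY s w') = -sgn (w 0) * (ptY s (sg w) - ptY s (sg w')) := by
      rw [mul_sub, e1, e2]
      ring
    have e4 := congrArg abs e3
    rw [abs_mul, abs_mul, abs_neg, abs_sgn, one_mul, abs_of_nonneg (by linarith : 0 ≤ s)] at e4
    have h3 : 1.9 * |ptY s w - ptY s w'| ≤ 20 / 9 * (10 / 19) ^ M :=
      (mul_le_mul_of_nonneg_right hs (abs_nonneg _)).trans (e4.le.trans h1)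
    rw [pow_succ]
    linarith

/-- Prefixing `i` symbols of the increasing branch. -/
def prefL (i : ℕ) (w : ℕ → Bool) : ℕ → Bool := fun k => if k < i then false else w (k - i)

lemma prefL_zero (w : ℕ → Bool) : prefL 0 w = w := by
  funext k
  simp [prefL]

lemma sg_prefL (i : ℕ) (w : ℕ → Bool) : sg (prefL (i + 1) w) = prefL i w := by
  funext k
  simp [sg, prefL]

lemma mul_ptY_prefL {s : ℝ} (hs : 1.9 ≤ s) (i : ℕ) (w : ℕ → Bool) :
    s * ptY s (prefL (i + 1) w) = 1 + ptY s (prefL i w) := by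
  rw [mul_ptY hs, sg_prefL]
  simp [prefL, sgn]

lemma ptY_prefL {s : ℝ} (hs : 1.9 ≤ s) (i : ℕ) (w : ℕ → Bool) :
    s ^ i * (1 / (s - 1) - ptY s (prefL i w)) = 1 / (s - 1) - ptY s w := by
  induction i with
  | zero => simp [prefL_zero]
  | succ i ih =>
    have h : s * (1 / (s - 1)) = 1 + 1 / (s - 1) := by
      have : s - 1 ≠ 0 := by linarith
      field_simp
      ring
    rw [← ih, pow_succ, mul_assoc, mul_sub, h, mul_ptY_prefL hs]
    ring

/-- Some slope makes `0`, the image of `1`, the point with itinerary `Lᴺ K`. -/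
lemma exists_slope (K : ℕ → Bool) {N : ℕ} (hN : 5 ≤ N) :
    ∃ s, 1.9 ≤ s ∧ s ≤ 2 ∧ ptY s (prefL N K) = 1 := by
  have h19 : (1 : ℝ) ≤ ptY 1.9 (prefL N K) := by
    have h1 := ptY_prefL (le_refl (1.9 : ℝ)) N K
    have h2 := abs_le.1 (abs_ptY_le (le_refl (1.9 : ℝ)) K)
    have h3 : (1.9 : ℝ) ^ 5 ≤ 1.9 ^ N := pow_le_pow_right₀ (by norm_num) hN
    by_contra hcon
    norm_num at h1 h2 h3
    have h4 : (1 : ℝ) / 9 < 10 / 9 - ptY (19 / 10) (prefL N K) := by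
      norm_num at hcon
      linarith
    nlinarith [h2.1]
  have h2 : ptY 2 (prefL N K) ≤ 1 := by
    have h1 := abs_le.1 (abs_ptY_le (by norm_num : (1.9 : ℝ) ≤ 2) (prefL N K))
    norm_num at h1
    exact h1.2
  obtain ⟨s, hs, hse⟩ := intermediate_value_Icc' (by norm_num : (1.9 : ℝ) ≤ 2)
    (continuousOn_ptY (prefL N K)) ⟨h2, h19⟩
  exact ⟨s, hs.1, hs.2, hse⟩

/-- The sequences in which every run of `false` is shorter than `N`. -/
def Good (N : ℕ) : Set (ℕ → Bool) := {w | ∀ j, ∃ i < N, w (j + i) = true}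

lemma sg_mem_good {N : ℕ} {w : ℕ → Bool} (hw : w ∈ Good N) : sg w ∈ Good N := by
  intro j
  obtain ⟨i, hi, h⟩ := hw (j + 1)
  refine ⟨i, hi, ?_⟩
  rw [sg, ← h]
  congr 1
  ring

lemma ptY_ge {s : ℝ} (hs : 1.9 ≤ s) (w : ℕ → Bool) : -0.06 ≤ ptY s w := by
  have h1 := mul_ptY hs w
  have h2 := (abs_ptY_le hs (sg w)).trans (bound_le hs)
  have h3 : |sgn (w 0) * ptY s (sg w)| ≤ 10 / 9 := by rwa [abs_mul, abs_sgn, one_mul]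
  have h4 := (abs_le.1 h3).2
  by_contra hcon
  push Not at hcon
  have h5 : s * ptY s w < 1.9 * (-0.06) := by nlinarith
  norm_num at h5
  linarith

lemma ptY_le_of_true {s : ℝ} (hs : 1.9 ≤ s) {w : ℕ → Bool} (hw : w 0 = true) :
    ptY s w ≤ 0.56 := by
  have h1 := mul_ptY hs w
  have h2 := ptY_ge hs (sg w)
  rw [hw] at h1
  simp only [sgn, if_true, one_mul] at h1
  by_contra hcon
  push Not at hcon
  have h5 : 1.9 * 0.56 < s * ptY s w := by nlinarith
  norm_num at h2 h5
  linarith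

lemma ptY_lt_one {s : ℝ} (hs : 1.9 ≤ s) (hs2 : s ≤ 2) {K w : ℕ → Bool} {N N₀ : ℕ}
    (hN : N₀ + 3 ≤ N) (hK : ptY s (prefL N K) = 1) (hw : w ∈ Good N₀) : ptY s w < 1 := by
  -- `w = Lʲ R u` with `j < N₀`, so `w` is a shorter run of `L` than `Lᴺ K`
  have hex : ∃ j, w j = true := by
    obtain ⟨i, -, hi⟩ := hw 0
    exact ⟨_, hi⟩
  classical
  obtain ⟨j, hj, hjt, hjf⟩ : ∃ j < N₀, w j = true ∧ ∀ i < j, w i = false := by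
    refine ⟨Nat.find hex, ?_, Nat.find_spec hex, fun i hi => ?_⟩
    · obtain ⟨i, hi, hwi⟩ := hw 0
      rw [zero_add] at hwi
      exact (Nat.find_min' hex hwi).trans_lt hi
    · simpa using Nat.find_min hex hi
  set u : ℕ → Bool := fun k => w (j + k) with hu
  have hwu : w = prefL j u := by
    funext k
    simp only [prefL, hu]
    split_ifs with h
    · exact hjf k h
    · congr 1
      omega
  have h1 := ptY_prefL hs j u
  rw [← hwu] at h1
  have h2 := ptY_prefL hs N K
  rw [hK] at h2
  have h3 := ptY_le_of_true hs (w := u) (by simpa [hu] using hjt)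
  have h4 := abs_le.1 (abs_ptY_le hs K)
  have h5 := bound_le hs
  have h6 : 1 ≤ 1 / (s - 1) := by
    rw [le_div_iff₀ (by linarith)]
    linarith
  have h7 : s ^ N = s ^ j * s ^ (N - j) := by
    rw [← pow_add]
    congr 1
    omega
  have h8 : (1.9 : ℝ) ^ 3 ≤ s ^ (N - j) :=
    calc (1.9 : ℝ) ^ 3 ≤ s ^ 3 := pow_le_pow_left₀ (by norm_num) hs 3
      _ ≤ s ^ (N - j) := pow_le_pow_right₀ (by linarith) (by omega)
  have hj0 : 0 < s ^ j := by
    have : 0 < s := by linarith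
    positivity
  by_contra hcon
  push Not at hcon
  have h9 : s ^ j * (1 / (s - 1) - ptY s w) ≤ s ^ j * (1 / (s - 1) - 1) :=
    mul_le_mul_of_nonneg_left (by linarith) hj0.le
  have h10 : 0.44 ≤ s ^ j * (1 / (s - 1) - 1) := by
    rw [h1] at h9
    generalize s ^ j * (1 / (s - 1) - 1) = z at *
    generalize 1 / (s - 1) = B at *
    norm_num at h3 ⊢
    linarith
  have h11 : 0.44 * (1.9 : ℝ) ^ 3 ≤ s ^ N * (1 / (s - 1) - 1) := by
    rw [h7, mul_right_comm]
    exact mul_le_mul h10 h8 (by positivity) (by linarith)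
  rw [h2] at h11
  have h12 := h4.1
  generalize 1 / (s - 1) = B at *
  norm_num at h11
  linarith

lemma ptY_pos {s : ℝ} (hs : 1.9 ≤ s) (hs2 : s ≤ 2) {K w : ℕ → Bool} {N N₀ : ℕ}
    (hN : N₀ + 3 ≤ N) (hK : ptY s (prefL N K) = 1) (hw : w ∈ Good N₀) : 0 < ptY s w := by
  have h1 := ptY_lt_one hs hs2 hN hK (sg_mem_good hw)
  have h2 := ptY_ge hs (sg w)
  have h3 : |sgn (w 0) * ptY s (sg w)| < 1 := by
    rw [abs_mul, abs_sgn, one_mul, abs_lt]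
    norm_num at h2
    constructor <;> linarith
  have h4 := (abs_lt.1 h3).2
  have h5 := mul_ptY hs w
  by_contra hcon
  push Not at hcon
  nlinarith

lemma ptY_injOn {s : ℝ} (hs : 1.9 ≤ s) {A : Set (ℕ → Bool)} (hA : ∀ w ∈ A, sg w ∈ A)
    (hpos : ∀ w ∈ A, 0 < ptY s w) : InjOn (ptY s) A := by
  have key : ∀ k, ∀ w ∈ A, ∀ w' ∈ A, ptY s w = ptY s w' → w k = w' k := by
    intro k
    induction k with
    | zero =>
      intro w hw w' hw' h
      have e1 := mul_ptY hs w
      have e2 := mul_ptY hs w'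
      have p1 := hpos _ (hA w hw)
      have p2 := hpos _ (hA w' hw')
      rw [h] at e1
      cases h1 : w 0 <;> cases h2 : w' 0 <;> simp only [h1, h2, sgn] at e1 e2 ⊢ <;> norm_num at *
      · linarith
      · linarith
    | succ k ih =>
      intro w hw w' hw' h
      refine ih (sg w) (hA w hw) (sg w') (hA w' hw') ?_
      have e1 := mul_ptY hs w
      have e2 := mul_ptY hs w'
      have p1 := hpos _ (hA w hw)
      have p2 := hpos _ (hA w' hw')
      rw [h] at e1
      cases h1 : w 0 <;> cases h2 : w' 0 <;> simp only [h1, h2, sgn] at e1 e2 ⊢ <;>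
        norm_num at * <;> linarith
  intro w hw w' hw' h
  funext k
  exact key k w hw w' hw' h

end Tent

/-! ### Tent maps are locally eventually onto -/

section TentMap

open Topology

/-- The core tent map of slope `s`, rescaled to `[0,1]`: the critical point `1 - 1/s` goes to `1`
and `1` goes to `0`. -/
def tent (s t : ℝ) : ℝ := 1 - |1 - s * (1 - t)|

lemma continuous_tent (s : ℝ) : Continuous (tent s) := by
  unfold tent
  fun_prop

lemma tent_mem {s : ℝ} (hs : 1.9 ≤ s) (hs2 : s ≤ 2) {t : ℝ} (ht : t ∈ Icc (0 : ℝ) 1) :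
    tent s t ∈ Icc (0 : ℝ) 1 := by
  obtain ⟨h0, h1⟩ := ht
  have h2 : |1 - s * (1 - t)| ≤ 1 := by
    rw [abs_le]
    constructor <;> nlinarith
  have h3 := abs_nonneg (1 - s * (1 - t))
  constructor <;> simp only [tent] <;> linarith

lemma slope_mul_crit {s : ℝ} (hs : 1.9 ≤ s) : s * (1 - 1 / s) = s - 1 := by
  have : s ≠ 0 := by linarith
  field_simp

lemma tent_left {s : ℝ} (hs : 1.9 ≤ s) {t : ℝ} (ht : t ≤ 1 - 1 / s) :
    tent s t = 2 - s * (1 - t) := by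
  have h1 := slope_mul_crit hs
  have h2 : s * t ≤ s * (1 - 1 / s) := mul_le_mul_of_nonneg_left ht (by linarith)
  rw [tent, abs_of_nonpos (by linarith)]
  ring

lemma tent_right {s : ℝ} (hs : 1.9 ≤ s) {t : ℝ} (ht : 1 - 1 / s ≤ t) :
    tent s t = s * (1 - t) := by
  have h1 := slope_mul_crit hs
  have h2 : s * (1 - 1 / s) ≤ s * t := mul_le_mul_of_nonneg_left ht (by linarith)
  rw [tent, abs_of_nonneg (by linarith)]
  ring

lemma image_step {f : ℝ → ℝ} {A B C : Set ℝ} {N : ℕ} (h1 : B ⊆ f '' A) (h2 : C ⊆ f^[N] '' B) :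
    C ⊆ f^[N + 1] '' A := by
  rw [Function.iterate_succ, image_comp]
  exact h2.trans (image_mono h1)

/-- Every interval is eventually mapped onto `[0,1]`: an image interval, or the image of an image
interval, is longer by a factor `1.8` unless it already covers `[c, 1]`. -/
lemma tent_expand {s : ℝ} (hs : 1.9 ≤ s) (hs2 : s ≤ 2) (n : ℕ) : ∀ a b : ℝ, 0 ≤ a → a < b → b ≤ 1 →
    1 ≤ (1.8 : ℝ) ^ n * (b - a) → ∃ N, Icc 0 1 ⊆ (tent s)^[N] '' Icc a b := by
  induction n with
  | zero =>
    intro a b ha hab hb h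
    rw [pow_zero, one_mul] at h
    refine ⟨0, fun t ht => ⟨t, ⟨?_, ?_⟩, rfl⟩⟩
    · linarith [ht.1]
    · linarith [ht.2]
  | succ n ih =>
    intro a b ha hab hb h
    have hcs := slope_mul_crit hs
    have hcont := continuous_tent s
    have hp : (0 : ℝ) < 1.8 ^ n := by positivity
    have hlong : ∀ L, 1.8 * (b - a) ≤ L → 1 ≤ (1.8 : ℝ) ^ n * L := by
      intro L hL
      refine h.trans ?_
      rw [pow_succ, mul_assoc]
      exact mul_le_mul_of_nonneg_left hL hp.le
    have hcl : tent s (1 - 1 / s) = 1 := by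
      rw [tent_right hs le_rfl]
      linarith
    have hc1 : 1 - 1 / s < 1 := by
      have : 0 < 1 / s := by
        apply one_div_pos.2
        linarith
      linarith
    have ht1 : tent s 1 = 0 := by rw [tent_right hs hc1.le]; ring
    have hs18 : 1.8 * (b - a) ≤ s * (b - a) := by nlinarith
    have hs0 : 0 < s * (b - a) := by nlinarith
    rcases le_or_gt b (1 - 1 / s) with hbc | hbc
    · have e1 := tent_left hs hbc
      have e2 := tent_left hs (hab.le.trans hbc)
      have hma := tent_mem hs hs2 (t := a) ⟨ha, by linarith⟩
      have hmb := tent_mem hs hs2 (t := b) ⟨by linarith, hb⟩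
      obtain ⟨N, hN⟩ := ih (tent s a) (tent s b) hma.1 (by linarith) hmb.2
        (hlong _ (by linarith))
      exact ⟨N + 1, image_step (intermediate_value_Icc hab.le hcont.continuousOn) hN⟩
    rcases le_or_gt (1 - 1 / s) a with hac | hac
    · have e1 := tent_right hs hac
      have e2 := tent_right hs hbc.le
      have hma := tent_mem hs hs2 (t := a) ⟨ha, by linarith⟩
      have hmb := tent_mem hs hs2 (t := b) ⟨by linarith, hb⟩
      obtain ⟨N, hN⟩ := ih (tent s b) (tent s a) hmb.1 (by linarith) hma.2
        (hlong _ (by linarith))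
      exact ⟨N + 1, image_step (intermediate_value_Icc' hab.le hcont.continuousOn) hN⟩
    -- the interval straddles `c`: keep the longer half
    obtain ⟨e, he0, he1, heI⟩ : ∃ e, 0 ≤ e ∧ e ≤ 1 - s * (b - a) / 2 ∧
        Icc e 1 ⊆ tent s '' Icc a b := by
      rcases le_total (b - (1 - 1 / s)) (1 - 1 / s - a) with hh | hh
      · refine ⟨tent s a, (tent_mem hs hs2 (t := a) ⟨ha, by linarith⟩).1, ?_, ?_⟩
        · rw [tent_left hs hac.le]
          nlinarith
        · have := intermediate_value_Icc hac.le hcont.continuousOn (f := tent s)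
          rw [hcl] at this
          exact this.trans (image_mono (Icc_subset_Icc_right hbc.le))
      · refine ⟨tent s b, (tent_mem hs hs2 (t := b) ⟨by linarith, hb⟩).1, ?_, ?_⟩
        · rw [tent_right hs hbc.le]
          nlinarith
        · have := intermediate_value_Icc' hbc.le hcont.continuousOn (f := tent s)
          rw [hcl] at this
          exact this.trans (image_mono (Icc_subset_Icc_left hac.le))
    rcases le_or_gt e (1 - 1 / s) with hec | hec
    · refine ⟨1 + 1, image_step heI ?_⟩
      have := intermediate_value_Icc' hc1.le hcont.continuousOn (f := tent s)
      rw [hcl, ht1] at this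
      exact this.trans (image_mono (Icc_subset_Icc_left hec))
    · have he := tent_right hs hec.le
      have hel : e ≤ 1 := by linarith
      have hme := tent_mem hs hs2 (t := e) ⟨he0, hel⟩
      have hlen : 1.8 * (b - a) ≤ tent s e := by
        rw [he]
        have h1 : s * (s * (b - a) / 2) ≤ s * (1 - e) :=
          mul_le_mul_of_nonneg_left (by linarith) (by linarith)
        have h2 : 3.6 * (b - a) ≤ s * s * (b - a) :=
          mul_le_mul_of_nonneg_right (by nlinarith) (by linarith)
        linarith
      obtain ⟨N, hN⟩ := ih 0 (tent s e) le_rfl (by linarith) hme.2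
        (hlong _ (by linarith))
      have := intermediate_value_Icc' hel hcont.continuousOn (f := tent s)
      rw [ht1] at this
      exact ⟨N + 1 + 1, image_step heI (image_step this hN)⟩

/-- The tent map as a self-map of `[0,1]`. -/
def tentI {s : ℝ} (hs : 1.9 ≤ s) (hs2 : s ≤ 2) (t : unitI) : unitI :=
  ⟨tent s t, tent_mem hs hs2 t.2⟩

lemma coe_iterate_tentI {s : ℝ} (hs : 1.9 ≤ s) (hs2 : s ≤ 2) (n : ℕ) (t : unitI) :
    (((tentI hs hs2)^[n] t : unitI) : ℝ) = (tent s)^[n] t := by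
  induction n generalizing t with
  | zero => rfl
  | succ n ih => rw [Function.iterate_succ_apply, Function.iterate_succ_apply, ih]; rfl

lemma leo_tentI {s : ℝ} (hs : 1.9 ≤ s) (hs2 : s ≤ 2) : LEO (tentI hs hs2) := by
  intro ε hε x
  have hx0 := x.2.1
  have hx1 := x.2.2
  set a := max 0 ((x : ℝ) - ε / 2) with ha
  set b := min 1 ((x : ℝ) + ε / 2) with hb
  have hab : a < b := by
    rw [ha, hb, max_lt_iff, lt_min_iff, lt_min_iff]
    refine ⟨⟨by norm_num, by linarith⟩, by linarith, by linarith⟩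
  obtain ⟨n, hn⟩ : ∃ n : ℕ, 1 / (b - a) < (1.8 : ℝ) ^ n :=
    pow_unbounded_of_one_lt _ (by norm_num)
  have hba : 0 < b - a := by linarith
  rw [div_lt_iff₀ hba] at hn
  obtain ⟨N, hN⟩ := tent_expand hs hs2 n a b (le_max_left _ _) hab (min_le_left _ _) hn.le
  refine ⟨N, eq_univ_of_forall fun y => ?_⟩
  obtain ⟨t, ht, hty⟩ := hN y.2
  have ht0 : 0 ≤ t := (le_max_left _ _).trans ht.1
  have ht1 : t ≤ 1 := ht.2.trans (min_le_left _ _)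
  have ht2 : (x : ℝ) - ε / 2 ≤ t := (le_max_right _ _).trans ht.1
  have ht3 : t ≤ x + ε / 2 := ht.2.trans (min_le_right _ _)
  refine ⟨⟨t, ht0, ht1⟩, ?_, ?_⟩
  · rw [Metric.mem_ball, Subtype.dist_eq, Real.dist_eq, abs_lt]
    constructor <;> simp only <;> linarith
  · apply Subtype.ext
    rw [coe_iterate_tentI]
    exact hty

lemma crit_mem {s : ℝ} (hs : 1.9 ≤ s) : 0 < 1 - 1 / s ∧ 1 - 1 / s < 1 := by
  have h1 : 0 < 1 / s := one_div_pos.2 (by linarith)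
  have h2 : 1 / s < 1 := by
    rw [div_lt_one (by linarith)]
    linarith
  constructor <;> linarith

/-- The critical point of the tent map of slope `s`. -/
def crit {s : ℝ} (hs : 1.9 ≤ s) : unitI := ⟨1 - 1 / s, (crit_mem hs).1.le, (crit_mem hs).2.le⟩

lemma unimodal_tentI {s : ℝ} (hs : 1.9 ≤ s) (hs2 : s ≤ 2) :
    Unimodal (tentI hs hs2) (crit hs) := by
  have hs0 : 0 < s := by linarith
  refine ⟨((continuous_tent s).comp continuous_subtype_val).subtype_mk _, (crit_mem hs).1,
    (crit_mem hs).2, ?_, ?_⟩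
  · intro x hx y hy hxy
    have hx' : (x : ℝ) ≤ 1 - 1 / s := hx
    have hy' : (y : ℝ) ≤ 1 - 1 / s := hy
    have hxy' : (x : ℝ) < y := hxy
    show tent s x < tent s y
    rw [tent_left hs hx', tent_left hs hy']
    nlinarith
  · intro x hx y hy hxy
    have hx' : 1 - 1 / s ≤ (x : ℝ) := hx
    have hy' : 1 - 1 / s ≤ (y : ℝ) := hy
    have hxy' : (x : ℝ) < y := hxy
    show tent s y < tent s x
    rw [tent_right hs hx', tent_right hs hy']
    nlinarith

/-- A unimodal l.e.o. map whose critical orbit is, from some time on, coded by the successive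
shifts of a prescribed sequence `K` without long runs of `false`. -/
theorem exists_model {K : ℕ → Bool} {N₀ : ℕ} (hK : K ∈ Good N₀) :
    ∃ (g : unitI → unitI) (c : unitI) (v : (ℕ → Bool) → unitI) (N : ℕ), Unimodal g c ∧ LEO g ∧
      (∀ ε > 0, ∃ M : ℕ, ∀ w w' : ℕ → Bool, (∀ i < M, w i = w' i) → dist (v w) (v w') < ε) ∧
      InjOn v (Good N₀) ∧ (∀ w ∈ Good N₀, g (v w) = v (sg w)) ∧
      ∀ j, g^[N + j] c = v fun i => K (j + i) := by
  set N := max (N₀ + 3) 5 with hN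
  have hN3 : N₀ + 3 ≤ N := le_max_left _ _
  obtain ⟨s, hs, hs2, hsK⟩ := exists_slope K (N := N) (le_max_right _ _)
  have hpos : ∀ w ∈ Good N₀, 0 < ptY s w := fun w hw => ptY_pos hs hs2 hN3 hsK hw
  have hlt : ∀ w ∈ Good N₀, ptY s w < 1 := fun w hw => ptY_lt_one hs hs2 hN3 hsK hw
  set v : (ℕ → Bool) → unitI := fun w => projIcc 0 1 zero_le_one (1 - ptY s w) with hv
  have hvc : ∀ w, 0 ≤ ptY s w → ptY s w ≤ 1 → (v w : ℝ) = 1 - ptY s w := by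
    intro w h0 h1
    rw [hv]
    simp only
    rw [projIcc_of_mem zero_le_one (x := 1 - ptY s w) ⟨by linarith, by linarith⟩]
  -- one step of the dynamics, for any itinerary with admissible values
  have hstep : ∀ w, 0 ≤ ptY s w → ptY s w ≤ 1 → 0 ≤ ptY s (sg w) → ptY s (sg w) ≤ 1 →
      tentI hs hs2 (v w) = v (sg w) := by
    intro w h0 h1 h2 h3
    apply Subtype.ext
    show tent s (v w) = _
    rw [hvc w h0 h1, hvc _ h2 h3, tent, sub_sub_cancel, mul_ptY hs w, sub_sub_cancel, abs_mul,
      abs_sgn, one_mul, abs_of_nonneg h2]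
  -- values along the initial run `Lᴺ`
  have hs0 : 0 < s := by linarith
  have hpref : ∀ i ≤ N, 0 ≤ ptY s (prefL i K) ∧ ptY s (prefL i K) ≤ 1 := by
    intro i hi
    have hnn : ∀ i, 0 ≤ ptY s (prefL i K) := by
      intro i
      induction i with
      | zero => rw [prefL_zero]; exact (hpos K hK).le
      | succ i ih =>
        have := mul_ptY_prefL hs i K
        by_contra hcon
        push Not at hcon
        nlinarith
    have hup : ∀ j, j ≤ N → ptY s (prefL (N - j) K) ≤ 1 := by
      intro j
      induction j with
      | zero => intro _; rw [Nat.sub_zero, hsK]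
      | succ j ih =>
        intro hj
        have h1 := ih (by omega)
        have h2 := mul_ptY_prefL hs (N - (j + 1)) K
        rw [show N - (j + 1) + 1 = N - j by omega] at h2
        nlinarith
    have := hup (N - i) (by omega)
    rw [show N - (N - i) = i by omega] at this
    exact ⟨hnn i, this⟩
  have hgood : ∀ j, (fun i => K (j + i)) ∈ Good N₀ := by
    intro j k
    obtain ⟨i, hi, h⟩ := hK (j + k)
    exact ⟨i, hi, by rw [← h, add_assoc]⟩
  have hgo : ∀ w ∈ Good N₀, tentI hs hs2 (v w) = v (sg w) := fun w hw =>
    hstep w (hpos w hw).le (hlt w hw).le (hpos _ (sg_mem_good hw)).le (hlt _ (sg_mem_good hw)).le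
  have h2c : (tentI hs hs2)^[2] (crit hs) = v (prefL N K) := by
    apply Subtype.ext
    rw [coe_iterate_tentI, hvc _ (by rw [hsK]; norm_num) hsK.le, hsK]
    show tent s (tent s (1 - 1 / s)) = _
    have h1 : tent s (1 - 1 / s) = 1 := by
      rw [tent_right hs le_rfl]
      linarith [slope_mul_crit hs]
    rw [h1, tent_right hs (crit_mem hs).2.le]
    ring
  have hrun : ∀ j, j ≤ N → (tentI hs hs2)^[2 + j] (crit hs) = v (prefL (N - j) K) := by
    intro j
    induction j with
    | zero => intro _; exact h2c
    | succ j ih =>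
      intro hj
      rw [← add_assoc, Function.iterate_succ_apply', ih (by omega)]
      have e : N - j = N - (j + 1) + 1 := by omega
      have h1 := hpref (N - j) (by omega)
      have h2 := hpref (N - (j + 1)) (by omega)
      have e2 : sg (prefL (N - j) K) = prefL (N - (j + 1)) K := by rw [e, sg_prefL]
      rw [hstep _ h1.1 h1.2 (by rw [e2]; exact h2.1) (by rw [e2]; exact h2.2), e2]
  refine ⟨tentI hs hs2, crit hs, v, 2 + N, unimodal_tentI hs hs2, leo_tentI hs hs2, ?_, ?_, hgo, ?_⟩
  · intro ε hε
    obtain ⟨M, hM⟩ := exists_pow_lt_of_lt_one (show 0 < ε * (9 / 20) by positivity)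
      (by norm_num : (10 / 19 : ℝ) < 1)
    refine ⟨M, fun w w' h => ?_⟩
    have h1 := abs_ptY_sub_le hs M w w' h
    have h2 : dist (v w) (v w') ≤ |ptY s w - ptY s w'| := by
      have h3 := abs_projIcc_sub_projIcc (zero_le_one' ℝ) (c := 1 - ptY s w) (d := 1 - ptY s w')
      rw [Subtype.dist_eq, Real.dist_eq]
      refine h3.trans (le_of_eq ?_)
      rw [sub_sub_sub_cancel_left, abs_sub_comm]
    refine h2.trans_lt (h1.trans_lt ?_)
    linarith
  · intro w hw w' hw' h
    refine ptY_injOn hs (fun w hw => sg_mem_good hw) hpos hw hw' ?_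
    have := congrArg Subtype.val h
    rw [hvc w (hpos w hw).le (hlt w hw).le, hvc w' (hpos w' hw').le (hlt w' hw').le] at this
    linarith
  · intro j
    induction j with
    | zero =>
      have := hrun N le_rfl
      rw [Nat.sub_self, prefL_zero] at this
      simpa using this
    | succ j ih =>
      rw [← add_assoc, Function.iterate_succ_apply', ih, hgo _ (hgood j)]
      congr 1
      funext i
      simp only [sg]
      congr 1
      ring

end TentMap

/-! ### The omega-limit set and the inhomogeneities -/

section Assembly

open Topology

/-- The right half of a two-sided sequence. -/
def rightHalf : (ℤ → Bool) → ℕ → Bool := pull fun i : ℕ => (i : ℤ)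

lemma continuous_of_modulus {v : (ℕ → Bool) → unitI}
    (hmod : ∀ ε > 0, ∃ M : ℕ, ∀ w w' : ℕ → Bool, (∀ i < M, w i = w' i) → dist (v w) (v w') < ε) :
    Continuous v := by
  rw [continuous_iff_continuousAt]
  intro w
  rw [ContinuousAt, Metric.tendsto_nhds]
  intro ε hε
  obtain ⟨M, hM⟩ := hmod ε hε
  filter_upwards [(isOpen_cylinder (Finset.range M) w).mem_nhds fun i _ => rfl] with w' hw'
  exact hM w' w fun i hi => hw' i (Finset.mem_range.2 hi)

lemma HomeoOrd.of_homeomorph {A B : Type*} [TopologicalSpace A] [TopologicalSpace B]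
    {o : Ordinal} (h : HomeoOrd A o) (e : A ≃ₜ B) : HomeoOrd B o :=
  h.map fun f => e.symm.trans f

lemma HomeoOrd.of_bijective {A B : Type*} [TopologicalSpace A] [TopologicalSpace B]
    [CompactSpace A] [T2Space B] {o : Ordinal} (h : HomeoOrd A o) {f : A → B}
    (hf : Continuous f) (hb : Function.Bijective f) : HomeoOrd B o :=
  h.of_homeomorph (Continuous.homeoOfEquivCompactToT2 (f := Equiv.ofBijective f hb) hf)

lemma rightHalf_mem_good {X : Set (ℤ → Bool)} (hX : ∀ x ∈ X, ∀ j, sh j x ∈ X) {N₀ : ℕ}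
    (hN : ∀ x ∈ X, ∃ i < N₀, x ((i : ℕ) : ℤ) = true) : rightHalf '' X ⊆ Good N₀ := by
  rintro _ ⟨x, hx, rfl⟩ j
  obtain ⟨i, hi, h⟩ := hN _ (hX x hx j)
  refine ⟨i, hi, ?_⟩
  rw [← h]
  simp only [rightHalf, pull, sh]
  congr 1
  push_cast
  ring

lemma sg_rightHalf (x : ℤ → Bool) (i : ℕ) :
    sg (rightHalf (sh (-((i + 1 : ℕ) : ℤ)) x)) = rightHalf (sh (-(i : ℤ)) x) := by
  funext k
  simp only [sg, rightHalf, pull, sh]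
  congr 1
  push_cast
  ring

/-- The critical orbit accumulates exactly at the points coded by right halves of elements
of `X`. -/
lemma omegaLimitSet_eq {X : Set (ℤ → Bool)} (hcl : IsClosed X) {K : ℕ → Bool}
    (hK1 : ∀ x ∈ X, ∀ M n : ℕ, ∃ j, n ≤ j ∧ ∀ i ≤ M, K (j + i) = x (i : ℤ))
    (hK2 : ∀ M : ℕ, ∃ J, ∀ j, J ≤ j → ∃ x ∈ X, ∀ i ≤ M, K (j + i) = x (i : ℤ))
    {g : unitI → unitI} {c : unitI} {v : (ℕ → Bool) → unitI} {N : ℕ}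
    (hmod : ∀ ε > 0, ∃ M : ℕ, ∀ w w' : ℕ → Bool, (∀ i < M, w i = w' i) → dist (v w) (v w') < ε)
    (horb : ∀ j, g^[N + j] c = v fun i => K (j + i)) :
    omegaLimitSet g c = v '' (rightHalf '' X) := by
  apply Subset.antisymm
  · intro y hy
    have hclosed : IsClosed (v '' (rightHalf '' X)) :=
      ((isClosed_pull_image _ hcl).isCompact.image (continuous_of_modulus hmod)).isClosed
    rw [← hclosed.closure_eq, Metric.mem_closure_iff]
    intro ε hε
    obtain ⟨M, hM⟩ := hmod (ε / 2) (by positivity)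
    obtain ⟨J, hJ⟩ := hK2 M
    obtain ⟨_, ⟨m, hm, rfl⟩, hd⟩ :=
      Metric.mem_closure_iff.1 (mem_iInter.1 hy (N + J)) (ε / 2) (by positivity)
    obtain ⟨j, rfl⟩ : ∃ j, m = N + j := ⟨m - N, by omega⟩
    obtain ⟨x, hx, hxK⟩ := hJ j (by omega)
    refine ⟨_, mem_image_of_mem v (mem_image_of_mem _ hx), ?_⟩
    rw [horb] at hd
    have h2 := hM (fun i => K (j + i)) (rightHalf x) fun i hi => hxK i hi.le
    have h3 := dist_triangle y (v fun i => K (j + i)) (v (rightHalf x))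
    linarith
  · rintro _ ⟨_, ⟨x, hx, rfl⟩, rfl⟩
    refine mem_iInter.2 fun n => Metric.mem_closure_iff.2 fun ε hε => ?_
    obtain ⟨M, hM⟩ := hmod ε hε
    obtain ⟨j, hj, hxK⟩ := hK1 x hx M n
    refine ⟨_, ⟨N + j, by omega, rfl⟩, ?_⟩
    rw [horb]
    exact hM _ _ fun i hi => (hxK i hi.le).symm

/-- A two-sided sequence all of whose half-lines `[-i, ∞)` occur in `X` belongs to `X`. -/
lemma mem_of_rightHalf {X : Set (ℤ → Bool)} (hcl : IsClosed X) (hX : ∀ x ∈ X, ∀ j, sh j x ∈ X)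
    {x : ℤ → Bool} (h : ∀ i : ℕ, rightHalf (sh (-(i : ℤ)) x) ∈ rightHalf '' X) : x ∈ X := by
  rw [← hcl.closure_eq, mem_closure_iff]
  intro U hU hxU
  obtain ⟨s, hs⟩ := exists_cylinder_subset hU hxU
  set i : ℕ := s.sup Int.natAbs with hi
  obtain ⟨y, hy, hyx⟩ := h i
  refine ⟨sh i y, hs _ fun p hp => ?_, hX y hy i⟩
  have h1 : p.natAbs ≤ i := Finset.le_sup (f := Int.natAbs) hp
  have h2 := congrFun hyx (p + i).toNat
  simp only [rightHalf, pull, sh] at h2 ⊢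
  rw [show (((p + i).toNat : ℕ) : ℤ) = p + i by omega] at h2
  rw [h2]
  congr 1
  ring

/-- The inhomogeneities are coded by the two-sided sequences in `X`. -/
lemma homeoOrd_inhom {X : Set (ℤ → Bool)} (hcl : IsClosed X) (hX : ∀ x ∈ X, ∀ j, sh j x ∈ X)
    {N₀ : ℕ} (hgood : rightHalf '' X ⊆ Good N₀) {g : unitI → unitI} {c : unitI}
    {v : (ℕ → Bool) → unitI} (hv : Continuous v) (hinj : InjOn v (Good N₀))
    (hg : ∀ w ∈ Good N₀, g (v w) = v (sg w))
    (hom : omegaLimitSet g c = v '' (rightHalf '' X)) {o : Ordinal} (ho : HomeoOrd X o) :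
    HomeoOrd (Inhom g c) o := by
  have : CompactSpace X := isCompact_iff_compactSpace.1 hcl.isCompact
  have hmem : ∀ x ∈ X, ∀ i : ℕ, rightHalf (sh (-(i : ℤ)) x) ∈ rightHalf '' X :=
    fun x hx i => mem_image_of_mem _ (hX x hx _)
  let Φ : X → Inhom g c := fun x =>
    ⟨⟨fun i => v (rightHalf (sh (-(i : ℤ)) x)), fun i => by
      rw [hg _ (hgood (hmem x x.2 (i + 1))), sg_rightHalf]⟩, fun i => by
      rw [hom]
      exact mem_image_of_mem v (hmem x x.2 i)⟩
  have hΦ : Continuous Φ := by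
    refine Continuous.subtype_mk (Continuous.subtype_mk (continuous_pi fun i => ?_) _) _
    exact hv.comp ((continuous_pull _).comp ((continuous_sh _).comp continuous_subtype_val))
  refine ho.of_bijective hΦ ⟨fun x y hxy => ?_, fun z => ?_⟩
  · apply Subtype.ext
    funext p
    have h1 : v (rightHalf (sh (-((p.natAbs : ℕ) : ℤ)) x)) =
        v (rightHalf (sh (-((p.natAbs : ℕ) : ℤ)) y)) :=
      congrFun (congrArg (fun z : Inhom g c => (z.1 : ℕ → unitI)) hxy) p.natAbs
    have h2 := hinj (hgood (hmem x x.2 _)) (hgood (hmem y y.2 _)) h1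
    have h3 := congrFun h2 (p + p.natAbs).toNat
    simp only [rightHalf, pull, sh] at h3
    rwa [show (((p + p.natAbs).toNat : ℕ) : ℤ) + -((p.natAbs : ℕ) : ℤ) = p by omega] at h3
  · have hz : ∀ i, ∃ w ∈ rightHalf '' X, v w = z.1.1 i := by
      intro i
      have := z.2 i
      rwa [hom] at this
    choose w hw hvw using hz
    have hsg : ∀ i, sg (w (i + 1)) = w i := by
      intro i
      refine hinj (sg_mem_good (hgood (hw _))) (hgood (hw i)) ?_
      rw [← hg _ (hgood (hw _)), hvw, hvw]
      exact z.1.2 i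
    have hadd : ∀ j i k, w (i + j) (k + j) = w i k := by
      intro j
      induction j with
      | zero => intro i k; rfl
      | succ j ih =>
        intro i k
        rw [← ih i k, ← hsg (i + j)]
        rfl
    -- the coordinates fit together to a two-sided sequence
    set x : ℤ → Bool := fun p => w p.natAbs (p + p.natAbs).toNat with hx
    have hxw : ∀ i : ℕ, rightHalf (sh (-(i : ℤ)) x) = w i := by
      intro i
      funext k
      simp only [rightHalf, pull, sh, hx]
      set p : ℤ := (k : ℤ) + -(i : ℤ) with hp
      rw [← hadd i p.natAbs, ← hadd p.natAbs i k, add_comm i]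
      congr 1
      omega
    have hxX : x ∈ X := mem_of_rightHalf hcl hX fun i => by
      rw [hxw]
      exact hw i
    refine ⟨⟨x, hxX⟩, ?_⟩
    apply Subtype.ext
    apply Subtype.ext
    funext i
    show v (rightHalf (sh (-(i : ℤ)) x)) = z.1.1 i
    rw [hxw, hvw]

end Assembly

theorem stmt7 (α β : Ordinal) (hα : 2 ≤ α) (hαβ : α < β)
    (hαc : α.card ≤ Cardinal.aleph0) (hβc : β.card ≤ Cardinal.aleph0)
    (n m : ℕ) (hn : 0 < n) (hm : 0 < m) :
    ∃ (g : unitI → unitI) (c : unitI),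
      Unimodal g c ∧ LEO g ∧
      HomeoOrd (omegaLimitSet g c) (Ordinal.omega0 ^ (α + 1) * n) ∧
      HomeoOrd (Inhom g c) (Ordinal.omega0 ^ (β + 1) * m) := by
  obtain ⟨C, hC, hcC⟩ := exists_closed_cb_eq α hαc
  obtain ⟨D, hD, hcD⟩ := exists_closed_cb_eq β hβc
  have hcl := isClosed_sysX hm hn hD hC
  have hX : ∀ x ∈ sysX m n D C, ∀ j, sh j x ∈ sysX m n D C := fun x hx j => sh_mem_sysX hx j
  have hne : (sysX m n D C).Nonempty :=
    ⟨bg m, Or.inr (Or.inl (Or.inl (Or.inl ⟨0, sh_zero _⟩)))⟩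
  obtain ⟨K, hK1, hK2, N₀, hK, hN₀⟩ := exists_kneading hcl hne hX
    (fun M x hx y hy => chain_sysX hm hn M hx hy) fun x hx => exists_true_sysX hm hn hx
  obtain ⟨g, c, v, N, huni, hleo, hmod, hinj, hg, horb⟩ := exists_model (N₀ := N₀) hK
  have hgood := rightHalf_mem_good hX hN₀
  have hv := continuous_of_modulus hmod
  have hom := omegaLimitSet_eq hcl hK1 hK2 hmod horb
  refine ⟨g, c, huni, hleo, ?_, homeoOrd_inhom hcl hX hgood hv hinj hg hom
    (homeoOrd_of_cb hcl hm (ncard_cb_sysX hm hn hD hC hα hαβ hcD hcC))⟩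
  have hclR : IsClosed (rightHalf '' sysX m n D C) := isClosed_pull_image _ hcl
  have : CompactSpace (rightHalf '' sysX m n D C : Set (ℕ → Bool)) :=
    isCompact_iff_compactSpace.1 hclR.isCompact
  have h1 : HomeoOrd (rightHalf '' sysX m n D C : Set (ℕ → Bool)) (Ordinal.omega0 ^ (α + 1) * n) :=
    homeoOrd_of_cb hclR hn (ncard_cb_pull_sysX hm hn hD hC hα hcC)
  rw [hom]
  exact h1.of_homeomorph (Continuous.homeoOfEquivCompactToT2
    (f := Equiv.Set.imageOfInjOn v _ (hinj.mono hgood))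
    ((hv.comp continuous_subtype_val).subtype_mk _))

end
end

section
/- Let α and β be countable ordinals and n, m positive integers. Suppose there is a continuous surjection p from the ordinal space ω^β·m + 1 (the set {ξ : ξ ≤ ω^β·m} with its order topology) onto the ordinal space ω^α·n + 1. Then α ≤ β. Moreover, if α = β then n ≤ m. -/
/-!
The proof is a Cantor–Bendixson argument with the derived sets made explicit. In an ordinal space
the `γ`-th derived set consists of the `ξ` with `ω ^ γ ∣ 1 + ξ`: for `γ = 0` this is every point,
and for `γ > 0` it says that `ξ` is a nonzero multiple of `ω ^ γ` (`dvd_one_add_iff`).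
Such a `ξ` is said below to have rank at least `γ`.

Two facts tie this divisibility condition to the topology. A point of rank at least `γ` is a limit
of points of rank at least `δ`, for each `δ < γ` (`exists_dvd_of_mem_nhds`); a point of rank less
than `γ` is isolated among the points of rank at least `δ`, for some `δ < γ`
(`exists_eventually_eq`).

From these, a continuous surjection `p` between such spaces maps the `γ`-th derived set of the
source onto a superset of that of the target (`exists_preimage_dvd`). By induction on `γ`: if the
fibre over `y` of rank at least `γ` had only points of smaller rank, compactness of the fibre would
give one `δ < γ` and a neighbourhood of the fibre in which every point of rank at least `δ` maps to
`y`; but `p` is closed, so this neighbourhood contains the fibres of points `y' ≠ y` of rank at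
least `δ` arbitrarily close to `y`, against the induction hypothesis.

For `α > 0` the `α`-th derived set of `ω ^ α * n + 1` is `{ω ^ α * k | 1 ≤ k ≤ n}`, which gives
the theorem; for `α = 0` both spaces are finite and it suffices to count points.
-/

open Set Filter

noncomputable section

open Ordinal Order Topology

theorem omega0_opow_ne_zero (γ : Ordinal) : ω ^ γ ≠ 0 :=
  (opow_pos γ omega0_pos).ne'

theorem dvd_one_add_iff {γ ξ : Ordinal} (hγ : γ ≠ 0) :
    ω ^ γ ∣ 1 + ξ ↔ ξ ≠ 0 ∧ ω ^ γ ∣ ξ := by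
  have hω : ω ≤ ω ^ γ := by
    simpa using opow_le_opow_right omega0_pos (Order.one_le_iff_ne_zero.2 hγ)
  constructor
  · intro h
    have h1 : ω ≤ 1 + ξ := hω.trans (le_of_dvd (by simp) h)
    have h2 : ω ≤ ξ := by
      by_contra! hlt
      exact absurd h1 (not_le.2 (isPrincipal_add_omega0 one_lt_omega0 hlt))
    rw [one_add_of_omega0_le h2] at h
    exact ⟨fun h0 => by simp [h0] at h2, h⟩
  · rintro ⟨h0, h⟩
    rwa [one_add_of_omega0_le (hω.trans (le_of_dvd h0 h))]

/-- A point of rank at least `γ` is a limit from below of points of rank at least `δ < γ`. -/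
theorem exists_dvd_of_mem_nhds {γ δ ξ : Ordinal} (h : ω ^ γ ∣ 1 + ξ) (hδ : δ < γ)
    {U : Set Ordinal} (hU : U ∈ 𝓝 ξ) : ∃ z ∈ U, z < ξ ∧ ω ^ δ ∣ 1 + z := by
  have hγ : γ ≠ 0 := (zero_le.trans_lt hδ).ne'
  obtain ⟨h0, c, hc⟩ := (dvd_one_add_iff hγ).1 h
  obtain ⟨a, ha, haU⟩ := exists_Ioc_subset_of_mem_nhds hU ⟨0, pos_iff_ne_zero.2 h0⟩
  have hδ0 := omega0_opow_ne_zero δ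
  -- `ξ = ω ^ δ * t` with `t` a limit, so the least multiple of `ω ^ δ` above `a` stays below `ξ`.
  set t := ω ^ (γ - δ) * c with ht
  have hξ : ξ = ω ^ δ * t := by
    rw [hc, ht, ← mul_assoc, ← opow_add, Ordinal.add_sub_cancel_of_le hδ.le]
  have hc0 : 0 < c := pos_iff_ne_zero.2 (by rintro rfl; simp [hc] at h0)
  have hlim : IsSuccLimit t := by
    refine isSuccLimit_mul_left (isSuccLimit_opow_left isSuccLimit_omega0 ?_) hc0
    intro h'
    exact absurd (Ordinal.sub_eq_zero_iff_le.1 h') (not_le.2 hδ)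
  have hat : a / ω ^ δ < t := by rwa [← lt_mul_iff_div_lt hδ0, ← hξ]
  have hlt : ω ^ δ * succ (a / ω ^ δ) < ξ := by
    rw [hξ]
    exact (mul_lt_mul_iff_right₀ (pos_iff_ne_zero.2 hδ0)).2 (hlim.succ_lt hat)
  have hgt := lt_mul_succ_div a hδ0
  refine ⟨_, haU ⟨hgt, hlt.le⟩, hlt, ?_⟩
  rcases eq_or_ne δ 0 with rfl | hd
  · simp
  · exact (dvd_one_add_iff hd).2 ⟨(zero_le.trans_lt hgt).ne', dvd_mul_right _ _⟩

/-- A nonmultiple `η` of `ω ^ γ` is isolated from below among the multiples of `ω ^ δ`, for a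
suitable `δ < γ`. -/
theorem exists_gap {γ η : Ordinal} (h : ¬ ω ^ γ ∣ η) :
    ∃ δ < γ, ∃ a < η, ∀ z, a < z → z ≤ η → ω ^ δ ∣ z → z = η := by
  set r := η % ω ^ γ with hr
  have hr0 : r ≠ 0 := fun h0 => h (dvd_of_mod_eq_zero h0)
  have hrlt : r < ω ^ γ := mod_lt _ (omega0_opow_ne_zero γ)
  set δ := log ω r with hδ
  have hδγ : δ < γ := (lt_opow_iff_log_lt one_lt_omega0 hr0).1 hrlt
  have hδ0 := omega0_opow_ne_zero δ
  have hpos : 0 < ω ^ δ := pos_iff_ne_zero.2 hδ0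
  refine ⟨δ, hδγ, ?_⟩
  by_cases hd : ω ^ δ ∣ η
  · obtain ⟨t, ht⟩ := hd
    -- A limit `t` would make `ω ^ (δ + 1)` divide `η`, hence the remainder `r < ω ^ (δ + 1)`.
    have hnot : ¬ ω ∣ t := by
      rintro ⟨s, hs⟩
      have h1 : ω ^ succ δ ∣ η := ⟨s, by rw [ht, hs, opow_succ, mul_assoc]⟩
      have h2 : ω ^ succ δ ∣ ω ^ γ * (η / ω ^ γ) :=
        (opow_dvd_opow ω (succ_le_of_lt hδγ)).trans (dvd_mul_right _ _)
      rw [← div_add_mod η (ω ^ γ), dvd_add_iff h2] at h1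
      exact absurd (le_of_dvd hr0 h1) (not_le.2 (lt_opow_succ_log_self one_lt_omega0 r))
    rcases zero_or_succ_or_isSuccLimit t with h0 | ⟨s, hs⟩ | hl
    · exact absurd (by simp [h0]) hnot
    · refine ⟨ω ^ δ * s, ?_, ?_⟩
      · rw [ht, ← hs]
        exact (mul_lt_mul_iff_right₀ hpos).2 (lt_succ s)
      · rintro z haz hzη ⟨u, rfl⟩
        rw [ht] at hzη ⊢
        have h1 : s < u := (mul_lt_mul_iff_right₀ hpos).1 haz
        have h2 : u ≤ t := (mul_le_mul_iff_right₀ hpos).1 hzη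
        rw [le_antisymm h2 (hs ▸ succ_le_of_lt h1)]
    · exact absurd (isSuccPrelimit_iff_omega0_dvd.1 hl.isSuccPrelimit) hnot
  · refine ⟨ω ^ δ * (η / ω ^ δ), lt_of_le_of_ne (mul_div_le _ _) fun he => hd ⟨_, he.symm⟩, ?_⟩
    rintro z haz hzη ⟨u, rfl⟩
    have h1 : η / ω ^ δ < u := (mul_lt_mul_iff_right₀ hpos).1 haz
    exact absurd ((mul_le_iff_le_div hδ0).1 hzη) (not_le.2 h1)

/-- A point of rank less than `γ` is isolated among the points of rank at least `δ`, for a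
suitable `δ < γ`. -/
theorem exists_eventually_eq {γ ξ : Ordinal} (h : ¬ ω ^ γ ∣ 1 + ξ) :
    ∃ δ < γ, ∀ᶠ z in 𝓝 ξ, ω ^ δ ∣ 1 + z → z = ξ := by
  obtain ⟨δ, hδ, a, ha, H⟩ := exists_gap h
  refine ⟨δ, hδ, ?_⟩
  have h1 : ∀ᶠ z in 𝓝 ξ, a < 1 + z :=
    (isNormal_add_right 1).continuous.continuousAt.eventually (lt_mem_nhds ha)
  filter_upwards [h1, gt_mem_nhds (lt_succ ξ)] with z hz1 hz2 hz
  exact add_left_cancel (H _ hz1 (add_le_add_right (lt_succ_iff.1 hz2) 1) hz)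

/-- The inclusion of an ordinal space in the ordinals. -/
def OrdSpace.val {o : Ordinal} (x : OrdSpace o) : Ordinal := Subtype.val (p := (· ∈ Set.Iic o)) x

theorem OrdSpace.val_le {o : Ordinal} (x : OrdSpace o) : x.val ≤ o := Subtype.property x

theorem OrdSpace.val_injective {o : Ordinal} :
    Function.Injective (OrdSpace.val : OrdSpace o → Ordinal) := Subtype.val_injective

theorem OrdSpace.isEmbedding_val {o : Ordinal} :
    IsEmbedding (OrdSpace.val : OrdSpace o → Ordinal) := by
  have h : (instTopologicalSpaceSubtype : TopologicalSpace (Set.Iic o)) =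
    Preorder.topology (Set.Iic o) := OrderTopology.topology_eq_generate_intervals
  refine ⟨⟨?_⟩, OrdSpace.val_injective⟩
  exact h.symm

theorem OrdSpace.compactSpace (o : Ordinal) : CompactSpace (OrdSpace o) := by
  rw [← isCompact_univ_iff, OrdSpace.isEmbedding_val.isCompact_iff]
  have : OrdSpace.val '' (Set.univ : Set (OrdSpace o)) = Set.Icc 0 o := by
    ext z
    constructor
    · rintro ⟨x, -, rfl⟩
      exact ⟨zero_le, x.val_le⟩
    · rintro ⟨-, hz⟩
      exact ⟨(⟨z, hz⟩ : Set.Iic o), trivial, rfl⟩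
  rw [this]
  exact isCompact_Icc

/-- A continuous surjection of ordinal spaces maps the `γ`-th derived set of the source onto a
superset of the `γ`-th derived set of the target. -/
theorem exists_preimage_dvd {a b : Ordinal} (p : OrdSpace b → OrdSpace a) (hp : Continuous p)
    (hps : Function.Surjective p) (γ : Ordinal) :
    ∀ y : OrdSpace a, ω ^ γ ∣ 1 + y.val → ∃ x, p x = y ∧ ω ^ γ ∣ 1 + x.val := by
  have := OrdSpace.compactSpace b
  induction γ using WellFoundedLT.induction with
  | ind γ ih =>
  intro y hy
  by_contra! hcon
  have hγ : 0 < γ := by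
    rw [pos_iff_ne_zero]
    rintro rfl
    obtain ⟨x, hx⟩ := hps y
    exact hcon x hx (by simp)
  have hK : IsCompact (p ⁻¹' {y}) := (isClosed_singleton.preimage hp).isCompact
  have key : ∃ δ < γ, ∃ U : Set (OrdSpace b), IsOpen U ∧ p ⁻¹' {y} ⊆ U ∧
      ∀ x ∈ U, ω ^ δ ∣ 1 + x.val → p x = y := by
    refine hK.induction_on (p := fun S => ∃ δ < γ, ∃ U : Set (OrdSpace b), IsOpen U ∧ S ⊆ U ∧
      ∀ x ∈ U, ω ^ δ ∣ 1 + x.val → p x = y) ?_ ?_ ?_ ?_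
    · exact ⟨0, hγ, ∅, isOpen_empty, subset_rfl, by simp⟩
    · rintro S T hST ⟨δ, hδ, U, hU, hTU, H⟩
      exact ⟨δ, hδ, U, hU, hST.trans hTU, H⟩
    · rintro S T ⟨δ, hδ, U, hU, hSU, H⟩ ⟨ε, hε, V, hV, hTV, H'⟩
      refine ⟨max δ ε, max_lt hδ hε, U ∪ V, hU.union hV, union_subset_union hSU hTV, ?_⟩
      rintro x (hx | hx) hd
      · exact H x hx ((opow_dvd_opow ω (le_max_left δ ε)).trans hd)
      · exact H' x hx ((opow_dvd_opow ω (le_max_right δ ε)).trans hd)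
    · intro x hx
      obtain ⟨δ, hδ, hev⟩ := exists_eventually_eq (hcon x hx)
      have hev' := OrdSpace.isEmbedding_val.continuous.continuousAt.eventually hev
      obtain ⟨U, hU, hUo, hxU⟩ := eventually_nhds_iff.1 hev'
      refine ⟨U, mem_nhdsWithin_of_mem_nhds (hUo.mem_nhds hxU), δ, hδ, U, hUo, subset_rfl, ?_⟩
      intro x' hx' hd
      rw [OrdSpace.val_injective (hU x' hx' hd)]
      exact hx
  obtain ⟨δ, hδ, U, hU, hKU, H⟩ := key
  have hV : (p '' Uᶜ)ᶜ ∈ 𝓝 y := by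
    refine ((hU.isClosed_compl.isCompact.image hp).isClosed.isOpen_compl).mem_nhds ?_
    rintro ⟨x, hxU, hx⟩
    exact hxU (hKU hx)
  rw [OrdSpace.isEmbedding_val.nhds_eq_comap, Filter.mem_comap] at hV
  obtain ⟨W, hW, hWV⟩ := hV
  obtain ⟨z, hzW, hzy, hz⟩ := exists_dvd_of_mem_nhds hy hδ hW
  obtain ⟨y', rfl⟩ : ∃ y' : OrdSpace a, y'.val = z :=
    ⟨(⟨z, hzy.le.trans y.val_le⟩ : Set.Iic a), rfl⟩
  obtain ⟨x, hx, hxd⟩ := ih δ hδ y' hz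
  have hxU : x ∈ U := by
    by_contra hxU
    exact hWV hzW ⟨x, hxU, hx⟩
  have : y' = y := hx.symm.trans (H x hxU hxd)
  exact hzy.ne (congrArg OrdSpace.val this)

universe u

theorem natCast_le_of_surjective {a b : Ordinal.{u}} {n m : ℕ} (ha : a = n) (hb : b = m)
    (p : OrdSpace b → OrdSpace a) (hps : Function.Surjective p) : n ≤ m := by
  subst ha hb
  have hcard : ∀ k : ℕ, Cardinal.mk (OrdSpace (k : Ordinal.{u})) = (k + 1 : ℕ) := by
    intro k
    have : Set.Iic (k : Ordinal.{u}) = Set.Iio ((k + 1 : ℕ) : Ordinal.{u}) := by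
      ext z
      rw [Set.mem_Iic, Set.mem_Iio, Nat.cast_succ, ← Order.succ_eq_add_one, lt_succ_iff]
    change Cardinal.mk (Set.Iic (k : Ordinal.{u})) = _
    rw [this, Cardinal.mk_Iio_ordinal]
    simp
  have h := Cardinal.mk_le_of_surjective hps
  rw [hcard, hcard, Nat.cast_le] at h
  omega

theorem stmt8 (α β : Ordinal)
    (hαc : α.card ≤ Cardinal.aleph0) (hβc : β.card ≤ Cardinal.aleph0)
    (n m : ℕ) (hn : 0 < n) (hm : 0 < m)
    (p : OrdSpace (Ordinal.omega0 ^ β * m) → OrdSpace (Ordinal.omega0 ^ α * n))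
    (hp : Continuous p) (hps : Function.Surjective p) :
    α ≤ β ∧ (α = β → n ≤ m) := by
  rcases eq_or_ne α 0 with rfl | hα
  · refine ⟨zero_le, ?_⟩
    rintro rfl
    exact natCast_le_of_surjective (by simp) (by simp) p hps
  have hpos : 0 < ω ^ α := opow_pos α omega0_pos
  have hpt : ∀ k : Fin n, ∃ x, (p x).val = ω ^ α * ((k + 1 : ℕ) : Ordinal) ∧
      x.val ≠ 0 ∧ ω ^ α ∣ x.val := by
    intro k
    have hk : ω ^ α * ((k + 1 : ℕ) : Ordinal) ≤ ω ^ α * n :=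
      mul_le_mul_right (Nat.cast_le.2 k.2) _
    obtain ⟨x, hx, hd⟩ := exists_preimage_dvd p hp hps α
      (⟨_, hk⟩ : Set.Iic (ω ^ α * (n : Ordinal))) ((dvd_one_add_iff hα).2
        ⟨mul_ne_zero hpos.ne' (Nat.cast_ne_zero.2 k.1.succ_ne_zero), dvd_mul_right _ _⟩)
    exact ⟨x, congrArg OrdSpace.val hx, (dvd_one_add_iff hα).1 hd⟩
  choose x hx hx0 hxd using hpt
  constructor
  · by_contra! hlt
    have h1 : ω ^ α ≤ ω ^ β * m :=
      (le_of_dvd (hx0 ⟨0, hn⟩) (hxd ⟨0, hn⟩)).trans (x ⟨0, hn⟩).val_le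
    have h2 : ω ^ β * m < ω ^ succ β := by
      rw [opow_succ]
      exact (mul_lt_mul_iff_right₀ (opow_pos β omega0_pos)).2 (natCast_lt_omega0 m)
    exact absurd (h1.trans_lt h2)
      (not_lt.2 (opow_le_opow_right omega0_pos (succ_le_of_lt hlt)))
  · rintro rfl
    have hj : ∀ k : Fin n, ∃ j : Fin m, (x k).val = ω ^ α * ((j + 1 : ℕ) : Ordinal) := by
      intro k
      obtain ⟨c, hc⟩ := hxd k
      have hcm : c ≤ m := (mul_le_mul_iff_right₀ hpos).1 (hc ▸ (x k).val_le)
      obtain ⟨j, rfl⟩ := lt_omega0.1 (hcm.trans_lt (natCast_lt_omega0 m))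
      have hj0 : j ≠ 0 := by
        rintro rfl
        exact hx0 k (by simpa using hc)
      have hjm : j ≤ m := Nat.cast_le.1 hcm
      refine ⟨⟨j - 1, by omega⟩, ?_⟩
      rw [hc, show j - 1 + 1 = j by omega]
    choose f hf using hj
    have hinj : Function.Injective f := by
      intro k l hkl
      have h1 : x k = x l := OrdSpace.val_injective (by rw [hf, hf, hkl])
      have h2 := hx k
      rw [h1, hx l] at h2
      have h3 := Nat.cast_injective ((mul_right_injective₀ hpos.ne') h2)
      exact Fin.ext (by omega)
    simpa using Fintype.card_le_of_injective f hinj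

end
end

section
/- Let f : [0,1] → [0,1] be a unimodal map with critical point c, and let α be a countable ordinal. If ω(c) contains a point of limit type α (that is, the α-th Cantor–Bendixson derivative of ω(c), taken in [0,1], contains a point outside its (α+1)-st derivative), then the α-th Cantor–Bendixson derivative of 𝓘, taken in lim←f, is nonempty, i.e. 𝓘 contains a point of limit type at least α. -/
/-!
The projection `x ↦ x 0` maps the compact set `Inhom f c` onto `omegaLimitSet f c`: by
compactness `f` maps the omega-limit set onto itself (`exists_preimage_mem_omegaLimitSet`), so
every point of it is the start of a backward orbit inside it (`exists_inhom_zero_eq`).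
A continuous map `g` from a compact space to a Hausdorff space lifts accumulation points: if
`B ⊆ g '' A`, then `dSet B ⊆ g '' dSet A` (`dSet_subset_image_dSet`), because points of `A` over
points of `B` that approach `y` without being `y` cluster at some point over `y`.
Transfinite induction, with compactness of the nested fibres at limit stages, gives
`cbDeriv B o ⊆ g '' cbDeriv A o` for closed `A` and every ordinal `o`
(`cbDeriv_subset_image_cbDeriv`).
-/

open Set Filter

noncomputable section

/-- The derived set of `A`: the set of accumulation points of `A` in the ambient space. -/
def dSet {X : Type*} [TopologicalSpace X] (A : Set X) : Set X :=
  {x | AccPt x (Filter.principal A)}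

/-- The iterated Cantor–Bendixson derivatives of `A` (within the ambient space `X`):
`D(0) = A`, `D(γ+1)` is the derived set of `D(γ)`, and `D(λ) = ⋂_{γ<λ} D(γ)` at limits. -/
def cbDeriv {X : Type*} [TopologicalSpace X] (A : Set X) (o : Ordinal) : Set X :=
  Ordinal.limitRecOn o A (fun _ ih => dSet ih)
    (fun o _ ih => ⋂ (γ : Ordinal) (h : γ < o), ih γ h)

section CantorBendixson

variable {X Y : Type*} [TopologicalSpace X] [TopologicalSpace Y]

theorem cbDeriv_zero (A : Set X) : cbDeriv A 0 = A := by
  simp [cbDeriv]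

theorem cbDeriv_add_one (A : Set X) (o : Ordinal) :
    cbDeriv A (o + 1) = dSet (cbDeriv A o) := by
  simp [cbDeriv]

theorem cbDeriv_limit (A : Set X) {o : Ordinal} (ho : Order.IsSuccLimit o) :
    cbDeriv A o = ⋂ (γ : Ordinal) (_ : γ < o), cbDeriv A γ := by
  simp only [cbDeriv]
  rw [Ordinal.limitRecOn_limit (h := ho)]

/-- The derivatives of a closed set are closed and decreasing; closedness is what makes each
derivative contain the next. -/
theorem cbDeriv_closed_antitone [T1Space X] {A : Set X} (hA : IsClosed A) (o : Ordinal) :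
    IsClosed (cbDeriv A o) ∧ ∀ γ ≤ o, cbDeriv A o ⊆ cbDeriv A γ := by
  induction o using Ordinal.limitRecOn with
  | zero =>
    refine ⟨by rwa [cbDeriv_zero], fun γ hγ => ?_⟩
    rw [nonpos_iff_eq_zero.mp hγ]
  | add_one o ih =>
    have hsub : dSet (cbDeriv A o) ⊆ cbDeriv A o :=
      fun x hx => ih.1.closure_eq ▸ mem_closure_iff_clusterPt.mpr hx.clusterPt
    rw [cbDeriv_add_one]
    refine ⟨isClosed_derivedSet _, fun γ hγ => ?_⟩
    rcases hγ.eq_or_lt with rfl | h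
    · rw [cbDeriv_add_one]
    · exact hsub.trans (ih.2 γ (Order.lt_add_one_iff.mp h))
  | limit o ho ih =>
    have h := cbDeriv_limit A ho
    refine ⟨?_, fun γ hγ => ?_⟩
    · rw [h]
      exact isClosed_iInter fun γ => isClosed_iInter fun hγ => (ih γ hγ).1
    · rcases hγ.eq_or_lt with rfl | hlt
      · rfl
      · rw [h]
        exact iInter₂_subset γ hlt

/-- A continuous map out of a compact space lifts accumulation points. -/
theorem dSet_subset_image_dSet [CompactSpace X] [T2Space Y] {g : X → Y} (hg : Continuous g)
    {A : Set X} {B : Set Y} (hBA : B ⊆ g '' A) : dSet B ⊆ g '' dSet A := by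
  intro y hy
  have hy' : NeBot (nhdsWithin y {y}ᶜ ⊓ 𝓟 B) := hy
  -- The point over `y` is a cluster point, inside `A`, of the pulled-back filter of points
  -- tending to `y` within `B \ {y}`.
  set G : Filter Y := nhdsWithin y {y}ᶜ ⊓ 𝓟 B
  have hne : NeBot (comap g G ⊓ 𝓟 A) := by
    refine comap_inf_principal_neBot_of_image_mem hy' ?_
    exact mem_of_superset (mem_inf_of_right (mem_principal_self B)) hBA
  obtain ⟨x, hx⟩ := exists_clusterPt_of_compactSpace (comap g G ⊓ 𝓟 A)
  have hGy : G ≤ nhds y := inf_le_left.trans nhdsWithin_le_nhds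
  have hgx : g x = y := by
    have h1 : ClusterPt (g x) (nhds y) :=
      (hx.map hg.continuousAt (tendsto_comap.mono_left inf_le_left)).mono hGy
    exact eq_of_nhds_neBot h1
  refine ⟨x, ?_, hgx⟩
  have hcompl : comap g G ≤ 𝓟 {x}ᶜ := by
    have h2 : G ≤ 𝓟 {y}ᶜ := inf_le_left.trans inf_le_right
    refine (comap_mono h2).trans ?_
    rw [comap_principal, principal_mono]
    rintro z hz rfl
    exact hz hgx
  have : ClusterPt x (𝓟 {x}ᶜ ⊓ 𝓟 A) := hx.mono (inf_le_inf_right _ hcompl)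
  change NeBot (nhdsWithin x {x}ᶜ ⊓ 𝓟 A)
  rw [nhdsWithin, inf_assoc]
  exact this

theorem cbDeriv_subset_image_cbDeriv [CompactSpace X] [T1Space X] [T2Space Y] {g : X → Y}
    (hg : Continuous g) {A : Set X} {B : Set Y} (hA : IsClosed A) (hBA : B ⊆ g '' A)
    (o : Ordinal) : cbDeriv B o ⊆ g '' cbDeriv A o := by
  induction o using Ordinal.limitRecOn with
  | zero => simpa only [cbDeriv_zero] using hBA
  | add_one o ih =>
    rw [cbDeriv_add_one, cbDeriv_add_one]
    exact dSet_subset_image_dSet hg ih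
  | limit o ho ih =>
    intro y hy
    rw [cbDeriv_limit B ho, mem_iInter₂] at hy
    have hne : Nonempty (Iio o) := ⟨⟨0, ho.bot_lt⟩⟩
    have hcl (γ : Iio o) : IsClosed (cbDeriv A γ.1 ∩ g ⁻¹' {y}) :=
      (cbDeriv_closed_antitone hA γ.1).1.inter (isClosed_singleton.preimage hg)
    obtain ⟨x, hx⟩ := IsCompact.nonempty_iInter_of_directed_nonempty_isCompact_isClosed
      (fun γ : Iio o => cbDeriv A γ.1 ∩ g ⁻¹' {y})
      (directed_of_isDirected_le fun γ δ h =>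
        inter_subset_inter_left _ ((cbDeriv_closed_antitone hA δ.1).2 γ.1 h))
      (fun γ => by
        obtain ⟨x, hx, hxy⟩ := ih γ.1 γ.2 (hy γ.1 γ.2)
        exact ⟨x, hx, hxy⟩)
      (fun γ => (hcl γ).isCompact) hcl
    rw [mem_iInter] at hx
    refine ⟨x, ?_, (hx hne.some).2⟩
    rw [cbDeriv_limit A ho, mem_iInter₂]
    exact fun γ hγ => (hx ⟨γ, hγ⟩).1

end CantorBendixson

section InverseLimit

variable {f : unitI → unitI} {c : unitI}

theorem isClosed_invLim (hf : Continuous f) : IsClosed (InvLim f) := by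
  have : InvLim f = ⋂ i : ℕ, {x | f (x (i + 1)) = x i} := by
    ext x
    simp [InvLim]
  rw [this]
  exact isClosed_iInter fun i =>
    isClosed_eq (hf.comp (continuous_apply (i + 1))) (continuous_apply i)

theorem isClosed_inhom (f : unitI → unitI) (c : unitI) : IsClosed (Inhom f c) := by
  have : Inhom f c = ⋂ n : ℕ, (fun x : InvLim f => (x : ℕ → unitI) n) ⁻¹' omegaLimitSet f c := by
    ext x
    simp [Inhom]
  rw [this]
  have hω : IsClosed (omegaLimitSet f c) := isClosed_iInter fun _ => isClosed_closure
  exact isClosed_iInter fun n =>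
    hω.preimage ((continuous_apply n).comp continuous_subtype_val)

theorem exists_preimage_mem_omegaLimitSet (hf : Continuous f) {y : unitI}
    (hy : y ∈ omegaLimitSet f c) : ∃ x ∈ omegaLimitSet f c, f x = y := by
  let T : ℕ → Set unitI := fun n => closure {y : unitI | ∃ m : ℕ, n ≤ m ∧ f^[m] c = y}
  have hcl (n : ℕ) : IsClosed (T n ∩ f ⁻¹' {y}) :=
    isClosed_closure.inter (isClosed_singleton.preimage hf)
  obtain ⟨x, hx⟩ := IsCompact.nonempty_iInter_of_directed_nonempty_isCompact_isClosed
    (fun n => T n ∩ f ⁻¹' {y})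
    (directed_of_isDirected_le fun m n h => inter_subset_inter_left _ (closure_mono (by
      rintro z ⟨k, hk, rfl⟩
      exact ⟨k, h.trans hk, rfl⟩)))
    (fun n => by
      -- `f '' T n` is closed and contains the orbit from time `n + 1` on.
      have hsub : T (n + 1) ⊆ f '' T n := by
        refine closure_minimal ?_ (isClosed_closure.isCompact.image hf).isClosed
        rintro z ⟨m, hm, rfl⟩
        obtain ⟨k, rfl⟩ : ∃ k, m = k + 1 := ⟨m - 1, by omega⟩
        exact ⟨f^[k] c, subset_closure ⟨k, by omega, rfl⟩,
          (Function.iterate_succ_apply' f k c).symm⟩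
      obtain ⟨x, hx, hxy⟩ := hsub (mem_iInter.mp hy (n + 1))
      exact ⟨x, hx, hxy⟩)
    (fun n => (hcl n).isCompact) hcl
  rw [mem_iInter] at hx
  exact ⟨x, mem_iInter.mpr fun n => (hx n).1, (hx 0).2⟩

theorem exists_inhom_zero_eq (hf : Continuous f) {y : unitI} (hy : y ∈ omegaLimitSet f c) :
    y ∈ (fun x : InvLim f => (x : ℕ → unitI) 0) '' Inhom f c := by
  choose p hpmem hp using fun z : omegaLimitSet f c =>
    exists_preimage_mem_omegaLimitSet hf z.2
  let s : ℕ → omegaLimitSet f c := fun n => Nat.rec ⟨y, hy⟩ (fun _ z => ⟨p z, hpmem z⟩) n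
  let x : InvLim f := ⟨fun n => (s n).1, fun i => hp (s i)⟩
  exact ⟨x, fun n => (s n).2, rfl⟩

end InverseLimit

theorem stmt10 (f : unitI → unitI) (c : unitI) (hf : Unimodal f c)
    (α : Ordinal) (hαc : α.card ≤ Cardinal.aleph0)
    (hx : ∃ x : unitI, x ∈ cbDeriv (omegaLimitSet f c) α ∧
          x ∉ cbDeriv (omegaLimitSet f c) (α + 1)) :
    (cbDeriv (Inhom f c) α).Nonempty := by
  obtain ⟨y, hy, -⟩ := hx
  have : CompactSpace (InvLim f) := isCompact_iff_compactSpace.mp (isClosed_invLim hf.1).isCompact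
  obtain ⟨x, hx, -⟩ := cbDeriv_subset_image_cbDeriv
    (g := fun x : InvLim f => (x : ℕ → unitI) 0)
    ((continuous_apply 0).comp continuous_subtype_val)
    (isClosed_inhom f c) (fun y hy => exists_inhom_zero_eq hf.1 hy) α hy
  exact ⟨x, hx⟩

end
end
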